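/- arXiv:1112.5015 — 5 statements merged into one kernel-verified Lean document; each statement's English description precedes it below -/
import Mathlib

section
/- Let K be a field of characteristic 0 and let A be a Cohen-Macaulay standard graded K-algebra with h-polynomial h_A(t). If r ≥ (deg h_A(t) + 1)/2, then the h-polynomial h_{A^⟨r⟩}(t) of the r-th Veronese subalgebra A^⟨r⟩ is the f-polynomial of a flag simplicial complex. -/
namespace VerFlag
open Finset

/-- transfer of a clique complex to `Fin n` -/
lemma transfer {α : Type*} [DecidableEq α] (V : Finset α) (R : α → α → Prop) :
    ∃ (n : ℕ) (Δ : Finset (Finset (Fin n))),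
      ∅ ∈ Δ ∧
      (∀ F ∈ Δ, ∀ G ⊆ F, G ∈ Δ) ∧
      (∀ F : Finset (Fin n), F ∉ Δ → (∀ G, G ⊂ F → G ∈ Δ) → F.card ≤ 2) ∧
      (∀ i : ℕ, ((Δ.filter fun F => F.card = i).card) =
        Set.ncard {F : Finset α | F ⊆ V ∧ F.card = i ∧
          ∀ u ∈ F, ∀ v ∈ F, u ≠ v → R u v ∨ R v u}) := by
  classical
  let e := V.equivFin
  let g : Fin V.card ↪ α := ⟨fun x => (e.symm x : α), fun x y h => by
    simpa using h⟩
  refine ⟨V.card, Finset.univ.filter fun F : Finset (Fin V.card) =>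
    ∀ u ∈ F, ∀ v ∈ F, u ≠ v → R (g u) (g v) ∨ R (g v) (g u), by simp, ?_, ?_, ?_⟩
  · intro F hF G hG
    simp only [mem_filter, mem_univ, true_and] at hF ⊢
    exact fun u hu v hv => hF u (hG hu) v (hG hv)
  · intro F hF hG
    simp only [mem_filter, mem_univ, true_and] at hF hG
    push Not at hF
    obtain ⟨u, hu, v, hv, huv, h1, h2⟩ := hF
    by_contra hc
    have hss : ({u, v} : Finset _) ⊂ F := by
      refine (Finset.ssubset_iff_subset_ne).2 ⟨?_, ?_⟩
      · intro x; simp; rintro (rfl | rfl) <;> assumption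
      · intro h
        have := card_le_two (a := u) (b := v)
        rw [h] at this
        exact hc this
    rcases hG _ hss u (by simp) v (by simp) huv with h | h
    · exact h1 h
    · exact h2 h
  · intro i
    rw [← Set.ncard_coe_finset]
    rw [← Set.ncard_image_of_injective _ (Finset.map_injective g)]
    congr 1
    ext F
    simp only [Set.mem_image, Set.mem_ofPred_eq, coe_filter, mem_filter, mem_univ, true_and]
    constructor
    · rintro ⟨F, ⟨h1, h2⟩, rfl⟩
      refine ⟨?_, by simpa using h2, ?_⟩
      · intro x; simp only [mem_map]; rintro ⟨y, -, rfl⟩; exact (e.symm y).2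
      · simp only [mem_map]
        rintro _ ⟨u, hu, rfl⟩ _ ⟨v, hv, rfl⟩ huv
        exact h1 u hu v hv (fun h => huv (h ▸ rfl))
    · rintro ⟨h1, h2, h3⟩
      have hF : (Finset.univ.filter fun x => g x ∈ F).map g = F := by
        ext x
        simp only [mem_map, mem_filter, mem_univ, true_and]
        constructor
        · rintro ⟨a, h, rfl⟩; exact h
        · intro h
          have hx : g (e ⟨x, h1 h⟩) = x := by
            change ((e.symm (e ⟨x, h1 h⟩) : V) : α) = x
            rw [Equiv.symm_apply_apply]
          exact ⟨e ⟨x, h1 h⟩, by rw [hx]; exact h, hx⟩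
      refine ⟨Finset.univ.filter fun x => g x ∈ F, ⟨?_, ?_⟩, hF⟩
      · intro u hu v hv huv
        simp only [mem_filter, mem_univ, true_and] at hu hv
        exact h3 _ hu _ hv (fun h => huv (g.injective h))
      · rw [← card_map g, hF, h2]

variable (d r : ℕ) (H : ℕ → ℕ)

abbrev VT (d : ℕ) := (Fin (d+1) → ℕ) × ℕ

def IsVert (u : VT d) : Prop :=
  u.1 (Fin.last d) = r ∧
  (∀ l : Fin d, u.1 l.castSucc ≤ u.1 l.succ ∧ u.1 l.succ < u.1 l.castSucc + r) ∧
  u.2 < H (u.1 0)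

def Prec (u v : VT d) : Prop :=
  (∀ x, v.1 x = 0 ∨ u.1 x = r) ∧
  (∀ l : Fin d, u.1 l.succ + v.1 l.succ < u.1 l.castSucc + v.1 l.castSucc + r) ∧
  v.1 0 < r ∧ (u.1 0 = r → u.2 + H r * v.2 < H (r + v.1 0))

def P (j : ℕ) : Finset (ℕ × ℕ) :=
  if j < r then (range (H j)).image (fun c => (0, c)) else
    ((range (H r)) ×ˢ range (H (j - r))).filter (fun c => c.1 + H r * c.2 < H j)

lemma mem_P_lt {j : ℕ} (h : j < r) (c : ℕ × ℕ) : c ∈ P r H j ↔ c.1 = 0 ∧ c.2 < H j := by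
  unfold P
  rw [if_pos h]
  rcases c with ⟨a, b⟩
  simp only [mem_image, mem_range, Prod.mk.injEq]
  constructor
  · rintro ⟨x, hx, rfl, rfl⟩; exact ⟨rfl, hx⟩
  · rintro ⟨rfl, hx⟩; exact ⟨b, hx, rfl, rfl⟩

lemma mem_P_ge {j : ℕ} (h : ¬ j < r) (c : ℕ × ℕ) :
    c ∈ P r H j ↔ (c.1 < H r ∧ c.2 < H (j - r)) ∧ c.1 + H r * c.2 < H j := by
  unfold P
  rw [if_neg h]
  simp only [mem_filter, mem_product, mem_range]

lemma card_P (H0 : H 0 = 1) (Hbig : ∀ j, 2 * r ≤ j → H j = 0)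
    (hmul : ∀ k, 1 ≤ k → k < r → H (r + k) ≤ H r * H k) (j : ℕ) : (P r H j).card = H j := by
  unfold P
  split_ifs with h
  · rw [card_image_of_injective _ (fun a b h => by simpa using h)]; simp
  · have hle : H j ≤ H r * H (j - r) := by
      by_cases h2 : 2 * r ≤ j
      · simp [Hbig j h2]
      · by_cases h3 : j = r
        · subst h3; simp [H0]
        · have := hmul (j - r) (by omega) (by omega)
          rwa [show r + (j - r) = j by omega] at this
    conv_rhs => rw [← card_range (H j)]
    symm
    refine Finset.card_nbij' (fun n => (n % H r, n / H r)) (fun c => c.1 + H r * c.2) ?_ ?_ ?_ ?_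
    · intro n hn
      simp only [coe_range, Set.mem_Iio] at hn
      have hpos : 0 < H r := by
        rcases Nat.eq_zero_or_pos (H r) with h0 | h0
        · rw [h0] at hle; omega
        · exact h0
      simp only [coe_filter, mem_product, mem_range, Set.mem_ofPred_eq]
      refine ⟨⟨Nat.mod_lt _ hpos, ?_⟩, ?_⟩
      · rw [Nat.div_lt_iff_lt_mul hpos]; rw [mul_comm]; omega
      · rw [Nat.mod_add_div]; exact hn
    · intro c hc
      simp only [coe_filter, mem_product, mem_range, Set.mem_ofPred_eq] at hc
      simpa using hc.2
    · intro n hn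
      exact Nat.mod_add_div _ _
    · rintro ⟨a, b⟩ hc
      simp only [coe_filter, mem_product, mem_range, Set.mem_ofPred_eq] at hc
      have hpos : 0 < H r := by omega
      simp only [Prod.mk.injEq]
      constructor
      · rw [Nat.add_mul_mod_self_left, Nat.mod_eq_of_lt hc.1.1]
      · rw [Nat.add_mul_div_left _ _ hpos, Nat.div_eq_of_lt hc.1.1, zero_add]

variable {d r H}

lemma mono_p {p : Fin (d+1) → ℕ} (h : ∀ l : Fin d, p l.castSucc ≤ p l.succ) : Monotone p :=
  Fin.monotone_iff_le_succ.2 h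

lemma prec_ne (hr : 1 ≤ r) {u v : VT d} (hu : IsVert d r H u) (huv : Prec d r H u v) :
    u.1 ≠ v.1 := by
  intro h
  obtain ⟨h1, h2, h3, -⟩ := huv
  obtain ⟨g1, g2, -⟩ := hu
  rw [← h] at h1 h3
  have : ∀ x, u.1 x = 0 := by
    intro x
    induction x using Fin.induction with
    | zero => rcases h1 0 with h | h <;> omega
    | succ l ih =>
      have := (g2 l).2
      rcases h1 l.succ with h | h <;> omega
  have := this (Fin.last d)
  omega

lemma prec_asymm (hr : 1 ≤ r) {u v : VT d} (hu : IsVert d r H u) (huv : Prec d r H u v)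
    (hvu : Prec d r H v u) : False := by
  apply prec_ne hr hu huv
  funext x
  have h1 := huv.1 x
  have h2 := hvu.1 x
  omega

def Clique (d r : ℕ) (H : ℕ → ℕ) (F : Finset (VT d)) : Prop :=
  (∀ u ∈ F, IsVert d r H u) ∧ ∀ u ∈ F, ∀ v ∈ F, u ≠ v → Prec d r H u v ∨ Prec d r H v u

/-- the block formula -/
lemma clique_block (hr : 1 ≤ r) {F : Finset (VT d)} (hF : Clique d r H F) {v : VT d}
    (hv : v ∈ F) : ∃ k < F.card, ∀ x, v.1 x = min (∑ u ∈ F, u.1 x - k * r) r := by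
  classical
  have hle : ∀ u ∈ F, ∀ x, u.1 x ≤ r := by
    intro u hu x
    rw [← (hF.1 u hu).1]
    exact mono_p (fun l => ((hF.1 u hu).2.1 l).1) (Fin.le_last x)
  set B := F.filter (fun u => Prec d r H u v) with hB
  set C := (F.filter (fun u => ¬ Prec d r H u v)).erase v with hC
  have hnv : ¬ Prec d r H v v := fun h => prec_ne hr (hF.1 v hv) h rfl
  have hvmem : v ∈ F.filter (fun u => ¬ Prec d r H u v) := by simp [hv, hnv]
  have hCp : ∀ u ∈ C, Prec d r H v u := by
    intro u hu
    simp only [hC, mem_erase, mem_filter] at hu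
    rcases hF.2 u hu.2.1 v hv hu.1 with h | h
    · exact absurd h hu.2.2
    · exact h
  refine ⟨B.card, card_lt_card ((Finset.filter_ssubset).2 ⟨v, hv, hnv⟩), fun x => ?_⟩
  have hsum : ∑ u ∈ F, u.1 x = ∑ u ∈ B, u.1 x + (v.1 x + ∑ u ∈ C, u.1 x) := by
    rw [← sum_filter_add_sum_filter_not F (fun u => Prec d r H u v),
      ← add_sum_erase _ _ hvmem]
  have hBle : ∑ u ∈ B, u.1 x ≤ B.card * r := by
    rw [← smul_eq_mul]
    exact sum_le_card_nsmul _ _ _ (fun u hu => hle u (mem_filter.1 hu).1 x)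
  have hvr := hle v hv x
  have hC0 : v.1 x < r → ∑ u ∈ C, u.1 x = 0 := by
    intro h
    apply sum_eq_zero
    intro u hu
    rcases (hCp u hu).1 x with h | h <;> omega
  have hB1 : 0 < v.1 x → ∑ u ∈ B, u.1 x = B.card * r := by
    intro h
    rw [← smul_eq_mul]
    apply sum_eq_card_nsmul
    intro u hu
    rcases (mem_filter.1 hu).2.1 x with h | h <;> omega
  rw [hsum]
  by_cases a : v.1 x < r
  · rw [hC0 a]
    by_cases b : 0 < v.1 x
    · rw [hB1 b]; omega
    · omega
  · rw [hB1 (by omega)]; omega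

lemma sum_card_le_one {α : Type*} {F : Finset α} (h : ∀ u ∈ F, ∀ v ∈ F, u = v) :
    F = ∅ ∨ ∃ a, F = {a} := by
  rcases F.eq_empty_or_nonempty with h0 | ⟨a, ha⟩
  · exact Or.inl h0
  · exact Or.inr ⟨a, eq_singleton_iff_unique_mem.2 ⟨ha, fun w hw => h _ hw _ ha⟩⟩

lemma clique_step (hr : 1 ≤ r) {F : Finset (VT d)} (hF : Clique d r H F) (l : Fin d) :
    ∑ u ∈ F, u.1 l.castSucc ≤ ∑ u ∈ F, u.1 l.succ ∧
    ∑ u ∈ F, u.1 l.succ < ∑ u ∈ F, u.1 l.castSucc + r := by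
  classical
  refine ⟨sum_le_sum fun u hu => ((hF.1 u hu).2.1 l).1, ?_⟩
  set T := F.filter (fun u => u.1 l.castSucc < u.1 l.succ) with hT
  have e1 : ∑ u ∈ F.filter (fun u => ¬ u.1 l.castSucc < u.1 l.succ), u.1 l.succ =
     ∑ u ∈ F.filter (fun u => ¬ u.1 l.castSucc < u.1 l.succ), u.1 l.castSucc := by
    apply sum_congr rfl
    intro u hu
    have h1 := mem_filter.1 hu
    have h2 := ((hF.1 u h1.1).2.1 l).1
    omega
  rw [← sum_filter_add_sum_filter_not F (fun u => u.1 l.castSucc < u.1 l.succ), e1,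
   ← sum_filter_add_sum_filter_not F (fun u => u.1 l.castSucc < u.1 l.succ) (fun u => u.1 l.castSucc)]
  suffices h : ∑ u ∈ T, u.1 l.succ < ∑ u ∈ T, u.1 l.castSucc + r by
    rw [hT] at h; omega
  have hpath : ∀ u ∈ T, ∀ v ∈ T, ∀ w ∈ T, Prec d r H u v → Prec d r H v w → False := by
    intro u hu v hv w hw h1 h2
    have a := h1.1 l.castSucc
    have b := h2.1 l.succ
    have hu' := mem_filter.1 hu
    have hv' := mem_filter.1 hv
    have hw' := mem_filter.1 hw
    have c := ((hF.1 v hv'.1).2.1 l).2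
    have c' := mono_p (fun l => ((hF.1 u hu'.1).2.1 l).1) (Fin.le_last l.succ)
    rw [(hF.1 u hu'.1).1] at c'
    omega
  have hT2 : T.card ≤ 2 := by
    by_contra hc
    push Not at hc
    obtain ⟨a, ha, b, hb, c, hc, hab, hac, hbc⟩ := Finset.two_lt_card.1 hc
    have h1 := hF.2 a (mem_filter.1 ha).1 b (mem_filter.1 hb).1 hab
    have h2 := hF.2 a (mem_filter.1 ha).1 c (mem_filter.1 hc).1 hac
    have h3 := hF.2 b (mem_filter.1 hb).1 c (mem_filter.1 hc).1 hbc
    rcases h1 with h1 | h1 <;> rcases h2 with h2 | h2 <;> rcases h3 with h3 | h3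
    · exact hpath _ ha _ hb _ hc h1 h3
    · exact hpath _ ha _ hc _ hb h2 h3
    · exact hpath _ ha _ hb _ hc h1 h3
    · exact hpath _ hc _ ha _ hb h2 h1
    · exact hpath _ hb _ ha _ hc h1 h2
    · exact hpath _ hc _ hb _ ha h3 h1
    · exact hpath _ hb _ hc _ ha h3 h2
    · exact hpath _ hc _ hb _ ha h3 h1
  interval_cases hTc : T.card
  · rw [card_eq_zero] at hTc; rw [hTc, sum_empty, sum_empty]; omega
  · obtain ⟨a, ha⟩ := card_eq_one.1 hTc
    have : a ∈ T := by simp [ha]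
    rw [ha]; simpa using ((hF.1 a (mem_filter.1 this).1).2.1 l).2
  · obtain ⟨a, b, hab, hab'⟩ := card_eq_two.1 hTc
    have ha : a ∈ T := by simp [hab']
    have hb : b ∈ T := by simp [hab']
    rw [hab', sum_pair hab, sum_pair hab]
    rcases hF.2 a (mem_filter.1 ha).1 b (mem_filter.1 hb).1 hab with h | h
    · exact h.2.1 l
    · have := h.2.1 l; omega

def C1 (r : ℕ) (F : Finset (VT d)) : ℕ := ∑ u ∈ F.filter (fun u => u.1 0 = r), u.2
def C2 (r : ℕ) (F : Finset (VT d)) : ℕ := ∑ u ∈ F.filter (fun u => 0 < u.1 0 ∧ u.1 0 < r), u.2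

lemma vert_le {u : VT d} (hu : IsVert d r H u) (x) : u.1 x ≤ r := by
  rw [← hu.1]
  exact mono_p (fun l => (hu.2.1 l).1) (Fin.le_last x)

lemma F1_uniq {F : Finset (VT d)} (hF : Clique d r H F) :
    ∀ u ∈ F.filter (fun u => u.1 0 = r), ∀ v ∈ F.filter (fun u => u.1 0 = r), u = v := by
  intro u hu v hv
  rw [mem_filter] at hu hv
  by_contra h
  rcases hF.2 u hu.1 v hv.1 h with h | h
  · have := h.2.2.1; omega
  · have := h.2.2.1; omega

lemma F2_uniq {F : Finset (VT d)} (hF : Clique d r H F) :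
    ∀ u ∈ F.filter (fun u => 0 < u.1 0 ∧ u.1 0 < r),
    ∀ v ∈ F.filter (fun u => 0 < u.1 0 ∧ u.1 0 < r), u = v := by
  intro u hu v hv
  rw [mem_filter] at hu hv
  by_contra h
  rcases hF.2 u hu.1 v hv.1 h with h | h
  · have := h.1 0; omega
  · have := h.1 0; omega

lemma clique_label (hr : 1 ≤ r) (H0 : H 0 = 1) {F : Finset (VT d)} (hF : Clique d r H F) :
    (C1 r F, C2 r F) ∈ P r H (∑ u ∈ F, u.1 0) := by
  classical
  have hs : ∑ u ∈ F, u.1 0 = ∑ u ∈ F.filter (fun u => u.1 0 = r), u.1 0 +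
      ∑ u ∈ F.filter (fun u => 0 < u.1 0 ∧ u.1 0 < r), u.1 0 := by
    rw [sum_filter, sum_filter, ← sum_add_distrib]
    apply sum_congr rfl
    intro u hu
    have := vert_le (hF.1 u hu) 0
    split_ifs <;> omega
  rw [hs]
  unfold C1 C2
  have m1 : ∀ a ∈ F.filter (fun u => u.1 0 = r), a ∈ F ∧ a.1 0 = r :=
    fun a ha => mem_filter.1 ha
  have m2 : ∀ a ∈ F.filter (fun u => 0 < u.1 0 ∧ u.1 0 < r), a ∈ F ∧ 0 < a.1 0 ∧ a.1 0 < r :=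
    fun a ha => mem_filter.1 ha
  rcases sum_card_le_one (F1_uniq hF) with h1 | ⟨a, h1⟩ <;>
  rcases sum_card_le_one (F2_uniq hF) with h2 | ⟨b, h2⟩ <;>
  rw [h1] at m1 ⊢ <;> rw [h2] at m2 ⊢ <;> simp only [sum_empty, sum_singleton]
  · rw [mem_P_lt r H (by omega)]; simp [H0]
  · have m2 := m2 b (by simp)
    rw [mem_P_lt r H (by omega)]; 
    simpa using (hF.1 b m2.1).2.2
  · have m1 := m1 a (by simp)
    have := (hF.1 a m1.1).2.2
    rw [mem_P_ge r H (by omega)]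
    simp only [m1.2] at this ⊢
    simp [H0, this]
  · have m1 := m1 a (by simp)
    have m2 := m2 b (by simp)
    rw [mem_P_ge r H (by omega)]
    have ha := (hF.1 a m1.1).2.2
    have hb := (hF.1 b m2.1).2.2
    have hab : a ≠ b := by rintro rfl; omega
    have := (hF.2 a m1.1 b m2.1 hab).resolve_right (fun h => by have := h.2.2.1; omega)
    have := this.2.2.2 m1.2
    rw [m1.2] at ha ⊢
    simp [ha, hb, this]

lemma clique_inj_sub (hr : 1 ≤ r) (H0 : H 0 = 1) {F G : Finset (VT d)} (hF : Clique d r H F)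
    (hG : Clique d r H G) (hc : F.card = G.card) (hS : ∀ x, ∑ u ∈ F, u.1 x = ∑ u ∈ G, u.1 x)
    (h1 : C1 r F = C1 r G) (h2 : C2 r F = C2 r G) : F ⊆ G := by
  classical
  let bl : ℕ → Fin (d+1) → ℕ := fun k x => min (∑ u ∈ G, u.1 x - k * r) r
  have key : ∀ F : Finset (VT d), Clique d r H F → F.card = G.card →
      (∀ x, ∑ u ∈ F, u.1 x = ∑ u ∈ G, u.1 x) → F.image Prod.fst = (range G.card).image bl := by
    intro F hF hc hS
    apply eq_of_subset_of_card_le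
    · intro p hp
      obtain ⟨v, hv, rfl⟩ := mem_image.1 hp
      obtain ⟨k, hk, h⟩ := clique_block hr hF hv
      refine mem_image.2 ⟨k, by simpa [← hc] using hk, ?_⟩
      funext x
      rw [h x, hS x]
    · refine card_image_le.trans ?_
      rw [card_range, card_image_of_injOn, hc]
      intro u hu v hv huv
      by_contra hne
      rcases hF.2 u hu v hv hne with h | h
      · exact prec_ne hr (hF.1 u hu) h huv
      · exact prec_ne hr (hF.1 v hv) h huv.symm
  intro v hv
  have : v.1 ∈ G.image Prod.fst := by
    rw [key G hG rfl (fun _ => rfl), ← key F hF hc hS]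
    exact mem_image_of_mem _ hv
  obtain ⟨u, hu, huv⟩ := mem_image.1 this
  suffices h : u.2 = v.2 by
    have : u = v := Prod.ext huv h
    exact this ▸ hu
  have hvl := vert_le (hF.1 v hv) 0
  have hu0 : u.1 0 = v.1 0 := by rw [huv]
  by_cases a : v.1 0 = 0
  · have e1 := (hF.1 v hv).2.2
    have e2 := (hG.1 u hu).2.2
    rw [hu0] at e2
    rw [a, H0] at e1 e2
    omega
  · by_cases b : v.1 0 = r
    · have mv : v ∈ F.filter (fun u => u.1 0 = r) := by simp [hv, b]
      have mu : u ∈ G.filter (fun u => u.1 0 = r) := by simp [hu, b, hu0]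
      have ev : F.filter (fun u => u.1 0 = r) = {v} :=
        eq_singleton_iff_unique_mem.2 ⟨mv, fun w hw => F1_uniq hF _ hw _ mv⟩
      have eu : G.filter (fun u => u.1 0 = r) = {u} :=
        eq_singleton_iff_unique_mem.2 ⟨mu, fun w hw => F1_uniq hG _ hw _ mu⟩
      unfold C1 at h1
      rw [ev, eu] at h1
      simpa using h1.symm
    · have mv : v ∈ F.filter (fun u => 0 < u.1 0 ∧ u.1 0 < r) := by
        simp only [mem_filter]; refine ⟨hv, ?_, ?_⟩ <;> omega
      have mu : u ∈ G.filter (fun u => 0 < u.1 0 ∧ u.1 0 < r) := by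
        simp only [mem_filter]; refine ⟨hu, ?_, ?_⟩ <;> omega
      have ev : F.filter (fun u => 0 < u.1 0 ∧ u.1 0 < r) = {v} :=
        eq_singleton_iff_unique_mem.2 ⟨mv, fun w hw => F2_uniq hF _ hw _ mv⟩
      have eu : G.filter (fun u => 0 < u.1 0 ∧ u.1 0 < r) = {u} :=
        eq_singleton_iff_unique_mem.2 ⟨mu, fun w hw => F2_uniq hG _ hw _ mu⟩
      unfold C2 at h2
      rw [ev, eu] at h2
      simpa using h2.symm

end VerFlag

namespace VerFlag
open Finset
variable {d r : ℕ} {H : ℕ → ℕ}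

lemma sum_block (hr : 1 ≤ r) (s i : ℕ) : ∑ k ∈ range i, min (s - k * r) r = min s (i * r) := by
  induction i with
  | zero => simp
  | succ i ih => rw [sum_range_succ, ih, Nat.succ_mul]; omega

lemma clique_surj (hr : 1 ≤ r) (H0 : H 0 = 1) (Hbig : ∀ j, 2 * r ≤ j → H j = 0)
    (S : Fin (d+1) → ℕ) (i : ℕ) (hlast : S (Fin.last d) = i * r)
    (hS : ∀ l : Fin d, S l.castSucc ≤ S l.succ ∧ S l.succ < S l.castSucc + r)
    (c : ℕ × ℕ) (hc : c ∈ P r H (S 0)) :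
    ∃ F : Finset (VT d), Clique d r H F ∧ F.card = i ∧ (∀ x, ∑ u ∈ F, u.1 x = S x) ∧
      C1 r F = c.1 ∧ C2 r F = c.2 := by
  classical
  have hSle : ∀ x, S x ≤ i * r := by
    intro x
    rw [← hlast]
    exact mono_p (fun l => (hS l).1) (Fin.le_last x)
  have hS2 : S 0 < 2 * r := by
    by_contra h
    push Not at h
    have := Hbig _ h
    rw [mem_P_ge r H (by omega)] at hc
    omega
  -- unify the label information
  have hlab1 : S 0 < r → c.1 = 0 ∧ c.2 < H (S 0) := fun h => (mem_P_lt r H h c).1 hc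
  have hlab2 : r ≤ S 0 → (c.1 < H r ∧ c.2 < H (S 0 - r)) ∧ c.1 + H r * c.2 < H (S 0) :=
    fun h => (mem_P_ge r H (by omega) c).1 hc
  let lab : ℕ → ℕ := fun p => if p = r then c.1 else if 0 < p then c.2 else 0
  let bl : ℕ → VT d := fun k => (fun x => min (S x - k * r) r, lab (min (S 0 - k * r) r))
  have hbl : ∀ k x, (bl k).1 x = min (S x - k * r) r := fun _ _ => rfl
  have hbl2 : ∀ k, (bl k).2 = lab (min (S 0 - k * r) r) := fun _ => rfl
  have hmulge : ∀ k l : ℕ, k < l → k * r + r ≤ l * r := by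
    intro k l h
    have := Nat.mul_le_mul_right r (Nat.succ_le_of_lt h)
    rw [Nat.succ_mul] at this
    exact this
  have hvert : ∀ k < i, IsVert d r H (bl k) := by
    intro k hk
    have := hmulge k i hk
    refine ⟨?_, ?_, ?_⟩
    · rw [hbl, hlast]; omega
    · intro l
      have := hS l
      rw [hbl, hbl]; omega
    · rw [hbl, hbl2]
      rcases Nat.eq_zero_or_pos k with rfl | hk0
      · simp only [lab, zero_mul, Nat.sub_zero]
        by_cases a : S 0 < r
        · rw [min_eq_left a.le, if_neg a.ne]
          split_ifs with h
          · exact (hlab1 a).2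
          · rw [show S 0 = 0 by omega, H0]; omega
        · rw [min_eq_right (by omega), if_pos rfl]
          exact (hlab2 (by omega)).1.1
      · have h1 := hmulge 0 k hk0
        rw [zero_mul, zero_add] at h1
        have h3 : S 0 - k * r < r := by omega
        simp only [lab]
        rw [min_eq_left h3.le, if_neg h3.ne]
        split_ifs with h
        · have : k = 1 := by
            by_contra hne
            have := hmulge 1 k (by omega)
            omega
          subst this
          rw [one_mul]
          exact (hlab2 (by omega)).1.2
        · rw [show S 0 - k * r = 0 by omega, H0]; omega
  have hprec : ∀ k l, k < l → Prec d r H (bl k) (bl l) := by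
    intro k l hkl
    have h1 := hmulge k l hkl
    refine ⟨?_, ?_, ?_, ?_⟩
    · intro x; rw [hbl, hbl]; omega
    · intro x
      have := hS x
      simp only [hbl]; omega
    · rw [hbl]; omega
    · rw [hbl, hbl, hbl2, hbl2]
      intro h
      have hk : k = 0 := by
        by_contra hne
        have := hmulge 0 k (by omega)
        omega
      subst hk
      simp only [zero_mul, Nat.sub_zero] at h h1 ⊢
      have hge : r ≤ S 0 := by omega
      have h3 : S 0 - l * r < r := by omega
      have hl0 : lab (min (S 0) r) = c.1 := by rw [h]; exact if_pos rfl
      rw [hl0]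
      simp only [lab]
      rw [min_eq_left h3.le, if_neg h3.ne]
      split_ifs with h4
      · have : l = 1 := by
          by_contra hne
          have := hmulge 1 l (by omega)
          omega
        subst this
        rw [one_mul, show r + (S 0 - r) = S 0 by omega]
        exact (hlab2 hge).2
      · rw [show S 0 - l * r = 0 by omega]
        simpa using (hlab2 hge).1.1
  have hinj : Set.InjOn bl (range i : Finset ℕ) := by
    intro k hk l hl h
    simp only [coe_range, Set.mem_Iio] at hk hl
    by_contra hne
    rcases lt_or_gt_of_ne hne with h' | h'
    · exact prec_ne hr (hvert k hk) (hprec k l h') (by rw [h])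
    · exact prec_ne hr (hvert l hl) (hprec l k h') (by rw [h])
  refine ⟨(range i).image bl, ⟨?_, ?_⟩, ?_, ?_, ?_, ?_⟩
  · intro u hu
    obtain ⟨k, hk, rfl⟩ := mem_image.1 hu
    exact hvert k (mem_range.1 hk)
  · intro u hu v hv huv
    obtain ⟨k, hk, rfl⟩ := mem_image.1 hu
    obtain ⟨l, hl, rfl⟩ := mem_image.1 hv
    rcases lt_trichotomy k l with h | h | h
    · exact Or.inl (hprec k l h)
    · exact absurd (by rw [h]) huv
    · exact Or.inr (hprec l k h)
  · rw [card_image_of_injOn hinj, card_range]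
  · intro x
    rw [sum_image hinj]
    simp only [hbl]
    rw [sum_block hr]
    exact min_eq_left (hSle x)
  · unfold C1
    rw [sum_filter, sum_image hinj]
    simp only [hbl, hbl2]
    have hz : ∀ k ∈ range i, k ≠ 0 →
        (if min (S 0 - k * r) r = r then lab (min (S 0 - k * r) r) else 0) = 0 := by
      intro k _ hk
      have := hmulge 0 k (by omega)
      rw [if_neg (by omega)]
    by_cases a : S 0 < r
    · rw [(hlab1 a).1]
      apply sum_eq_zero
      intro k hk
      rw [if_neg (by omega)]
    · have hi : i ≠ 0 := by
        rintro rfl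
        have := hSle 0
        omega
      rw [sum_eq_single 0 hz (fun h => absurd (mem_range.2 (by omega)) h)]
      rw [zero_mul, Nat.sub_zero, min_eq_right (by omega), if_pos rfl]
      simp [lab]
  · unfold C2
    rw [sum_filter, sum_image hinj]
    simp only [hbl, hbl2]
    have hi0 := hSle 0
    by_cases a : S 0 < r
    · by_cases b : S 0 = 0
      · have := (hlab1 a).2
        rw [b, H0] at this
        rw [show c.2 = 0 by omega]
        apply sum_eq_zero
        intro k hk
        rw [if_neg (by omega)]
      · have hi : i ≠ 0 := by
          rintro rfl
          omega
        rw [sum_eq_single 0 _ (fun h => absurd (mem_range.2 (by omega)) h)]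
        · rw [zero_mul, Nat.sub_zero, min_eq_left (by omega), if_pos (by omega)]
          simp only [lab]
          rw [if_neg (by omega), if_pos (by omega)]
        · intro k _ hk
          have := hmulge 0 k (by omega)
          rw [if_neg (by omega)]
    · by_cases b : S 0 = r
      · have := (hlab2 (by omega)).1.2
        rw [b, Nat.sub_self, H0] at this
        rw [show c.2 = 0 by omega]
        apply sum_eq_zero
        intro k hk
        rcases Nat.eq_zero_or_pos k with rfl | hk0
        · rw [if_neg (by omega)]
        · have := hmulge 0 k (by omega)
          rw [if_neg (by omega)]
      · have hi : 1 < i := by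
          by_contra h
          have : i = 0 ∨ i = 1 := by omega
          rcases this with rfl | rfl <;> omega
        rw [sum_eq_single 1 _ (fun h => absurd (mem_range.2 (by omega)) h)]
        · rw [one_mul, min_eq_left (by omega), if_pos (by omega)]
          simp only [lab]
          rw [if_neg (by omega), if_pos (by omega)]
        · intro k _ hk
          rcases Nat.eq_zero_or_pos k with rfl | hk0
          · rw [if_neg (by omega)]
          · have := hmulge 1 k (by omega)
            rw [if_neg (by omega)]

lemma S_last (S : Fin (d+1) → ℕ) (hS : ∀ l : Fin d, S l.castSucc ≤ S l.succ) :
    S 0 + ∑ l : Fin d, (S l.succ - S l.castSucc) = S (Fin.last d) := by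
  induction d with
  | zero => simp
  | succ d ih =>
    rw [Fin.sum_univ_castSucc]
    have h := ih (fun x => S x.castSucc) (fun l => hS l.castSucc)
    simp only [Fin.castSucc_zero] at h
    have h2 := hS (Fin.last d)
    simp only [Fin.succ_castSucc, Fin.succ_last, Nat.succ_eq_add_one] at h h2 ⊢
    omega

/-- The combinatorial heart. -/
lemma flag_exists (hr : 1 ≤ r) (H0 : H 0 = 1) (Hbig : ∀ j, 2 * r ≤ j → H j = 0)
    (hmul : ∀ k, 1 ≤ k → k < r → H (r + k) ≤ H r * H k) (d : ℕ) :
    ∃ (n : ℕ) (Δ : Finset (Finset (Fin n))),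
      ∅ ∈ Δ ∧
      (∀ F ∈ Δ, ∀ G ⊆ F, G ∈ Δ) ∧
      (∀ F : Finset (Fin n), F ∉ Δ → (∀ G, G ⊂ F → G ∈ Δ) → F.card ≤ 2) ∧
      (∀ i : ℕ, ((Δ.filter fun F => F.card = i).card) =
        ∑ m ∈ Fintype.piFinset (fun _ : Fin d => range r),
          if ∑ l, m l ≤ i * r then H (i * r - ∑ l, m l) else 0) := by
  classical
  let V : Finset (VT d) := ((Fintype.piFinset fun _ => range (r+1)) ×ˢ
    range (∑ j ∈ range (r+1), H j)).filter (fun u => IsVert d r H u)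
  have hV : ∀ u, u ∈ V ↔ IsVert d r H u := by
    intro u
    simp only [V, mem_filter, mem_product, Fintype.mem_piFinset, mem_range, and_iff_right_iff_imp]
    intro hu
    have := vert_le hu
    refine ⟨fun x => by have := this x; omega, ?_⟩
    refine lt_of_lt_of_le hu.2.2 ?_
    exact single_le_sum (f := H) (fun _ _ => Nat.zero_le _)
      (mem_range.2 (by have := this 0; omega))
  obtain ⟨n, Δ, h1, h2, h3, h4⟩ := transfer V (Prec d r H)
  refine ⟨n, Δ, h1, h2, h3, fun i => ?_⟩
  rw [h4 i]
  have hset : {F : Finset (VT d) | F ⊆ V ∧ F.card = i ∧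
      ∀ u ∈ F, ∀ v ∈ F, u ≠ v → Prec d r H u v ∨ Prec d r H v u} =
      ((V.powersetCard i).filter (fun F => Clique d r H F) : Finset (Finset (VT d))) := by
    ext F
    rw [Set.mem_ofPred_eq, mem_coe, mem_filter, mem_powersetCard, Clique]
    constructor
    · rintro ⟨a, b, c⟩
      exact ⟨⟨a, b⟩, fun u hu => (hV u).1 (a hu), c⟩
    · rintro ⟨⟨a, b⟩, -, c⟩
      exact ⟨a, b, c⟩
  rw [hset, Set.ncard_coe_finset]
  have hT : ∑ m ∈ Fintype.piFinset (fun _ : Fin d => range r),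
          (if ∑ l, m l ≤ i * r then H (i * r - ∑ l, m l) else 0) =
      ((Fintype.piFinset (fun _ : Fin d => range r)).sigma
        (fun m => if ∑ l, m l ≤ i * r then P r H (i * r - ∑ l, m l) else ∅)).card := by
    rw [card_sigma]
    apply sum_congr rfl
    intro m _
    split_ifs
    · rw [card_P r H H0 Hbig hmul]
    · simp
  rw [hT]
  have hmem : ∀ F, F ∈ (V.powersetCard i).filter (fun F => Clique d r H F) ↔
      F.card = i ∧ Clique d r H F := by
    intro F
    simp only [mem_filter, mem_powersetCard]
    constructor
    · rintro ⟨⟨a, b⟩, c⟩; exact ⟨b, c⟩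
    · rintro ⟨b, c⟩; exact ⟨⟨fun u hu => (hV u).2 (c.1 u hu), b⟩, c⟩
  have hlast : ∀ F : Finset (VT d), F.card = i → Clique d r H F →
      ∑ u ∈ F, u.1 (Fin.last d) = i * r := by
    intro F hF hC
    rw [← hF, ← smul_eq_mul]
    exact sum_eq_card_nsmul (fun u hu => (hC.1 u hu).1)
  refine Finset.card_bij (fun F _ => ⟨fun l => ∑ u ∈ F, u.1 l.succ - ∑ u ∈ F, u.1 l.castSucc,
    (C1 r F, C2 r F)⟩) ?_ ?_ ?_
  · intro F hF
    obtain ⟨hc, hF⟩ := (hmem F).1 hF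
    have hst := clique_step hr hF
    have hl := S_last (fun x => ∑ u ∈ F, u.1 x) (fun l => (hst l).1)
    simp only [hlast F hc hF] at hl
    simp only [mem_sigma, Fintype.mem_piFinset, mem_range]
    refine ⟨fun l => by have := hst l; omega, ?_⟩
    rw [if_pos (by omega)]
    rw [show i * r - ∑ l : Fin d, (∑ u ∈ F, u.1 l.succ - ∑ u ∈ F, u.1 l.castSucc) =
      ∑ u ∈ F, u.1 0 by omega]
    exact clique_label hr H0 hF
  · intro F hF G hG hFG
    obtain ⟨hcF, hF⟩ := (hmem F).1 hF
    obtain ⟨hcG, hG⟩ := (hmem G).1 hG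
    simp only [Sigma.mk.injEq, heq_eq_eq, Prod.mk.injEq] at hFG
    obtain ⟨e1, e2, e3⟩ := hFG
    have hS : ∀ x, ∑ u ∈ F, u.1 x = ∑ u ∈ G, u.1 x := by
      intro x
      induction x using Fin.reverseInduction with
      | last => rw [hlast F hcF hF, hlast G hcG hG]
      | cast l ih =>
        have := congrFun e1 l
        have a := clique_step hr hF l
        have b := clique_step hr hG l
        omega
    exact Subset.antisymm (clique_inj_sub hr H0 hF hG (by omega) hS e2 e3)
      (clique_inj_sub hr H0 hG hF (by omega) (fun x => (hS x).symm) e2.symm e3.symm)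
  · rintro ⟨m, c⟩ hmc
    simp only [mem_sigma, Fintype.mem_piFinset, mem_range] at hmc
    obtain ⟨hm, hc⟩ := hmc
    split_ifs at hc with hle
    · let S : Fin (d+1) → ℕ := fun x => (i * r - ∑ l, m l) + Fin.partialSum m x
      have hstep : ∀ l : Fin d, S l.succ = S l.castSucc + m l := by
        intro l
        simp only [S, Fin.partialSum_succ]; omega
      have h0 : S 0 = i * r - ∑ l, m l := by simp [S]
      have hl := S_last S (fun l => by rw [hstep]; omega)
      have hl' : S (Fin.last d) = i * r := by
        rw [← hl, h0]
        simp only [hstep, Nat.add_sub_cancel_left]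
        omega
      obtain ⟨F, hF, hcF, hs, e1, e2⟩ := clique_surj hr H0 Hbig S i hl'
        (fun l => by have := hm l; rw [hstep]; omega) c (by rw [h0]; exact hc)
      refine ⟨F, (hmem F).2 ⟨hcF, hF⟩, ?_⟩
      simp only [hs, hstep, Nat.add_sub_cancel_left, e1, e2]
    · simp at hc
end VerFlag

namespace VerFlag
open PowerSeries

/-- Veronese section of a power series. -/
noncomputable def sec (r : ℕ) (f : PowerSeries ℤ) : PowerSeries ℤ := PowerSeries.mk fun i => coeff (i * r) f

lemma sec_mul (r : ℕ) (hr : 1 ≤ r) (f : PowerSeries ℤ) :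
    sec r (f * (1 - X ^ r)) = sec r f * (1 - X) := by
  ext i
  rw [mul_sub, mul_sub, mul_one, mul_one, map_sub]
  simp only [sec, coeff_mk, map_sub]
  congr 1
  cases i with
  | zero =>
    rw [coeff_zero_mul_X, zero_mul, coeff_mul_X_pow', if_neg (by omega)]
  | succ i =>
    rw [coeff_succ_mul_X, coeff_mk, Nat.succ_mul, coeff_mul_X_pow]

lemma sec_mul_pow (r : ℕ) (hr : 1 ≤ r) (f : PowerSeries ℤ) (d : ℕ) :
    sec r (f * (1 - X ^ r) ^ d) = sec r f * (1 - X) ^ d := by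
  induction d with
  | zero => simp
  | succ d ih => rw [pow_succ, ← mul_assoc, sec_mul r hr, ih, pow_succ, mul_assoc]

lemma coeff_veronese (a : ℕ → ℤ) (d r : ℕ) (hr : 1 ≤ r) (h hrp : Polynomial ℤ)
    (hh : (h : PowerSeries ℤ) = (PowerSeries.mk a) * (1 - X) ^ d)
    (hhr : (hrp : PowerSeries ℤ) = (PowerSeries.mk fun i => a (i * r)) * (1 - X) ^ d) (i : ℕ) :
    hrp.coeff i = ∑ m ∈ Fintype.piFinset (fun _ : Fin d => Finset.range r),
          if ∑ l, m l ≤ i * r then h.coeff (i * r - ∑ l, m l) else 0 := by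
  have e1 : (PowerSeries.mk fun i => a (i * r)) = sec r (PowerSeries.mk a) := by
    ext; simp [sec]
  have hg : (1 - X ^ r : PowerSeries ℤ) = (1 - X) * ∑ k ∈ Finset.range r, X ^ k :=
    (mul_neg_geom_sum X r).symm
  rw [← Polynomial.coeff_coe, hhr, e1, ← sec_mul_pow r hr, hg, mul_pow, ← mul_assoc, ← hh]
  simp only [sec, coeff_mk]
  have : (∑ k ∈ Finset.range r, (X : PowerSeries ℤ) ^ k) ^ d =
      ∑ m ∈ Fintype.piFinset (fun _ : Fin d => Finset.range r), X ^ (∑ l, m l) := by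
    have := Finset.prod_univ_sum (fun _ : Fin d => Finset.range r)
      (fun _ k => (X : PowerSeries ℤ) ^ k)
    simp only [Finset.prod_const, Finset.card_univ, Fintype.card_fin] at this
    rw [this]
    simp only [Finset.prod_pow_eq_pow_sum]
  rw [this, Finset.mul_sum, map_sum]
  refine Finset.sum_congr rfl fun m _ => ?_
  rw [coeff_mul_X_pow', Polynomial.coeff_coe]
end VerFlag

namespace VerFlag
open PowerSeries

section
variable {K : Type*} [Field K] {A : Type*} [CommRing A] [Algebra K A]
    (𝒜 : ℕ → Submodule K A)

/-- image of `𝒜 n` in `A ⧸ I` -/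
noncomputable def Q (I : Ideal A) (n : ℕ) : Submodule K (A ⧸ I) :=
  (𝒜 n).map (Ideal.Quotient.mkₐ K I).toLinearMap

lemma Q_finite (hfin : ∀ i, Module.Finite K (𝒜 i)) (I : Ideal A) (n : ℕ) :
    Module.Finite K (Q 𝒜 I n) := by
  have := hfin n
  exact Module.Finite.map _ _

lemma mem_Q (I : Ideal A) (n : ℕ) (x : A ⧸ I) :
    x ∈ Q 𝒜 I n ↔ ∃ a ∈ 𝒜 n, Ideal.Quotient.mk I a = x := Iff.rfl

lemma finrank_mul_le (hstd : ∀ i, 𝒜 i = 𝒜 1 ^ i)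
    (hfin : ∀ i, Module.Finite K (𝒜 i)) (I : Ideal A) (a b : ℕ) :
    Module.finrank K (Q 𝒜 I (a + b)) ≤ Module.finrank K (Q 𝒜 I a) * Module.finrank K (Q 𝒜 I b) := by
  have h1 : Q 𝒜 I (a + b) = Q 𝒜 I a * Q 𝒜 I b := by
    unfold Q
    rw [← Submodule.map_mul, hstd (a+b), pow_add, ← hstd a, ← hstd b]
  have : ∀ n, Module.Finite K (Q 𝒜 I n) := Q_finite 𝒜 hfin I
  rw [h1, ← Submodule.mulMap_range, ← Module.finrank_tensorProduct]
  exact LinearMap.finrank_range_le _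

lemma rank_nullity {V W : Type*} [AddCommGroup V] [Module K V] [AddCommGroup W] [Module K W]
    (f : V →ₗ[K] W) (U : Submodule K V) [Module.Finite K U] :
    Module.finrank K (U.map f) + Module.finrank K (U ⊓ LinearMap.ker f : Submodule K V) =
      Module.finrank K U := by
  have h := LinearMap.finrank_range_add_finrank_ker (f.domRestrict U)
  rw [LinearMap.range_domRestrict, LinearMap.ker_domRestrict] at h
  rw [← h]
  congr 1
  have := LinearEquiv.finrank_eq (Submodule.equivMapOfInjective U.subtype U.injective_subtype
    (Submodule.comap U.subtype (LinearMap.ker f)))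
  rw [Submodule.map_comap_subtype] at this
  exact this.symm

variable [GradedAlgebra 𝒜]

lemma map_factor (I J : Ideal A) (hIJ : I ≤ J) (n : ℕ) :
    (Q 𝒜 I n).map (Ideal.Quotient.factorₐ K hIJ).toLinearMap = Q 𝒜 J n := by
  unfold Q
  rw [← Submodule.map_comp]
  rfl

lemma decomp_aux (I : Ideal A) (hI : I.IsHomogeneous 𝒜)
    (θ a : A) (ha : a ∈ I ⊔ Ideal.span {θ}) : ∃ i ∈ I, ∃ b, a = i + θ * b := by
  obtain ⟨i, hi, x, hx, rfl⟩ := Submodule.mem_sup.1 ha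
  obtain ⟨b, rfl⟩ := Ideal.mem_span_singleton'.1 hx
  exact ⟨i, hi, b, by ring⟩

lemma Q_zero (hfin : ∀ i, Module.Finite K (𝒜 i)) (I : Ideal A) (hI : I.IsHomogeneous 𝒜)
    (θ : A) (hθ : θ ∈ 𝒜 1) :
    Module.finrank K (Q 𝒜 (I ⊔ Ideal.span {θ}) 0) = Module.finrank K (Q 𝒜 I 0) := by
  have := Q_finite 𝒜 hfin I 0
  rw [← map_factor 𝒜 I (I ⊔ Ideal.span {θ}) le_sup_left 0,
    ← rank_nullity (Ideal.Quotient.factorₐ K (le_sup_left : I ≤ I ⊔ Ideal.span {θ})).toLinearMap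
      (Q 𝒜 I 0)]
  symm
  rw [add_eq_left, Submodule.finrank_eq_zero, eq_bot_iff]
  rintro x ⟨⟨a, ha, rfl⟩, hx⟩
  have hx' : a ∈ I ⊔ Ideal.span {θ} := Ideal.Quotient.eq_zero_iff_mem.1 hx
  obtain ⟨i, hi, b, hab⟩ := decomp_aux 𝒜 I hI θ a hx'
  have h1 := congrArg (fun z => (DirectSum.decompose 𝒜 z 0 : A)) hab
  simp only [DirectSum.decompose_add, DirectSum.add_apply, Submodule.coe_add] at h1
  rw [DirectSum.decompose_of_mem_same 𝒜 ha,
    DirectSum.coe_decompose_mul_of_left_mem_of_not_le 𝒜 hθ (by omega), add_zero] at h1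
  have : a ∈ I := by rw [h1]; exact hI 0 hi
  exact Ideal.Quotient.eq_zero_iff_mem.2 this

lemma Q_succ (hfin : ∀ i, Module.Finite K (𝒜 i)) (I : Ideal A) (hI : I.IsHomogeneous 𝒜)
    (θ : A) (hθ : θ ∈ 𝒜 1) (hreg : ∀ a, θ * a ∈ I → a ∈ I) (n : ℕ) :
    Module.finrank K (Q 𝒜 (I ⊔ Ideal.span {θ}) (n+1)) + Module.finrank K (Q 𝒜 I n) =
      Module.finrank K (Q 𝒜 I (n+1)) := by
  have := Q_finite 𝒜 hfin I (n+1)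
  rw [← map_factor 𝒜 I (I ⊔ Ideal.span {θ}) le_sup_left (n+1),
    ← rank_nullity (Ideal.Quotient.factorₐ K (le_sup_left : I ≤ I ⊔ Ideal.span {θ})).toLinearMap
      (Q 𝒜 I (n+1))]
  congr 1
  let mθ : (A ⧸ I) →ₗ[K] (A ⧸ I) := LinearMap.mulLeft K (Ideal.Quotient.mk I θ)
  have hinj : Function.Injective mθ := by
    rw [← LinearMap.ker_eq_bot, eq_bot_iff]
    intro x hx
    obtain ⟨a, rfl⟩ := Ideal.Quotient.mk_surjective x
    have hx : Ideal.Quotient.mk I θ * Ideal.Quotient.mk I a = 0 := hx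
    rw [← map_mul, Ideal.Quotient.eq_zero_iff_mem] at hx
    exact Ideal.Quotient.eq_zero_iff_mem.2 (hreg a hx)
  rw [← LinearEquiv.finrank_eq (Submodule.equivMapOfInjective mθ hinj (Q 𝒜 I n)).symm]
  suffices h : Submodule.map mθ (Q 𝒜 I n) = (Q 𝒜 I (n+1)) ⊓
    LinearMap.ker (Ideal.Quotient.factorₐ K
      (le_sup_left : I ≤ I ⊔ Ideal.span {θ})).toLinearMap by rw [h]
  apply le_antisymm
  · rintro _ ⟨_, ⟨a, ha, rfl⟩, rfl⟩
    refine ⟨⟨θ * a, ?_, ?_⟩, ?_⟩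
    · rw [add_comm]; exact SetLike.mul_mem_graded hθ ha
    · exact map_mul (Ideal.Quotient.mk I) θ a
    · change Ideal.Quotient.mk (I ⊔ Ideal.span {θ}) (θ * a) = 0
      rw [Ideal.Quotient.eq_zero_iff_mem]
      exact Ideal.mul_mem_right _ _ (Ideal.mem_sup_right (Ideal.mem_span_singleton_self θ))
  · rintro x ⟨⟨a, ha, rfl⟩, hx⟩
    have hx' : a ∈ I ⊔ Ideal.span {θ} := Ideal.Quotient.eq_zero_iff_mem.1 hx
    obtain ⟨i, hi, b, hab⟩ := decomp_aux 𝒜 I hI θ a hx'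
    have h1 := congrArg (fun z => (DirectSum.decompose 𝒜 z (n+1) : A)) hab
    simp only [DirectSum.decompose_add, DirectSum.add_apply, Submodule.coe_add] at h1
    rw [DirectSum.decompose_of_mem_same 𝒜 ha,
      DirectSum.coe_decompose_mul_of_left_mem_of_le 𝒜 hθ (by omega), Nat.add_sub_cancel] at h1
    refine ⟨Ideal.Quotient.mk I (DirectSum.decompose 𝒜 b n : A),
      ⟨_, (DirectSum.decompose 𝒜 b n).2, rfl⟩, ?_⟩
    change Ideal.Quotient.mk I θ * Ideal.Quotient.mk I _ = Ideal.Quotient.mk I a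
    rw [h1, ← map_mul, map_add, right_eq_add, Ideal.Quotient.eq_zero_iff_mem]
    exact hI (n+1) hi

/-- Hilbert series of the quotient by the ideal -/
noncomputable def HS (I : Ideal A) : PowerSeries ℤ :=
  PowerSeries.mk fun i => (Module.finrank K (Q 𝒜 I i) : ℤ)

lemma HS_step (hfin : ∀ i, Module.Finite K (𝒜 i)) (I : Ideal A) (hI : I.IsHomogeneous 𝒜)
    (θ : A) (hθ : θ ∈ 𝒜 1) (hreg : ∀ a, θ * a ∈ I → a ∈ I) :
    HS 𝒜 (I ⊔ Ideal.span {θ}) = HS 𝒜 I * (1 - X) := by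
  ext n
  rw [mul_sub, mul_one, map_sub]
  cases n with
  | zero =>
    rw [coeff_zero_mul_X, sub_zero]
    simp only [HS, coeff_mk]
    rw [Q_zero 𝒜 hfin I hI θ hθ]
  | succ n =>
    rw [coeff_succ_mul_X]
    simp only [HS, coeff_mk]
    rw [← Q_succ 𝒜 hfin I hI θ hθ hreg]
    push_cast; ring

lemma HS_bot : HS 𝒜 (⊥ : Ideal A) = PowerSeries.mk fun i => (Module.finrank K (𝒜 i) : ℤ) := by
  ext n
  simp only [HS, coeff_mk]
  congr 1
  symm
  apply LinearEquiv.finrank_eq (Submodule.equivMapOfInjective _ _ _)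
  intro a b hab
  have hab : Ideal.Quotient.mk ⊥ a = Ideal.Quotient.mk ⊥ b := hab
  rw [Ideal.Quotient.eq, Ideal.mem_bot, sub_eq_zero] at hab
  exact hab

lemma HS_list (hfin : ∀ i, Module.Finite K (𝒜 i)) (L : List A) (hL : ∀ θ ∈ L, θ ∈ 𝒜 1)
    (hreg : RingTheory.Sequence.IsWeaklyRegular A L) :
    ∀ k ≤ L.length, HS 𝒜 (Ideal.ofList (L.take k)) = HS 𝒜 (⊥ : Ideal A) * (1 - X) ^ k := by
  intro k
  induction k with
  | zero => intro _; simp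
  | succ k ih =>
    intro hk
    have hlt : k < L.length := hk
    have h1 : Ideal.ofList (L.take (k+1)) = Ideal.ofList (L.take k) ⊔ Ideal.span {L[k]} := by
      rw [List.take_succ_eq_append_getElem hlt, Ideal.ofList_append, Ideal.ofList_singleton]
    have hI : (Ideal.ofList (L.take k)).IsHomogeneous 𝒜 := by
      apply Ideal.homogeneous_span
      intro x hx
      exact ⟨1, hL x (List.mem_of_mem_take hx)⟩
    have hr : ∀ a, L[k] * a ∈ Ideal.ofList (L.take k) → a ∈ Ideal.ofList (L.take k) := by
      intro a ha
      have h := hreg.regular_mod_prev k hlt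
      rw [isSMulRegular_quotient_iff_mem_of_smul_mem] at h
      have h := h a
      simpa using h (by simpa using ha)
    rw [h1, HS_step 𝒜 hfin _ hI _ (hL _ (List.getElem_mem hlt)) hr, ih (by omega), pow_succ,
      mul_assoc]

lemma HS_final (hfin : ∀ i, Module.Finite K (𝒜 i)) (L : List A) (hL : ∀ θ ∈ L, θ ∈ 𝒜 1)
    (hreg : RingTheory.Sequence.IsWeaklyRegular A L) :
    HS 𝒜 (Ideal.ofList L) =
      (PowerSeries.mk fun i => (Module.finrank K (𝒜 i) : ℤ)) * (1 - X) ^ L.length := by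
  have := HS_list 𝒜 hfin L hL hreg L.length le_rfl
  rwa [List.take_length, HS_bot] at this
end
end VerFlag

namespace VerFlag
open MvPolynomial in
lemma coeff_subst {K S : Type*} [Field K] [CommRing S] [Algebra K S] {m : ℕ}
    (z : Fin m → S) (b : Fin m → K) (f : MvPolynomial (Fin m) K) :
    (aeval (fun i => Polynomial.C (z i) + Polynomial.C (algebraMap K S (b i)) * Polynomial.X)
      f : Polynomial S).natDegree ≤ f.totalDegree ∧
    (aeval (fun i => Polynomial.C (z i) + Polynomial.C (algebraMap K S (b i)) * Polynomial.X)
      f : Polynomial S).coeff f.totalDegree =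
      algebraMap K S (eval b (homogeneousComponent f.totalDegree f)) := by
  classical
  set g : Fin m → Polynomial S :=
    fun i => Polynomial.C (z i) + Polynomial.C (algebraMap K S (b i)) * Polynomial.X with hg
  have hgd : ∀ i, (g i).natDegree ≤ 1 := by
    intro i
    simp only [hg]
    compute_degree
  have hgc : ∀ i, (g i).coeff 1 = algebraMap K S (b i) := by
    intro i
    simp [hg, Polynomial.coeff_C]
  have hpd : ∀ (s : Fin m →₀ ℕ), (∏ i, g i ^ s i).natDegree ≤ ∑ i, s i := by
    intro s
    refine (Polynomial.natDegree_prod_le _ _).trans (Finset.sum_le_sum fun i _ => ?_)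
    calc (g i ^ s i).natDegree ≤ s i * (g i).natDegree := Polynomial.natDegree_pow_le
      _ ≤ s i * 1 := Nat.mul_le_mul_left _ (hgd i)
      _ = s i := mul_one _
  have hpc : ∀ (s : Fin m →₀ ℕ), (∏ i, g i ^ s i).coeff (∑ i, s i) =
      ∏ i, algebraMap K S (b i) ^ s i := by
    intro s
    have key : ∀ t : Finset (Fin m), (∏ i ∈ t, g i ^ s i).natDegree ≤ ∑ i ∈ t, s i ∧
        (∏ i ∈ t, g i ^ s i).coeff (∑ i ∈ t, s i) = ∏ i ∈ t, algebraMap K S (b i) ^ s i := by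
      intro t
      induction t using Finset.induction_on with
      | empty => simp
      | insert a t ha ih =>
        rw [Finset.prod_insert ha, Finset.sum_insert ha, Finset.prod_insert ha]
        have h1 : (g a ^ s a).natDegree ≤ s a := by
          calc (g a ^ s a).natDegree ≤ s a * (g a).natDegree := Polynomial.natDegree_pow_le
            _ ≤ s a * 1 := Nat.mul_le_mul_left _ (hgd a)
            _ = s a := mul_one _
        have h2 : (g a ^ s a).coeff (s a) = algebraMap K S (b a) ^ s a := by
          have := Polynomial.coeff_pow_of_natDegree_le (m := s a) (hgd a)
          rw [mul_one, hgc] at this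
          exact this
        refine ⟨Polynomial.natDegree_mul_le_of_le h1 ih.1, ?_⟩
        rw [Polynomial.coeff_mul_add_eq_of_natDegree_le h1 ih.1, h2, ih.2]
    exact (key Finset.univ).2
  have hle : ∀ s ∈ f.support, ∑ i, s i ≤ f.totalDegree := by
    intro s hs
    have := le_totalDegree hs
    rwa [Finsupp.sum_fintype _ _ (fun _ => rfl)] at this
  have hae : (aeval g f : Polynomial S) =
      ∑ s ∈ f.support, Polynomial.C (algebraMap K S (coeff s f)) * ∏ i, g i ^ s i := by
    rw [aeval_def, eval₂_eq']
    rfl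
  rw [hae]
  constructor
  · refine Polynomial.natDegree_sum_le_of_forall_le _ _ fun s hs => ?_
    exact (Polynomial.natDegree_C_mul_le _ _).trans ((hpd s).trans (hle s hs))
  · rw [Polynomial.finsetSum_coeff, homogeneousComponent_apply, map_sum, map_sum,
      Finset.sum_filter]
    refine Finset.sum_congr rfl fun s hs => ?_
    have hdeg : s.degree = ∑ i, s i := Finsupp.degree_eq_sum s
    rw [Polynomial.coeff_C_mul]
    split_ifs with h
    · rw [← h, hdeg, hpc, eval_monomial, Finsupp.prod_fintype _ _ (fun _ => pow_zero _)]
      simp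
    · rw [Polynomial.coeff_eq_zero_of_natDegree_lt, mul_zero]
      refine (hpd s).trans_lt (lt_of_le_of_ne (hle s hs) ?_)
      rwa [← hdeg]

open MvPolynomial in
lemma reduce_step {K A : Type*} [Field K] [CharZero K] [CommRing A] [Algebra K A] {m : ℕ}
    (y : Fin (m+1) → A) (f : MvPolynomial (Fin (m+1)) K) (hf : f ≠ 0) (hy : aeval y f = 0) :
    ∃ z : Fin m → A, (∀ i, z i ∈ Submodule.span K (Set.range y)) ∧
      ∀ i, IsIntegral (Algebra.adjoin K (Set.range z)) (y i) := by
  classical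
  have hfD : homogeneousComponent f.totalDegree f ≠ 0 := by
    have hne : f.support.Nonempty := by rwa [MvPolynomial.support_nonempty]
    obtain ⟨s, hs, hsup⟩ := Finset.exists_mem_eq_sup f.support hne (fun s => s.sum fun _ e => e)
    have hdeg : s.degree = f.totalDegree := by
      rw [totalDegree, hsup]
      rfl
    intro h0
    have h1 := congrArg (coeff s) h0
    rw [coeff_homogeneousComponent, if_pos hdeg, coeff_zero] at h1
    exact (mem_support_iff.1 hs) h1
  have : Infinite K := inferInstance
  obtain ⟨b, hb⟩ : ∃ b : Fin (m+1) → K,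
      eval b (X 0 * homogeneousComponent f.totalDegree f) ≠ 0 := by
    by_contra hcon
    push Not at hcon
    exact mul_ne_zero (X_ne_zero 0) hfD (MvPolynomial.funext fun b => by rw [hcon b, map_zero])
  rw [map_mul, eval_X] at hb
  have hb0 : b 0 ≠ 0 := left_ne_zero_of_mul hb
  have hbf := right_ne_zero_of_mul hb
  set w : A := (b 0)⁻¹ • y 0 with hw
  set z' : Fin (m+1) → A := fun i => y i - b i • w with hz'
  have hz0 : z' 0 = 0 := by
    simp only [hz', hw]
    rw [smul_smul, mul_inv_cancel₀ hb0, one_smul, sub_self]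
  let z : Fin m → A := fun i => z' i.succ
  refine ⟨z, ?_, ?_⟩
  · intro i
    refine Submodule.sub_mem _ (Submodule.subset_span ⟨_, rfl⟩)
      (Submodule.smul_mem _ _ (Submodule.smul_mem _ _ (Submodule.subset_span ⟨_, rfl⟩)))
  set S := Algebra.adjoin K (Set.range z) with hS
  have hzS : ∀ i, z' i ∈ S := by
    intro i
    refine Fin.cases ?_ (fun j => ?_) i
    · rw [hz0]; exact zero_mem _
    · exact Algebra.subset_adjoin ⟨j, rfl⟩
  let zS : Fin (m+1) → S := fun i => ⟨z' i, hzS i⟩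
  obtain ⟨h1, h2⟩ := coeff_subst zS b f
  set p : Polynomial S :=
    aeval (fun i => Polynomial.C (zS i) + Polynomial.C (algebraMap K S (b i)) * Polynomial.X) f
    with hp
  have hpw : Polynomial.aeval w p = 0 := by
    have : Polynomial.aeval w p = ((Polynomial.aeval w).restrictScalars K : Polynomial S →ₐ[K] A) p :=
      rfl
    rw [this, hp, ← AlgHom.comp_apply, comp_aeval, ← hy]
    congr 2
    funext i
    simp only [AlgHom.coe_restrictScalars', map_add, map_mul, Polynomial.aeval_C,
      Polynomial.aeval_X]
    rw [← IsScalarTower.algebraMap_apply K S A, ← Algebra.smul_def]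
    change y i - b i • w + b i • w = y i
    abel
  have hwint : IsIntegral S w := by
    refine ⟨Polynomial.C (algebraMap K S (eval b (homogeneousComponent f.totalDegree f))⁻¹) * p,
      Polynomial.monic_of_natDegree_le_of_coeff_eq_one f.totalDegree
        ((Polynomial.natDegree_C_mul_le _ _).trans h1) ?_, ?_⟩
    · rw [Polynomial.coeff_C_mul, h2, ← map_mul, inv_mul_cancel₀ hbf, map_one]
    · rw [← Polynomial.aeval_def, map_mul, hpw, mul_zero]
  intro i
  have hyi : y i = z' i + algebraMap K A (b i) * w := by
    rw [← Algebra.smul_def]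
    simp [hz']
  rw [hyi]
  refine IsIntegral.add ?_ (IsIntegral.mul ?_ hwint)
  · exact isIntegral_algebraMap (R := S) (x := zS i)
  · rw [IsScalarTower.algebraMap_apply K S A]
    exact isIntegral_algebraMap

open MvPolynomial in
lemma integral_step {K A : Type*} [Field K] [CharZero K] [CommRing A] [Algebra K A] {m : ℕ}
    (y : Fin (m+1) → A) (hyInt : (aeval y : MvPolynomial (Fin (m+1)) K →ₐ[K] A).toRingHom.IsIntegral)
    (hinj : ¬ Function.Injective (aeval y : MvPolynomial (Fin (m+1)) K →ₐ[K] A)) :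
    ∃ z : Fin m → A, (∀ i, z i ∈ Submodule.span K (Set.range y)) ∧
      (aeval z : MvPolynomial (Fin m) K →ₐ[K] A).toRingHom.IsIntegral := by
  rw [injective_iff_map_eq_zero] at hinj
  push Not at hinj
  obtain ⟨f, hy, hf⟩ := hinj
  obtain ⟨z, hz, hzi⟩ := reduce_step y f hf hy
  refine ⟨z, hz, ?_⟩
  rw [Algebra.adjoin_range_eq_range_aeval] at hzi
  set S := (aeval z : MvPolynomial (Fin m) K →ₐ[K] A).range with hS
  let g : MvPolynomial (Fin (m+1)) K →ₐ[K] integralClosure S A :=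
    aeval (fun i => (⟨y i, hzi i⟩ : integralClosure S A))
  have hcomp : (aeval y : MvPolynomial (Fin (m+1)) K →ₐ[K] A).toRingHom =
      (algebraMap (integralClosure S A) A).comp g.toRingHom := by
    have : (aeval y : MvPolynomial (Fin (m+1)) K →ₐ[K] A) =
        ((integralClosure S A).val.restrictScalars K).comp g := by
      apply MvPolynomial.algHom_ext
      intro i
      simp [g]
    rw [this]
    rfl
  have h1 : (algebraMap (integralClosure S A) A).IsIntegral := by
    rw [hcomp] at hyInt
    exact RingHom.IsIntegral.tower_top _ _ hyInt
  have h2 : Algebra.IsIntegral (integralClosure S A) A := ⟨h1⟩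
  have h3 : Algebra.IsIntegral S A := Algebra.IsIntegral.trans (integralClosure S A)
  have h4 : (aeval z : MvPolynomial (Fin m) K →ₐ[K] A).toRingHom =
      (algebraMap S A).comp (aeval z : MvPolynomial (Fin m) K →ₐ[K] A).rangeRestrict.toRingHom :=
    rfl
  rw [h4]
  exact RingHom.IsIntegral.trans _ _
    (RingHom.isIntegral_of_surjective _ (AlgHom.rangeRestrict_surjective _)) h3.1

lemma dim_le_of_integral {R S : Type*} [CommRing R] [CommRing S] [Algebra R S]
    [Algebra.IsIntegral R S] (hinj : Function.Injective (algebraMap R S)) :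
    ringKrullDim R ≤ ringKrullDim S := by
  refine iSup_le fun l => ?_
  have : FaithfulSMul R S := (faithfulSMul_iff_algebraMap_injective R S).2 hinj
  obtain ⟨P, hP, hPo⟩ := (inferInstance : Nonempty (Ideal.primesOver (RelSeries.head l).asIdeal S))
  obtain ⟨L, hL, -⟩ := Ideal.exists_ltSeries_of_hasGoingUp l P
  rw [← hL]
  exact le_iSup (fun l : LTSeries (PrimeSpectrum S) => ((l.length : ℕ) : WithBot ℕ∞)) L

open MvPolynomial in
lemma exists_params {K A : Type*} [Field K] [CharZero K] [CommRing A] [Algebra K A]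
    (V : Submodule K A) (hV : V.FG) (hgen : Algebra.adjoin K (V : Set A) = ⊤)
    (d : ℕ) (hd : ringKrullDim A = d) :
    ∃ θ : Fin d → A, (∀ i, θ i ∈ V) ∧ Module.Finite K (A ⧸ Ideal.span (Set.range θ)) := by
  classical
  have hex : ∃ m, ∃ y : Fin m → A, (∀ i, y i ∈ V) ∧
      (aeval y : MvPolynomial (Fin m) K →ₐ[K] A).toRingHom.IsIntegral := by
    obtain ⟨n, s, hs⟩ := Submodule.fg_iff_exists_fin_generating_family.1 hV
    refine ⟨n, s, fun i => hs ▸ Submodule.subset_span ⟨i, rfl⟩, ?_⟩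
    apply RingHom.isIntegral_of_surjective
    change Function.Surjective (aeval s : MvPolynomial (Fin n) K →ₐ[K] A)
    rw [← AlgHom.range_eq_top, ← Algebra.adjoin_range_eq_range_aeval, ← hgen, ← hs,
      Algebra.adjoin_span]
  obtain ⟨y, hyV, hyInt⟩ := Nat.find_spec hex
  have hmin := fun k => Nat.find_min hex (m := k)
  generalize Nat.find hex = m at y hyV hyInt hmin
  have hinj : Function.Injective (aeval y : MvPolynomial (Fin m) K →ₐ[K] A) := by
    by_contra hni
    cases m with
    | zero =>
      have hnt : Nontrivial A := by
        rw [← not_subsingleton_iff_nontrivial]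
        intro hs
        rw [ringKrullDim_eq_bot_of_subsingleton] at hd
        exact WithBot.bot_ne_coe hd
      apply hni
      have he := (MvPolynomial.isEmptyAlgEquiv K (Fin 0))
      have : (aeval y : MvPolynomial (Fin 0) K →ₐ[K] A) =
        (Algebra.ofId K A).comp (MvPolynomial.isEmptyAlgEquiv K (Fin 0)).toAlgHom := by
        apply MvPolynomial.algHom_ext
        intro i
        exact i.elim0
      rw [this]
      exact (FaithfulSMul.algebraMap_injective K A).comp
        (MvPolynomial.isEmptyAlgEquiv K (Fin 0)).injective
    | succ m =>
      obtain ⟨z, hz, hzi⟩ := integral_step y hyInt hni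
      refine hmin m (Nat.lt_succ_self m) ⟨z, fun i => ?_, hzi⟩
      refine (Submodule.span_le.2 ?_) (hz i)
      rintro _ ⟨j, rfl⟩
      exact hyV j
  have hmd : m ≤ d := by
    let : Algebra (MvPolynomial (Fin m) K) A :=
      (aeval y : MvPolynomial (Fin m) K →ₐ[K] A).toRingHom.toAlgebra
    have : Algebra.IsIntegral (MvPolynomial (Fin m) K) A := ⟨hyInt⟩
    have h1 := dim_le_of_integral (R := MvPolynomial (Fin m) K) (S := A) hinj
    rw [MvPolynomial.ringKrullDim_of_isNoetherianRing, ringKrullDim_eq_zero_of_field, hd,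
      zero_add, Nat.card_eq_fintype_card, Fintype.card_fin] at h1
    exact_mod_cast h1
  let θ : Fin d → A := fun j => if h : (j : ℕ) < m then y ⟨j, h⟩ else 0
  refine ⟨θ, ?_, ?_⟩
  · intro j
    simp only [θ]
    split_ifs with h
    · exact hyV _
    · exact zero_mem _
  set I := Ideal.span (Set.range θ) with hI
  have hyI : ∀ i, y i ∈ I := by
    intro i
    refine Ideal.subset_span ⟨⟨i, i.2.trans_le hmd⟩, ?_⟩
    simp [θ]
  have h1 : ((Ideal.Quotient.mk I).comp
      (aeval y : MvPolynomial (Fin m) K →ₐ[K] A).toRingHom).IsIntegral :=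
    RingHom.IsIntegral.trans _ _ hyInt
      (RingHom.isIntegral_of_surjective _ Ideal.Quotient.mk_surjective)
  have h2 : (Ideal.Quotient.mk I).comp (aeval y : MvPolynomial (Fin m) K →ₐ[K] A).toRingHom =
      (algebraMap K (A ⧸ I)).comp constantCoeff := by
    apply MvPolynomial.ringHom_ext
    · intro c
      simp
    · intro i
      simp [Ideal.Quotient.eq_zero_iff_mem, hyI]
  rw [h2] at h1
  have h3 : Algebra.IsIntegral K (A ⧸ I) := ⟨RingHom.IsIntegral.tower_top _ _ h1⟩
  have hft : Algebra.FiniteType K A := by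
    obtain ⟨n, s, hs⟩ := Submodule.fg_iff_exists_fin_generating_family.1 hV
    refine ⟨⟨(Set.finite_range s).toFinset, ?_⟩⟩
    rw [Set.Finite.coe_toFinset, ← Algebra.adjoin_span, hs, hgen]
  have h4 : Algebra.FiniteType K (A ⧸ I) :=
    Algebra.FiniteType.of_surjective (Ideal.Quotient.mkₐ K I) (Ideal.Quotient.mkₐ_surjective K I)
  exact Algebra.IsIntegral.finite
end VerFlag

/-- **Theorem 1.3(i), Kubitzke–Murai.**
Let `K` be a field of characteristic `0` and `A` a Cohen-Macaulay standard graded `K`-algebra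
of Krull dimension `d` with `h`-polynomial `h = h_A(t)` (so that
`Hilb(A,t) = h/(1-t)^d`), and let `hr = h_{A^⟨r⟩}(t)` be the `h`-polynomial of the `r`-th
Veronese subalgebra `A^⟨r⟩ = ⊕_i A_{ir}` (whose Hilbert series is
`∑_i dim_K A_{ir} tⁱ` and whose Krull dimension is again `d`).
If `r ≥ (deg h_A(t) + 1)/2`, then `h_{A^⟨r⟩}(t)` is the `f`-polynomial of a flag simplicial
complex `Δ`: `∅ ∈ Δ`, `Δ` is closed under subsets, every minimal non-face of `Δ` has at most
two elements, and for every `i` the coefficient of `tⁱ` in `h_{A^⟨r⟩}(t)` is the number of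
faces of `Δ` of cardinality `i`. -/
theorem veronese_h_polynomial_flag
    (K : Type*) [Field K] [CharZero K]
    (A : Type*) [CommRing A] [Algebra K A]
    (𝒜 : ℕ → Submodule K A) [GradedAlgebra 𝒜]
    (hstd : ∀ i, 𝒜 i = 𝒜 1 ^ i)
    (hfin : ∀ i, Module.Finite K (𝒜 i))
    (d : ℕ) (hdim : ringKrullDim A = d)
    (hCM : ∀ θ' : Fin d → A, (∀ j, θ' j ∈ 𝒜 1) →
      Module.Finite K (A ⧸ Ideal.span (Set.range θ')) →
      RingTheory.Sequence.IsRegular A (List.ofFn θ'))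
    (h : Polynomial ℤ)
    (hh : (h : PowerSeries ℤ) =
      (PowerSeries.mk fun i => (Module.finrank K (𝒜 i) : ℤ)) * (1 - PowerSeries.X) ^ d)
    (r : ℕ) (hr : 1 ≤ r) (hrbound : h.natDegree + 1 ≤ 2 * r)
    (hrpoly : Polynomial ℤ)
    (hhr : (hrpoly : PowerSeries ℤ) =
      (PowerSeries.mk fun i => (Module.finrank K (𝒜 (i * r)) : ℤ)) * (1 - PowerSeries.X) ^ d) :
    ∃ (n : ℕ) (Δ : Finset (Finset (Fin n))),
      ∅ ∈ Δ ∧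
      (∀ F ∈ Δ, ∀ G ⊆ F, G ∈ Δ) ∧
      (∀ F : Finset (Fin n), F ∉ Δ → (∀ G, G ⊂ F → G ∈ Δ) → F.card ≤ 2) ∧
      (∀ i : ℕ, hrpoly.coeff i = ((Δ.filter fun F => F.card = i).card : ℤ)) := by
  classical
  have hnt : Nontrivial A := by
    rw [← not_subsingleton_iff_nontrivial]
    intro hs
    rw [ringKrullDim_eq_bot_of_subsingleton] at hdim
    exact WithBot.bot_ne_coe hdim
  have hgen : Algebra.adjoin K (𝒜 1 : Set A) = ⊤ := by
    rw [eq_top_iff]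
    intro a _
    rw [← DirectSum.sum_support_decompose 𝒜 a]
    refine sum_mem fun i hi => ?_
    clear hi
    have h1 : (DirectSum.decompose 𝒜 a i : A) ∈ 𝒜 1 ^ i := by
      rw [← hstd i]
      exact (DirectSum.decompose 𝒜 a i).2
    have h2 : 𝒜 1 ^ i ≤ Subalgebra.toSubmodule (Algebra.adjoin K (𝒜 1 : Set A)) := by
      clear h1
      induction i with
      | zero =>
        rw [pow_zero, Submodule.one_le]
        exact one_mem (Algebra.adjoin K (𝒜 1 : Set A))
      | succ i ih =>
        rw [pow_succ, Submodule.mul_le]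
        intro x hx y hy
        exact (Algebra.adjoin K (𝒜 1 : Set A)).mul_mem (ih hx) (Algebra.subset_adjoin hy)
    exact h2 h1
  obtain ⟨θ, hθ, hθfin⟩ := VerFlag.exists_params (𝒜 1)
    (Module.Finite.iff_fg.1 (hfin 1)) hgen d hdim
  have hreg := hCM θ hθ hθfin
  have hHS := VerFlag.HS_final 𝒜 hfin (List.ofFn θ)
    (by
      intro x hx
      obtain ⟨j, rfl⟩ := (List.mem_ofFn' θ x).1 hx
      exact hθ j) hreg.toIsWeaklyRegular
  rw [List.length_ofFn, ← hh] at hHS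
  set I := Ideal.ofList (List.ofFn θ) with hI
  have hcoeff : ∀ i, h.coeff i = (Module.finrank K (VerFlag.Q 𝒜 I i) : ℤ) := by
    intro i
    have := congrArg (PowerSeries.coeff i) hHS
    rw [Polynomial.coeff_coe] at this
    rw [← this, VerFlag.HS, PowerSeries.coeff_mk]
  let H : ℕ → ℕ := fun i => Module.finrank K (VerFlag.Q 𝒜 I i)
  have H0 : H 0 = 1 := by
    have h1 := congrArg (PowerSeries.coeff 0) hh
    rw [Polynomial.coeff_coe, hcoeff 0, PowerSeries.coeff_zero_eq_constantCoeff_apply, map_mul,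
      map_pow, map_sub, map_one, PowerSeries.constantCoeff_X, sub_zero, one_pow, mul_one,
      ← PowerSeries.coeff_zero_eq_constantCoeff_apply, PowerSeries.coeff_mk] at h1
    have h2 : Module.finrank K (𝒜 0) = 1 := by
      rw [hstd 0, pow_zero, Submodule.one_eq_span]
      exact finrank_span_singleton one_ne_zero
    rw [h2] at h1
    exact_mod_cast h1
  have Hbig : ∀ j, 2 * r ≤ j → H j = 0 := by
    intro j hj
    have h1 := hcoeff j
    rw [Polynomial.coeff_eq_zero_of_natDegree_lt (by omega)] at h1
    exact_mod_cast h1.symm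
  obtain ⟨n, Δ, h1, h2, h3, h4⟩ := VerFlag.flag_exists hr H0 Hbig
    (fun k _ _ => VerFlag.finrank_mul_le 𝒜 hstd hfin I r k) d
  refine ⟨n, Δ, h1, h2, h3, fun i => ?_⟩
  rw [h4 i, VerFlag.coeff_veronese (fun i => (Module.finrank K (𝒜 i) : ℤ)) d r hr h hrpoly hh hhr i]
  push_cast
  refine Finset.sum_congr rfl fun m _ => ?_
  split_ifs
  · exact hcoeff _
  · rfl
end

section
/- Let K be a field of characteristic 0 and let A be a Cohen-Macaulay standard graded K-algebra with h-polynomial h_A(t). If r ≥ deg h_A(t), then the g-polynomial g_{A^⟨r⟩}(t) of the r-th Veronese subalgebra A^⟨r⟩ is the f-polynomial of a simplicial complex. -/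
/-- words in the letters `0..d-1` with ballot condition -/
def vgW (r : ℕ) : ℕ → Finset (List ℤ)
  | 0 => {[]}
  | d + 1 => (((vgW r d) ×ˢ Finset.range r).filter
      (fun p => 2 * p.1.length + p.2 ≤ (d + 1) * (r - 1))).image
      (fun p => p.1 ++ List.replicate p.2 (d : ℤ))

lemma vgW_succ_mem {r d : ℕ} {w : List ℤ} : w ∈ vgW r (d + 1) ↔
    ∃ u b, u ∈ vgW r d ∧ b < r ∧ 2 * u.length + b ≤ (d + 1) * (r - 1) ∧
      u ++ List.replicate b (d : ℤ) = w := by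
  simp only [vgW, Finset.mem_image, Finset.mem_filter, Finset.mem_product, Finset.mem_range,
    Prod.exists]
  constructor
  · rintro ⟨u, b, ⟨⟨h1, h2⟩, h3⟩, h4⟩; exact ⟨u, b, h1, h2, h3, h4⟩
  · rintro ⟨u, b, h1, h2, h3, h4⟩; exact ⟨u, b, ⟨⟨h1, h2⟩, h3⟩, h4⟩

lemma vgW_bounds {r d : ℕ} {w : List ℤ} (hw : w ∈ vgW r d) :
    ∀ x ∈ w, 0 ≤ x ∧ x < d := by
  induction d generalizing w with
  | zero => simp [vgW] at hw; subst hw; simp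
  | succ d ih =>
    obtain ⟨u, b, hu, -, -, rfl⟩ := vgW_succ_mem.1 hw
    intro x hx
    rcases List.mem_append.1 hx with hx | hx
    · have := ih hu x hx; push_cast; omega
    · have := List.eq_of_mem_replicate hx; push_cast; omega

lemma vgW_sorted {r d : ℕ} {w : List ℤ} (hw : w ∈ vgW r d) : w.Pairwise (· ≤ ·) := by
  induction d generalizing w with
  | zero => simp [vgW] at hw; subst hw; simp
  | succ d ih =>
    obtain ⟨u, b, hu, -, -, rfl⟩ := vgW_succ_mem.1 hw
    rw [List.pairwise_append]
    refine ⟨ih hu, ?_, ?_⟩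
    · simp [List.pairwise_replicate]
    · intro x hx y hy
      have := vgW_bounds hu x hx
      have := List.eq_of_mem_replicate hy
      omega

lemma vgW_count {r d : ℕ} (hr : 1 ≤ r) {w : List ℤ} (hw : w ∈ vgW r d) (x : ℤ) :
    w.count x < r := by
  induction d generalizing w with
  | zero => simp [vgW] at hw; subst hw; simp; omega
  | succ d ih =>
    obtain ⟨u, b, hu, hb, -, rfl⟩ := vgW_succ_mem.1 hw
    rw [List.count_append, List.count_replicate]
    by_cases hx : (d : ℤ) = x
    · have : u.count x = 0 := by
        rw [List.count_eq_zero]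
        intro h
        have := vgW_bounds hu x h
        omega
      simp [hx, this, hb]
    · simp [hx, ih hu]

lemma vgW_sublist {r d : ℕ} {w v : List ℤ} (hw : w ∈ vgW r d) (hv : v.Sublist w) :
    v ∈ vgW r d := by
  induction d generalizing w v with
  | zero => simp [vgW] at hw; subst hw; simp at hv; subst hv; simp [vgW]
  | succ d ih =>
    obtain ⟨u, b, hu, hb, hc, rfl⟩ := vgW_succ_mem.1 hw
    obtain ⟨v1, v2, rfl, h1, h2⟩ := List.sublist_append_iff.1 hv
    obtain ⟨b', hb', rfl⟩ := List.sublist_replicate_iff.1 h2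
    have := h1.length_le
    exact vgW_succ_mem.2 ⟨v1, b', ih hu h1, by omega, by omega, rfl⟩

/-- number of words of length k (integer index) -/
def vgl (r d : ℕ) (k : ℤ) : ℤ := (((vgW r d).filter (fun w => (w.length : ℤ) = k)).card : ℤ)

lemma vgl_succ (r d : ℕ) (k : ℤ) : vgl r (d + 1) k =
    ∑ b ∈ Finset.range r, if 2 * k - b ≤ ((d + 1) * (r - 1) : ℕ) then vgl r d (k - b) else 0 := by
  classical
  have key : (vgW r (d+1)).filter (fun w => (w.length : ℤ) = k) =
      ((Finset.range r).filter (fun b : ℕ => 2 * k - b ≤ ((d + 1) * (r - 1) : ℕ))).biUnion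
        (fun b => ((vgW r d).filter (fun w => (w.length : ℤ) = k - b)).image
          (fun u => u ++ List.replicate b (d : ℤ))) := by
    ext w
    simp only [Finset.mem_filter, vgW_succ_mem, Finset.mem_biUnion, Finset.mem_range,
      Finset.mem_image]
    constructor
    · rintro ⟨⟨u, b, hu, hb, hc, rfl⟩, hl⟩
      simp only [List.length_append, List.length_replicate] at hl
      push_cast at hl
      exact ⟨b, ⟨hb, by omega⟩, u, ⟨hu, by omega⟩, rfl⟩
    · rintro ⟨b, ⟨hb, hc⟩, u, ⟨hu, hl⟩, rfl⟩
      refine ⟨⟨u, b, hu, hb, by omega, rfl⟩, ?_⟩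
      simp only [List.length_append, List.length_replicate]
      push_cast
      omega
  unfold vgl
  rw [key, Finset.card_biUnion, Finset.sum_filter]
  · push_cast
    refine Finset.sum_congr rfl fun b _ => ?_
    split_ifs
    · rw [Finset.card_image_of_injective _ (fun a b h => List.append_cancel_right h)]
    · rfl
  · intro b _ b' _ hbb
    rw [Function.onFun, Finset.disjoint_left]
    intro w hw hw'
    simp only [Finset.mem_image, Finset.mem_filter] at hw hw'
    obtain ⟨u, ⟨hu, -⟩, rfl⟩ := hw
    obtain ⟨u', ⟨hu', -⟩, he⟩ := hw'
    apply hbb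
    have h0 : ∀ v ∈ vgW r d, v.count (d : ℤ) = 0 := by
      intro v hv
      rw [List.count_eq_zero]
      intro h
      have := vgW_bounds hv _ h
      omega
    have := congrArg (List.count (d : ℤ)) he
    simpa [List.count_append, h0 u hu, h0 u' hu'] using this.symm

/-- coefficients of `(1+..+t^(r-1))^d (1-t^r)` -/
def vge (r : ℕ) : ℕ → ℤ → ℤ
  | 0, k => (if k = 0 then 1 else 0) - (if k = r then 1 else 0)
  | d + 1, k => ∑ b ∈ Finset.range r, vge r d (k - b)

lemma vge_neg (r d : ℕ) (k : ℤ) (hk : k < 0) : vge r d k = 0 := by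
  induction d generalizing k with
  | zero => simp only [vge]; rw [if_neg (by omega), if_neg (by omega)]; rfl
  | succ d ih =>
    simp only [vge]
    exact Finset.sum_eq_zero fun b _ => ih _ (by omega)

lemma vge_antisymm (r d : ℕ) (hr : 1 ≤ r) (k : ℤ) :
    vge r d (((d + 1) * (r - 1) : ℕ) + 1 - k) = - vge r d k := by
  induction d generalizing k with
  | zero =>
    simp only [vge]
    have : (((0 + 1) * (r - 1) : ℕ) : ℤ) = r - 1 := by push_cast [hr]; ring
    rw [this]
    split_ifs <;> omega
  | succ d ih =>
    simp only [vge]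
    rw [← Finset.sum_range_reflect, ← Finset.sum_neg_distrib]
    refine Finset.sum_congr rfl fun b hb => ?_
    rw [← ih]
    congr 1
    have := Finset.mem_range.1 hb
    have h2 : ((r - 1 - b : ℕ) : ℤ) = r - 1 - b := by omega
    rw [h2]
    push_cast [hr]
    ring

lemma vgl_zero_of_large (r d : ℕ) (hr : 1 ≤ r) (k : ℤ)
    (hk : (((d + 1) * (r - 1) : ℕ) : ℤ) < 2 * k) : vgl r d k = 0 := by
  cases d with
  | zero =>
    unfold vgl
    simp [vgW, Finset.filter_singleton]
    omega
  | succ d =>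
    rw [vgl_succ]
    refine Finset.sum_eq_zero fun b hb => if_neg ?_
    have := Finset.mem_range.1 hb
    push_cast [hr] at hk ⊢
    intro h
    have : (b : ℤ) ≤ r - 1 := by omega
    nlinarith

lemma vge_symm_sum (r d : ℕ) (hr : 1 ≤ r) (k : ℤ) :
    ∑ x ∈ Finset.Icc ((((d + 1) * (r - 1) : ℕ) : ℤ) + 1 - k) k, vge r d x = 0 := by
  have : ∑ x ∈ Finset.Icc ((((d + 1) * (r - 1) : ℕ) : ℤ) + 1 - k) k, vge r d x =
     ∑ x ∈ Finset.Icc ((((d + 1) * (r - 1) : ℕ) : ℤ) + 1 - k) k, - vge r d x := by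
    refine Finset.sum_bij' (fun x _ => (((d + 1) * (r - 1) : ℕ) : ℤ) + 1 - x)
      (fun x _ => (((d + 1) * (r - 1) : ℕ) : ℤ) + 1 - x) ?_ ?_ ?_ ?_ ?_
    · intro x hx; simp only [Finset.mem_Icc] at hx ⊢; omega
    · intro x hx; simp only [Finset.mem_Icc] at hx ⊢; omega
    · intro x hx; omega
    · intro x hx; omega
    · intro x hx; rw [vge_antisymm r d hr]; ring
  rw [Finset.sum_neg_distrib] at this
  omega

lemma vge_sum_range (f : ℤ → ℤ) (r : ℕ) (k : ℤ) :
    ∑ b ∈ Finset.range r, f (k - b) = ∑ x ∈ Finset.Icc (k - r + 1) k, f x := by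
  refine Finset.sum_bij' (fun b _ => k - b) (fun x _ => (k - x).toNat) ?_ ?_ ?_ ?_ ?_
  · intro x hx; simp only [Finset.mem_range, Finset.mem_Icc] at hx ⊢; omega
  · intro x hx; simp only [Finset.mem_range, Finset.mem_Icc] at hx ⊢; omega
  · intro x hx; simp only [Finset.mem_range] at hx ⊢; omega
  · intro x hx; simp only [Finset.mem_Icc] at hx ⊢; omega
  · intro x hx; rfl

lemma vgl_eq_vge (r d : ℕ) (hr : 1 ≤ r) (k : ℤ)
    (hk : 2 * k ≤ ((d + 1) * (r - 1) : ℕ) + 1) : vgl r d k = vge r d k := by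
  induction d generalizing k with
  | zero =>
    have : (((0 + 1) * (r - 1) : ℕ) : ℤ) = r - 1 := by push_cast [hr]; ring
    rw [this] at hk
    simp only [vge]
    rw [if_neg (show ¬ k = r by omega)]
    unfold vgl
    by_cases h : k = 0
    · subst h; simp [vgW, Finset.filter_singleton]
    · have h' : ¬ 0 = k := fun e => h e.symm
      simp [vgW, Finset.filter_singleton, h, h']
  | succ d ih =>
    rw [vgl_succ]
    simp only [vge]
    set N : ℤ := (((d + 1) * (r - 1) : ℕ) : ℤ) with hN
    have hk' : 2 * k ≤ N + r := by
      rw [hN]; push_cast [hr] at hk ⊢; linarith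
    have e1 : ∀ b ∈ Finset.range r, (if 2 * k - b ≤ N then vgl r d (k - b) else 0) =
        (fun x => if x + k ≤ N then vge r d x else 0) (k - b) := by
      intro b _
      have : (2 * k - b ≤ N) ↔ (k - b + k ≤ N) := by omega
      simp only [this]
      split_ifs with h
      · exact ih _ (by omega)
      · rfl
    rw [Finset.sum_congr rfl e1, vge_sum_range (fun x => if x + k ≤ N then vge r d x else 0),
      vge_sum_range (fun x => vge r d x), ← Finset.sum_filter]
    rw [← Finset.sum_filter_add_sum_filter_not (Finset.Icc (k - r + 1) k) (fun x => x + k ≤ N)]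
    have : (Finset.Icc (k - r + 1) k).filter (fun x => ¬ x + k ≤ N) =
        Finset.Icc (N + 1 - k) k := by
      ext x; simp only [Finset.mem_filter, Finset.mem_Icc]; omega
    rw [this, vge_symm_sum r d hr k, add_zero]

/-- labelled words -/
def vgZ (r d s : ℕ) (H : ℕ → ℕ) : Finset (List ℤ) :=
  (Finset.range (s + 1)).biUnion fun j => (Finset.range (H j)).biUnion fun q =>
    (vgW r d).image fun w => List.replicate j (-(1 + (q : ℤ))) ++ w

lemma vgZ_mem {r d s : ℕ} {H : ℕ → ℕ} {z : List ℤ} : z ∈ vgZ r d s H ↔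
    ∃ j q w, j ≤ s ∧ q < H j ∧ w ∈ vgW r d ∧ List.replicate j (-(1 + (q : ℤ))) ++ w = z := by
  simp only [vgZ, Finset.mem_biUnion, Finset.mem_range, Finset.mem_image]
  constructor
  · rintro ⟨j, hj, q, hq, w, hw, e⟩; exact ⟨j, q, w, by omega, hq, hw, e⟩
  · rintro ⟨j, q, w, hj, hq, hw, e⟩; exact ⟨j, by omega, q, hq, w, hw, e⟩

lemma vgZ_inj {r d j j' q q' : ℕ} {w w' : List ℤ} (hw : w ∈ vgW r d) (hw' : w' ∈ vgW r d)
    (e : List.replicate j (-(1 + (q : ℤ))) ++ w = List.replicate j' (-(1 + (q' : ℤ))) ++ w') :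
    j = j' ∧ w = w' ∧ (j ≠ 0 → q = q') := by
  have h0 : ∀ v ∈ vgW r d, v.countP (fun x => decide (x < 0)) = 0 := by
    intro v hv
    rw [List.countP_eq_zero]
    intro x hx
    have := vgW_bounds hv _ hx
    simp; omega
  have hneg : ∀ n q : ℕ, (List.replicate n (-(1 + (q : ℤ)))).countP
      (fun x => decide (x < 0)) = n := by
    intro n q
    rw [List.countP_replicate, if_pos]
    simp; omega
  have h1 := congrArg (List.countP (fun x => decide (x < 0))) e
  rw [List.countP_append, List.countP_append, h0 w hw, h0 w' hw', hneg, hneg] at h1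
  have h2 : j = j' := by simpa using h1
  subst h2
  obtain ⟨e1, e2⟩ := List.append_inj e (by simp)
  refine ⟨rfl, e2, fun hj => ?_⟩
  have := (List.replicate_right_inj hj).1 e1
  omega

lemma vgZ_card {r d s : ℕ} {H : ℕ → ℕ} (H0 : H 0 = 1) (k : ℤ) :
    (((vgZ r d s H).filter fun z => (z.length : ℤ) = k).card : ℤ) =
      ∑ j ∈ Finset.range (s + 1), (H j : ℤ) * vgl r d (k - j) := by
  classical
  have key : (vgZ r d s H).filter (fun z => (z.length : ℤ) = k) =
      (Finset.range (s + 1)).biUnion fun j => (Finset.range (H j)).biUnion fun q =>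
      ((vgW r d).filter (fun w => (w.length : ℤ) = k - j)).image
        fun w => List.replicate j (-(1 + (q : ℤ))) ++ w := by
    ext z
    simp only [Finset.mem_filter, vgZ, Finset.mem_biUnion, Finset.mem_range, Finset.mem_image]
    constructor
    · rintro ⟨⟨j, hj, q, hq, w, hw, rfl⟩, hl⟩
      simp only [List.length_append, List.length_replicate] at hl
      push_cast at hl
      exact ⟨j, hj, q, hq, w, ⟨hw, by omega⟩, rfl⟩
    · rintro ⟨j, hj, q, hq, w, ⟨hw, hl⟩, rfl⟩
      refine ⟨⟨j, hj, q, hq, w, hw, rfl⟩, ?_⟩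
      simp only [List.length_append, List.length_replicate]
      push_cast
      omega
  rw [key, Finset.card_biUnion]
  · push_cast
    refine Finset.sum_congr rfl fun j _ => ?_
    rw [Finset.card_biUnion]
    · have : ∀ q ∈ Finset.range (H j), (((vgW r d).filter (fun w => (w.length : ℤ) = k - j)).image
          fun w => List.replicate j (-(1 + (q : ℤ))) ++ w).card =
          ((vgW r d).filter (fun w => (w.length : ℤ) = k - j)).card := fun q _ =>
        Finset.card_image_of_injective _ (fun a b h => List.append_cancel_left h)
      rw [Finset.sum_congr rfl this]
      simp [vgl]
    · intro q hq q' hq' hne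
      rw [Function.onFun, Finset.disjoint_left]
      intro z hz hz'
      simp only [Finset.mem_image, Finset.mem_filter] at hz hz'
      obtain ⟨w, ⟨hw, -⟩, rfl⟩ := hz
      obtain ⟨w', ⟨hw', -⟩, e⟩ := hz'
      obtain ⟨-, -, h3⟩ := vgZ_inj hw' hw e
      by_cases hj : j = 0
      · subst hj
        rw [H0] at hq hq'
        simp at hq hq'
        omega
      · exact hne (h3 hj).symm
  · intro j _ j' _ hne
    rw [Function.onFun, Finset.disjoint_left]
    intro z hz hz'
    simp only [Finset.mem_biUnion, Finset.mem_image, Finset.mem_filter] at hz hz'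
    obtain ⟨q, -, w, ⟨hw, -⟩, rfl⟩ := hz
    obtain ⟨q', -, w', ⟨hw', -⟩, e⟩ := hz'
    exact hne (vgZ_inj hw' hw e).1.symm

lemma vgZ_sorted {r d s : ℕ} {H : ℕ → ℕ} {z : List ℤ} (hz : z ∈ vgZ r d s H) :
    z.Pairwise (· ≤ ·) := by
  obtain ⟨j, q, w, -, -, hw, rfl⟩ := vgZ_mem.1 hz
  rw [List.pairwise_append]
  refine ⟨by simp [List.pairwise_replicate], vgW_sorted hw, ?_⟩
  intro x hx y hy
  have := List.eq_of_mem_replicate hx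
  have := vgW_bounds hw _ hy
  omega

lemma vgZ_count {r d s : ℕ} (hr : 1 ≤ r) (hs : s ≤ r) {H : ℕ → ℕ} {z : List ℤ}
    (hz : z ∈ vgZ r d s H) (x : ℤ) : z.count x < 2 * r := by
  obtain ⟨j, q, w, hj, -, hw, rfl⟩ := vgZ_mem.1 hz
  rw [List.count_append, List.count_replicate]
  have := vgW_count hr hw x
  split_ifs <;> omega

lemma vgZ_sub {r d s : ℕ} (hs : s ≤ r) {H : ℕ → ℕ} (H0 : H 0 = 1) {ls ls' : List (List ℤ)}
    (hlen : ∀ u ∈ ls, u.length = r) (hz : ls.flatten ∈ vgZ r d s H) (hsub : ls'.Sublist ls) :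
    ls'.flatten ∈ vgZ r d s H := by
  have hW : ∀ w ∈ vgW r d, w ∈ vgZ r d s H := fun w hw =>
    vgZ_mem.2 ⟨0, 0, w, by omega, by omega, hw, by simp⟩
  cases ls with
  | nil => simp at hsub; subst hsub; exact hz
  | cons u rest =>
    obtain ⟨j, q, w, hj, hq, hw, e⟩ := vgZ_mem.1 hz
    rw [List.flatten_cons] at e
    have hu : u.length = r := hlen u (by simp)
    obtain ⟨w1, rfl⟩ : ∃ w1, u = List.replicate j (-(1 + (q : ℤ))) ++ w1 := by
      have := List.prefix_of_prefix_length_le (List.prefix_append _ w)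
        (e ▸ List.prefix_append u rest.flatten) (by simp; omega)
      obtain ⟨w1, h⟩ := this
      exact ⟨w1, h.symm⟩
    rw [List.append_assoc] at e
    have e' := List.append_cancel_left e
    subst e'
    rcases List.sublist_cons_iff.1 hsub with h | ⟨t, rfl, h⟩
    · exact hW _ (vgW_sublist hw ((h.flatten).trans (List.sublist_append_right _ _)))
    · rw [List.flatten_cons, List.append_assoc]
      exact vgZ_mem.2 ⟨j, q, _, hj, hq,
        vgW_sublist hw ((List.Sublist.refl _).append h.flatten), rfl⟩

lemma vg_pairwise {r d s : ℕ} {H : ℕ → ℕ} {ls : List (List ℤ)}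
    (hz : ls.flatten ∈ vgZ r d s H) : ls.Pairwise (fun u v => ∀ x ∈ u, ∀ y ∈ v, x ≤ y) :=
  (List.pairwise_flatten.1 (vgZ_sorted hz)).2

lemma vg_nodup {r d s : ℕ} (hr : 1 ≤ r) (hs : s ≤ r) {H : ℕ → ℕ} {ls : List (List ℤ)}
    (hlen : ∀ u ∈ ls, u.length = r) (hz : ls.flatten ∈ vgZ r d s H) : ls.Nodup := by
  rw [List.nodup_iff_sublist]
  intro u hu
  have hul : u.length = r := hlen u (hu.subset (by simp))
  have hp := (vg_pairwise hz).sublist hu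
  simp at hp
  obtain ⟨x, hx⟩ : ∃ x, x ∈ u := List.exists_mem_of_length_pos (by omega)
  have hrep : u = List.replicate r x := by
    rw [List.eq_replicate_iff]
    exact ⟨hul, fun y hy => le_antisymm (hp y hy x hx) (hp x hx y hy)⟩
  have h1 := vgZ_count hr hs hz x
  have h2 := (hu.flatten).count_le x
  simp [List.count_append] at h2
  rw [hrep] at h2
  simp at h2
  omega

lemma vg_unique {r d s : ℕ} (hr : 1 ≤ r) (hs : s ≤ r) {H : ℕ → ℕ} {ls ls' : List (List ℤ)}
    (hlen : ∀ u ∈ ls, u.length = r) (hz : ls.flatten ∈ vgZ r d s H)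
    (hlen' : ∀ u ∈ ls', u.length = r) (hz' : ls'.flatten ∈ vgZ r d s H)
    (h : ls.toFinset = ls'.toFinset) : ls = ls' := by
  have hperm : ls.Perm ls' := (List.perm_ext_iff_of_nodup (vg_nodup hr hs hlen hz)
    (vg_nodup hr hs hlen' hz')).2 (fun a => by
      have := congrArg (fun F => a ∈ F) h
      simpa using this)
  refine hperm.eq_of_pairwise ?_ (vg_pairwise hz) (vg_pairwise hz')
  intro u v hu hv h1 h2
  have hul := hlen u hu
  have hvl := hlen' v hv
  obtain ⟨x, hx⟩ : ∃ x, x ∈ u := List.exists_mem_of_length_pos (by omega)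
  obtain ⟨y, hy⟩ : ∃ y, y ∈ v := List.exists_mem_of_length_pos (by omega)
  have hxv : ∀ y ∈ v, y = x := fun y hy => le_antisymm (h2 y hy x hx) (h1 x hx y hy)
  have hu' : u = List.replicate r x := List.eq_replicate_iff.2 ⟨hul, fun z hz => by
    rw [← hxv y hy]; exact le_antisymm (h1 z hz y hy) (h2 y hy z hz)⟩
  have hv' : v = List.replicate r x := List.eq_replicate_iff.2 ⟨hvl, hxv⟩
  rw [hu', hv']

/-- cut a word in `i` chunks of length `r` -/
def vgchk (r : ℕ) : ℕ → List ℤ → List (List ℤ)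
  | 0, _ => []
  | i + 1, w => w.take r :: vgchk r i (w.drop r)

lemma vgchk_length (r i : ℕ) (w : List ℤ) : (vgchk r i w).length = i := by
  induction i generalizing w with
  | zero => rfl
  | succ i ih => simp [vgchk, ih]

lemma vgchk_spec (r i : ℕ) (w : List ℤ) (hw : w.length = i * r) :
    (∀ u ∈ vgchk r i w, u.length = r) ∧ (vgchk r i w).flatten = w := by
  induction i generalizing w with
  | zero => simp at hw; simp [vgchk, hw]
  | succ i ih =>
    have hw' : w.length = i * r + r := by rw [hw]; ring
    obtain ⟨h1, h2⟩ := ih (w.drop r) (by simp; omega)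
    constructor
    · intro u hu
      simp only [vgchk, List.mem_cons] at hu
      rcases hu with rfl | hu
      · simp; omega
      · exact h1 u hu
    · simp [vgchk, h2]

lemma vgchk_flatten (r : ℕ) (ls : List (List ℤ)) (h : ∀ u ∈ ls, u.length = r) :
    vgchk r ls.length ls.flatten = ls ∧ ls.flatten.length = ls.length * r := by
  induction ls with
  | nil => simp [vgchk]
  | cons u t ih =>
    obtain ⟨h1, h2⟩ := ih (fun v hv => h v (by simp [hv]))
    have hu : u.length = r := h u (by simp)
    constructor
    · simp [vgchk, ← hu] at h1 ⊢
      exact h1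
    · rw [List.flatten_cons, List.length_append, h2, hu, List.length_cons]; ring

lemma vg_complex (r d s T : ℕ) (hr : 1 ≤ r) (hs : s ≤ r) (H : ℕ → ℕ) (H0 : H 0 = 1) :
    ∃ Δ : Finset (Finset (List ℤ)), ∅ ∈ Δ ∧ (∀ F ∈ Δ, ∀ G ⊆ F, G ∈ Δ) ∧
      ∀ i : ℕ, ((Δ.filter fun F => F.card = i).card : ℤ) =
        if i ≤ T then ∑ j ∈ Finset.range (s + 1), (H j : ℤ) * vgl r d ((i * r : ℕ) - j)
        else 0 := by
  classical
  let Zi : ℕ → Finset (List ℤ) := fun i => (vgZ r d s H).filter fun z => (z.length : ℤ) = (i * r : ℕ)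
  let Δ : Finset (Finset (List ℤ)) := (Finset.range (T + 1)).biUnion fun i =>
    (Zi i).image fun w => (vgchk r i w).toFinset
  have memΔ : ∀ F, F ∈ Δ ↔ ∃ ls : List (List ℤ), ls.length ≤ T ∧ (∀ u ∈ ls, u.length = r) ∧
      ls.flatten ∈ vgZ r d s H ∧ ls.toFinset = F := by
    intro F
    simp only [Δ, Zi, Finset.mem_biUnion, Finset.mem_range, Finset.mem_image, Finset.mem_filter]
    constructor
    · rintro ⟨i, hi, w, ⟨hw, hl⟩, rfl⟩
      have hl' : w.length = i * r := by exact_mod_cast hl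
      obtain ⟨h1, h2⟩ := vgchk_spec r i w hl'
      exact ⟨vgchk r i w, by rw [vgchk_length]; omega, h1, by rwa [h2], rfl⟩
    · rintro ⟨ls, h1, h2, h3, rfl⟩
      obtain ⟨h4, h5⟩ := vgchk_flatten r ls h2
      exact ⟨ls.length, by omega, ls.flatten, ⟨h3, by exact_mod_cast h5⟩, by rw [h4]⟩
  have cardF : ∀ ls : List (List ℤ), (∀ u ∈ ls, u.length = r) → ls.flatten ∈ vgZ r d s H →
      ls.toFinset.card = ls.length := fun ls h1 h2 =>
    List.toFinset_card_of_nodup (vg_nodup hr hs h1 h2)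
  have hnil : ([] : List ℤ) ∈ vgZ r d s H := by
    refine vgZ_mem.2 ⟨0, 0, [], by omega, by omega, ?_, by simp⟩
    clear memΔ cardF Δ Zi
    induction d with
    | zero => simp [vgW]
    | succ d ih => exact vgW_succ_mem.2 ⟨[], 0, ih, by omega, by simp, by simp⟩
  refine ⟨Δ, ?_, ?_, ?_⟩
  · exact (memΔ _).2 ⟨[], by simp, by simp, by simpa using hnil, by simp⟩
  · intro F hF G hG
    obtain ⟨ls, h1, h2, h3, rfl⟩ := (memΔ F).1 hF
    have hsub : (ls.filter (fun u => decide (u ∈ G))).Sublist ls := List.filter_sublist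
    refine (memΔ G).2 ⟨ls.filter (fun u => decide (u ∈ G)), hsub.length_le.trans h1,
      fun u hu => h2 u (hsub.subset hu), vgZ_sub hs H0 h2 h3 hsub, ?_⟩
    ext u
    simp only [List.mem_toFinset, List.mem_filter, decide_eq_true_eq]
    exact ⟨fun h => h.2, fun h => ⟨by simpa using hG h, h⟩⟩
  · intro i
    split_ifs with hi
    · rw [← vgZ_card H0]
      have : Δ.filter (fun F => F.card = i) = (Zi i).image fun w => (vgchk r i w).toFinset := by
        ext F
        rw [Finset.mem_filter, memΔ]
        simp only [Zi, Finset.mem_image, Finset.mem_filter]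
        constructor
        · rintro ⟨⟨ls, h1, h2, h3, rfl⟩, hc⟩
          rw [cardF ls h2 h3] at hc
          subst hc
          obtain ⟨h4, h5⟩ := vgchk_flatten r ls h2
          exact ⟨ls.flatten, ⟨h3, by exact_mod_cast h5⟩, by rw [h4]⟩
        · rintro ⟨w, ⟨hw, hl⟩, rfl⟩
          have hl' : w.length = i * r := by exact_mod_cast hl
          obtain ⟨h1, h2⟩ := vgchk_spec r i w hl'
          refine ⟨⟨vgchk r i w, by rw [vgchk_length]; omega, h1, by rwa [h2], rfl⟩, ?_⟩
          rw [cardF _ h1 (by rwa [h2]), vgchk_length]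
      rw [this, Finset.card_image_of_injOn]
      intro w hw w' hw' e
      simp only [Zi, Finset.coe_filter, Set.mem_ofPred_eq] at hw hw'
      obtain ⟨h1, h2⟩ := vgchk_spec r i w (by exact_mod_cast hw.2)
      obtain ⟨h1', h2'⟩ := vgchk_spec r i w' (by exact_mod_cast hw'.2)
      have := vg_unique hr hs h1 (by rw [h2]; exact hw.1) h1' (by rw [h2']; exact hw'.1) e
      rw [← h2, ← h2', this]
    · rw [Finset.filter_eq_empty_iff.2]
      · simp
      · intro F hF hc
        obtain ⟨ls, h1, h2, h3, rfl⟩ := (memΔ F).1 hF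
        rw [cardF ls h2 h3] at hc
        omega

lemma vg_transfer {α : Type*} [DecidableEq α] (Δ : Finset (Finset α)) (h0 : ∅ ∈ Δ)
    (hd : ∀ F ∈ Δ, ∀ G ⊆ F, G ∈ Δ) :
    ∃ (n : ℕ) (Δ' : Finset (Finset (Fin n))), ∅ ∈ Δ' ∧ (∀ F ∈ Δ', ∀ G ⊆ F, G ∈ Δ') ∧
      ∀ i : ℕ, (Δ'.filter fun F => F.card = i).card = (Δ.filter fun F => F.card = i).card := by
  classical
  let V := Δ.sup id
  let e := V.equivFin
  let g : Fin V.card ↪ α := e.symm.toEmbedding.trans (Function.Embedding.subtype _)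
  let Δ' : Finset (Finset (Fin V.card)) := Finset.univ.filter fun F => F.map g ∈ Δ
  have surj : ∀ F ∈ Δ, ∃ F' : Finset (Fin V.card), F'.map g = F := by
    intro F hF
    refine ⟨Finset.univ.filter fun x => g x ∈ F, ?_⟩
    ext a
    simp only [Finset.mem_map, Finset.mem_filter, Finset.mem_univ, true_and]
    constructor
    · rintro ⟨x, hx, rfl⟩; exact hx
    · intro ha
      have haV : a ∈ V := (Finset.le_sup (f := id) hF) ha
      refine ⟨e ⟨a, haV⟩, ?_, ?_⟩ <;> simp [g, ha]
  refine ⟨V.card, Δ', ?_, ?_, ?_⟩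
  · simpa [Δ'] using h0
  · intro F hF G hG
    simp only [Δ', Finset.mem_filter, Finset.mem_univ, true_and] at hF ⊢
    exact hd _ hF _ (Finset.map_subset_map.2 hG)
  · intro i
    refine Finset.card_bij (fun F _ => F.map g) ?_ ?_ ?_
    · intro F hF
      simp only [Δ', Finset.mem_filter, Finset.mem_univ, true_and] at hF ⊢
      simpa using hF
    · intro F _ G _ h; exact Finset.map_injective g h
    · intro F hF
      rw [Finset.mem_filter] at hF
      obtain ⟨F', rfl⟩ := surj F hF.1
      refine ⟨F', ?_, rfl⟩
      simp only [Δ', Finset.mem_filter, Finset.mem_univ, true_and]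
      simpa using hF

/-! ### numerics of the Veronese -/

open PowerSeries in
/-- Veronese of a power series -/
noncomputable def vgV (r : ℕ) (F : PowerSeries ℤ) : PowerSeries ℤ := PowerSeries.mk fun i => coeff (i * r) F

open PowerSeries in
lemma vgV_mul (r : ℕ) (hr : 1 ≤ r) (F : PowerSeries ℤ) :
    vgV r (F * (1 - X ^ r)) = vgV r F * (1 - X) := by
  ext i
  rw [mul_sub, mul_sub, mul_one, mul_one, map_sub]
  simp only [vgV, coeff_mk, map_sub]
  congr 1
  cases i with
  | zero => simp [coeff_mul_X_pow']; omega
  | succ i =>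
    rw [coeff_succ_mul_X, show (i + 1) * r = i * r + r by ring, coeff_mul_X_pow, coeff_mk]

open PowerSeries in
lemma vgV_mul_pow (r : ℕ) (hr : 1 ≤ r) (F : PowerSeries ℤ) (d : ℕ) :
    vgV r (F * (1 - X ^ r) ^ d) = vgV r F * (1 - X) ^ d := by
  induction d with
  | zero => simp
  | succ d ih => rw [pow_succ, ← mul_assoc, vgV_mul r hr, ih, pow_succ, mul_assoc]

open PowerSeries in
lemma vge_coeff (r d k : ℕ) :
    coeff k ((∑ b ∈ Finset.range r, (X : PowerSeries ℤ) ^ b) ^ d * (1 - X ^ r)) = vge r d k := by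
  induction d generalizing k with
  | zero =>
    rw [pow_zero, one_mul, map_sub, coeff_one, coeff_X_pow]
    simp only [vge]
    norm_cast
  | succ d ih =>
    rw [pow_succ, mul_right_comm, Finset.mul_sum, map_sum]
    simp only [vge]
    refine Finset.sum_congr rfl fun b _ => ?_
    rw [coeff_mul_X_pow']
    split_ifs with h
    · rw [ih]; congr 1; omega
    · rw [vge_neg]; omega

open PowerSeries in
lemma vg_numeric (d r : ℕ) (hr : 1 ≤ r) (h hrp : Polynomial ℤ) (a : ℕ → ℤ)
    (hh : (h : PowerSeries ℤ) = (PowerSeries.mk a) * (1 - X) ^ d)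
    (hhr : (hrp : PowerSeries ℤ) = (PowerSeries.mk fun i => a (i * r)) * (1 - X) ^ d)
    (hb : h.natDegree ≤ r) (ha : a 0 = 1) (i : ℕ) (hi : i ≤ hrp.natDegree / 2) :
    (if i = 0 then hrp.coeff 0 else hrp.coeff i - hrp.coeff (i - 1)) =
      ∑ j ∈ Finset.range (h.natDegree + 1), h.coeff j * vgl r d ((i * r : ℕ) - j) := by
  set Q : PowerSeries ℤ := ∑ b ∈ Finset.range r, (X : PowerSeries ℤ) ^ b with hQ
  have hgeom : (1 - X) * Q = 1 - X ^ r := by rw [hQ]; exact mul_neg_geom_sum X r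
  have e1 : (hrp : PowerSeries ℤ) = vgV r (h * Q ^ d) := by
    rw [hhr, hh, mul_assoc, ← mul_pow, hgeom, vgV_mul_pow r hr]
    simp [vgV]
  have hco : ∀ i, hrp.coeff i = coeff (i * r) ((h : PowerSeries ℤ) * Q ^ d) := by
    intro i
    rw [← Polynomial.coeff_coe, e1]; simp [vgV]
  have hc0 : hrp.coeff 0 = 1 := by
    rw [← Polynomial.coeff_coe, hhr]; simp [ha]
  have hne : hrp ≠ 0 := by rintro rfl; simp at hc0
  have hdeg : hrp.natDegree * r ≤ h.natDegree + d * (r - 1) := by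
    have h1 : hrp.coeff hrp.natDegree ≠ 0 := by
      simpa using hne
    rw [hco] at h1
    let Qp : Polynomial ℤ := ∑ b ∈ Finset.range r, (Polynomial.X : Polynomial ℤ) ^ b
    have hQp : (Qp : PowerSeries ℤ) = Q := by
      simp only [Qp, hQ]
      rw [← Polynomial.coeToPowerSeries.ringHom_apply, map_sum]
      simp
    have h2 : (h : PowerSeries ℤ) * Q ^ d = ((h * Qp ^ d : Polynomial ℤ) : PowerSeries ℤ) := by
      rw [← hQp]; simp
    rw [h2, Polynomial.coeff_coe] at h1
    have h3 := Polynomial.le_natDegree_of_ne_zero h1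
    have h4 : Qp.natDegree ≤ r - 1 := by
      refine Polynomial.natDegree_sum_le_of_forall_le _ _ fun b hb => ?_
      have := Finset.mem_range.1 hb
      simp; omega
    calc _ ≤ _ := h3
      _ ≤ h.natDegree + (Qp ^ d).natDegree := Polynomial.natDegree_mul_le
      _ ≤ h.natDegree + d * Qp.natDegree := by gcongr; exact Polynomial.natDegree_pow_le
      _ ≤ _ := by gcongr
  have e2 : (if i = 0 then hrp.coeff 0 else hrp.coeff i - hrp.coeff (i - 1)) =
      coeff (i * r) ((h : PowerSeries ℤ) * (Q ^ d * (1 - X ^ r))) := by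
    have : coeff (i * r) ((h : PowerSeries ℤ) * (Q ^ d * (1 - X ^ r))) =
        coeff i ((hrp : PowerSeries ℤ) * (1 - X)) := by
      rw [e1, ← vgV_mul r hr]; simp [vgV, mul_assoc]
    rw [this, mul_sub, mul_one, map_sub, Polynomial.coeff_coe]
    cases i with
    | zero => simp
    | succ i => simp [coeff_succ_mul_X]
  have hi2 : 2 * (i * r) ≤ h.natDegree + d * (r - 1) := by
    refine le_trans ?_ hdeg
    rw [← mul_assoc]
    gcongr
    omega
  have hvl : ∀ j : ℕ, vgl r d ((i * r : ℕ) - j) = vge r d ((i * r : ℕ) - j) := by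
    intro j
    apply vgl_eq_vge r d hr
    have : (d + 1) * (r - 1) = d * (r - 1) + (r - 1) := by ring
    rw [this]
    omega
  rw [e2, coeff_mul]
  have e3 : ∀ p ∈ Finset.HasAntidiagonal.antidiagonal (i * r),
      coeff p.1 (h : PowerSeries ℤ) * coeff p.2 (Q ^ d * (1 - X ^ r)) =
      (fun j : ℕ => h.coeff j * vgl r d ((i * r : ℕ) - j)) p.1 := by
    intro p hp
    rw [Finset.HasAntidiagonal.mem_antidiagonal] at hp
    rw [vge_coeff r d _, Polynomial.coeff_coe, ← hp]
    simp only
    rw [hp, hvl, ← hp]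
    congr 2
    push_cast; ring
  rw [Finset.sum_congr rfl e3, Finset.Nat.sum_antidiagonal_eq_sum_range_succ_mk]
  simp only
  set f : ℕ → ℤ := fun j => h.coeff j * vgl r d ((i * r : ℕ) - j) with hf
  have z1 : ∀ j, i * r < j → f j = 0 := by
    intro j hj
    simp only [hf]
    rw [hvl, vge_neg _ _ _ (by omega), mul_zero]
  have z2 : ∀ j, h.natDegree < j → f j = 0 := by
    intro j hj
    simp only [hf]
    rw [Polynomial.coeff_eq_zero_of_natDegree_lt hj, zero_mul]
  change ∑ j ∈ Finset.range (i * r + 1), f j = ∑ j ∈ Finset.range (h.natDegree + 1), f j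
  rw [Finset.sum_subset (Finset.range_subset_range.2 (show i * r + 1 ≤ max (i * r) h.natDegree + 1 by omega)),
    Finset.sum_subset (Finset.range_subset_range.2 (show h.natDegree + 1 ≤ max (i * r) h.natDegree + 1 by omega))]
  · intro j _ hj; apply z2; simp at hj; omega
  · intro j _ hj; apply z1; simp at hj; omega

/-! ### algebra: nonnegativity of the `h`-polynomial -/

section VGAlg

variable {K : Type*} [Field K] {A : Type*} [CommRing A] [Algebra K A]
  (𝒜 : ℕ → Submodule K A) [GradedAlgebra 𝒜]

lemma vg_iSup : ⨆ i, 𝒜 i = ⊤ :=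
  (DirectSum.Decomposition.isInternal 𝒜).submodule_iSup_eq_top

lemma vg_finiteType (hstd : ∀ i, 𝒜 i = 𝒜 1 ^ i) (hfin : ∀ i, Module.Finite K (𝒜 i)) :
    Algebra.FiniteType K A := by
  obtain ⟨s, hs⟩ := (Module.Finite.iff_fg (N := 𝒜 1)).1 (hfin 1)
  refine ⟨⟨s, ?_⟩⟩
  have h1 : 𝒜 1 ≤ Subalgebra.toSubmodule (Algebra.adjoin K (s : Set A)) := by
    rw [← hs]; exact Algebra.span_le_adjoin K _
  have h2 : ∀ i, 𝒜 i ≤ Subalgebra.toSubmodule (Algebra.adjoin K (s : Set A)) := by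
    intro i
    rw [hstd i]
    induction i with
    | zero => rw [pow_zero, Submodule.one_le]; exact Subalgebra.one_mem _
    | succ i ih =>
      rw [pow_succ, Submodule.mul_le]
      intro a ha b hb
      exact mul_mem (S := Subalgebra K A) (ih ha) (h1 hb)
  have h3 : (⊤ : Submodule K A) ≤ Subalgebra.toSubmodule (Algebra.adjoin K (s : Set A)) := by
    rw [← vg_iSup 𝒜]; exact iSup_le h2
  rw [eq_top_iff]
  intro x _
  exact h3 (Submodule.mem_top (x := x))

lemma vg_max (hstd : ∀ i, 𝒜 i = 𝒜 1 ^ i) (P Q : Ideal A) (hQ : Q.IsPrime)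
    (hP : ∀ x ∈ 𝒜 1, x ∈ P) (hPQ : P ≤ Q) : Q ≤ P := by
  have h2 : ∀ i, 𝒜 i ≤ P.restrictScalars K ⊔ (1 : Submodule K A) := by
    intro i
    cases i with
    | zero => rw [hstd 0, pow_zero]; exact le_sup_right
    | succ i =>
      refine le_trans ?_ le_sup_left
      rw [hstd (i + 1), pow_succ, Submodule.mul_le]
      intro a _ b hb
      exact P.mul_mem_left a (hP b hb)
  have h3 : (⊤ : Submodule K A) ≤ P.restrictScalars K ⊔ (1 : Submodule K A) := by
    rw [← vg_iSup 𝒜]; exact iSup_le h2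
  intro y hy
  obtain ⟨p, hp, c, hc, rfl⟩ := Submodule.mem_sup.1 (h3 (Submodule.mem_top (x := y)))
  obtain ⟨c, rfl⟩ := Submodule.mem_one.1 hc
  have hp' : p ∈ P := hp
  have hcQ : algebraMap K A c ∈ Q := by
    have := Q.sub_mem hy (hPQ hp')
    simpa using this
  by_cases hc0 : c = 0
  · subst hc0; simpa using hp'
  · exact absurd (Q.eq_top_of_isUnit_mem hcQ ((IsUnit.mk0 c hc0).map _)) hQ.ne_top

lemma vg_lsop [Infinite K] (hstd : ∀ i, 𝒜 i = 𝒜 1 ^ i) (hfin : ∀ i, Module.Finite K (𝒜 i))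
    (n : ℕ) (I : Ideal A) (hI : ringKrullDim (A ⧸ I) ≤ n) :
    ∃ θ : Fin n → A, (∀ j, θ j ∈ 𝒜 1) ∧
      Module.Finite K (A ⧸ (I ⊔ Ideal.span (Set.range θ))) := by
  classical
  have hft := vg_finiteType 𝒜 hstd hfin
  have hN : IsNoetherianRing A := Algebra.FiniteType.isNoetherianRing K A
  induction n generalizing I with
  | zero =>
    refine ⟨Fin.elim0, fun j => j.elim0, ?_⟩
    have : Set.range (Fin.elim0 : Fin 0 → A) = ∅ := by simp
    rw [this, Ideal.span_empty, sup_bot_eq, Module.finite_iff_krullDimLE_zero]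
    rw [Ring.krullDimLE_iff]
    exact_mod_cast hI
  | succ n ih =>
    have hfinP := I.finite_minimalPrimes_of_isNoetherianRing A
    -- choose x
    obtain ⟨x, hx1, hx⟩ : ∃ x ∈ 𝒜 1, ∀ P ∈ I.minimalPrimes, x ∈ P → ∀ y ∈ 𝒜 1, y ∈ P := by
      let S : Finset (Subspace K (𝒜 1)) :=
        (hfinP.toFinset.image fun P => (P.restrictScalars K).comap (𝒜 1).subtype).erase ⊤
      have hS := Subspace.biUnion_ne_univ_of_top_notMem (s := S) (by simp [S])
      obtain ⟨x, hx⟩ := (Set.ne_univ_iff_exists_notMem _).1 hS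
      refine ⟨x, x.2, fun P hP hxP y hy => ?_⟩
      by_contra hyP
      apply hx
      simp only [Set.mem_iUnion]
      refine ⟨(P.restrictScalars K).comap (𝒜 1).subtype, ?_, ?_⟩
      · rw [Finset.mem_erase]
        refine ⟨fun h => hyP ?_, Finset.mem_image.2 ⟨P, by simpa using hP, rfl⟩⟩
        have : (⟨y, hy⟩ : 𝒜 1) ∈ (P.restrictScalars K).comap (𝒜 1).subtype := by
          rw [h]; trivial
        exact this
      · exact hxP
    have hdim : ringKrullDim (A ⧸ (I ⊔ Ideal.span {x})) ≤ n := by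
      rw [ringKrullDim_quotient] at hI ⊢
      refine iSup_le fun l => ?_
      have hmem : ∀ p : PrimeSpectrum.zeroLocus (R := A) (I ⊔ Ideal.span {x} : Ideal A),
          I ≤ p.1.asIdeal ∧ x ∈ p.1.asIdeal := by
        intro p
        have h1 : (I ⊔ Ideal.span {x} : Ideal A) ≤ p.1.asIdeal := p.2
        exact ⟨le_sup_left.trans h1, h1 (le_sup_right (a := I) (Ideal.mem_span_singleton_self x))⟩
      obtain ⟨P, hP, hPq⟩ := Ideal.exists_minimalPrimes_le (J := l.head.1.asIdeal)
        (hmem l.head).1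
      by_cases hxP : x ∈ P
      · have hP1 := hx P hP hxP
        have hl : l.length = 0 := by
          by_contra hne
          have hlt : l.head < l.last := l.rel_of_lt (by simp [Fin.lt_def]; omega)
          have h1 : l.head.1.asIdeal < l.last.1.asIdeal := hlt
          have h2 := vg_max 𝒜 hstd P l.last.1.asIdeal l.last.1.isPrime hP1 (hPq.trans h1.le)
          exact absurd (h2.trans hPq) h1.not_ge
        rw [hl]
        exact_mod_cast Nat.zero_le n
      · let p' : PrimeSpectrum.zeroLocus (R := A) (I : Set A) := ⟨⟨P, hP.1.1⟩, hP.1.2⟩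
        let l' : LTSeries (PrimeSpectrum.zeroLocus (R := A) (I : Set A)) :=
          l.map (fun p => ⟨p.1, (hmem p).1⟩) (fun _ _ h => h)
        have hlt : p' < l'.head := by
          refine lt_of_le_of_ne hPq fun h => hxP ?_
          have h3 : P = l.head.1.asIdeal := congrArg (fun p => p.1.asIdeal) h
          rw [h3]; exact (hmem l.head).2
        have := (Order.LTSeries.length_le_krullDim (l'.cons p' hlt)).trans hI
        have h4 : l.length + 1 ≤ n + 1 := by
          have h5 : (l'.cons p' hlt).length = l.length + 1 := by
            rw [RelSeries.cons_length]; rfl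
          rw [h5] at this
          exact_mod_cast this
        have h6 : l.length ≤ n := by omega
        exact_mod_cast h6
    obtain ⟨θ, hθ1, hθ2⟩ := ih _ hdim
    refine ⟨Fin.cons x θ, ?_, ?_⟩
    · intro j
      refine Fin.cases ?_ (fun j => ?_) j
      · simpa using hx1
      · simpa using hθ1 j
    · rw [Fin.range_cons, Ideal.span_insert, ← sup_assoc]
      exact hθ2

/-- Hilbert function of `A/I` -/
noncomputable def vgHilb (I : Ideal A) (i : ℕ) : ℤ :=
  (Module.finrank K (𝒜 i) : ℤ) - Module.finrank K ((𝒜 i ⊓ I.restrictScalars K : Submodule K A))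

lemma vgHilb_nonneg (hfin : ∀ i, Module.Finite K (𝒜 i)) (I : Ideal A) (i : ℕ) :
    0 ≤ vgHilb 𝒜 I i := by
  have := hfin i
  have h : Module.finrank K ((𝒜 i ⊓ I.restrictScalars K : Submodule K A)) ≤
    Module.finrank K (𝒜 i) := Submodule.finrank_mono inf_le_left
  unfold vgHilb
  omega

lemma vg_finrank_map (f : A →ₗ[K] A) (V : Submodule K A) [Module.Finite K V] :
    Module.finrank K (V.map f) + Module.finrank K (V ⊓ LinearMap.ker f : Submodule K A) =
      Module.finrank K V := by
  have h := LinearMap.finrank_range_add_finrank_ker (f.domRestrict V)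
  rw [LinearMap.range_domRestrict] at h
  rw [← h]
  congr 1
  rw [LinearMap.ker_domRestrict]
  have : (V ⊓ LinearMap.ker f : Submodule K A) = (Submodule.comap V.subtype (LinearMap.ker f)).map V.subtype := by
    rw [Submodule.map_comap_subtype]
  rw [this]
  exact Submodule.finrank_map_subtype_eq V _

lemma vgHilb_step (hfin : ∀ i, Module.Finite K (𝒜 i)) (I : Ideal A)
    (hI : I.IsHomogeneous 𝒜) (θ : A) (hθ : θ ∈ 𝒜 1) (hreg : ∀ x, θ * x ∈ I → x ∈ I) (i : ℕ) :
    vgHilb 𝒜 (I ⊔ Ideal.span {θ}) i =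
      vgHilb 𝒜 I i - if i = 0 then 0 else vgHilb 𝒜 I (i - 1) := by
  cases i with
  | zero =>
    simp only [if_true, sub_zero]
    suffices hs : (𝒜 0 ⊓ (I ⊔ Ideal.span {θ}).restrictScalars K : Submodule K A) =
        𝒜 0 ⊓ I.restrictScalars K by
      unfold vgHilb
      rw [hs]
    apply le_antisymm
    · rintro x ⟨hx0, hx⟩
      refine ⟨hx0, ?_⟩
      obtain ⟨y, hy, z, hz, rfl⟩ := Submodule.mem_sup.1 hx
      obtain ⟨a, rfl⟩ := Ideal.mem_span_singleton'.1 hz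
      have h1 := hI 0 hy
      have h2 : (DirectSum.decompose 𝒜 (y + a * θ) 0 : A) = y + a * θ :=
        DirectSum.decompose_of_mem_same 𝒜 hx0
      rw [DirectSum.decompose_add, DirectSum.add_apply, Submodule.coe_add, mul_comm a θ,
        DirectSum.coe_decompose_mul_of_left_mem_of_not_le 𝒜 hθ (by omega), add_zero] at h2
      change y + a * θ ∈ I
      rw [mul_comm a θ, ← h2]; exact h1
    · exact inf_le_inf_left _ (fun x hx => (le_sup_left : I ≤ I ⊔ Ideal.span {θ}) hx)
  | succ i =>
    have := hfin i
    have := hfin (i + 1)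
    simp only [Nat.succ_ne_zero, if_false, Nat.add_sub_cancel]
    let f : A →ₗ[K] A := LinearMap.mulLeft K θ
    have hf1 : (𝒜 i).map f ≤ 𝒜 (i + 1) := by
      rintro _ ⟨x, hx, rfl⟩
      have : θ * x ∈ 𝒜 (1 + i) := SetLike.mul_mem_graded hθ hx
      rw [add_comm] at this
      exact this
    have e1 : (𝒜 (i + 1) ⊓ (I ⊔ Ideal.span {θ}).restrictScalars K : Submodule K A) =
        (𝒜 (i + 1) ⊓ I.restrictScalars K) ⊔ (𝒜 i).map f := by
      apply le_antisymm
      · rintro x ⟨hx0, hx⟩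
        obtain ⟨y, hy, z, hz, rfl⟩ := Submodule.mem_sup.1 hx
        obtain ⟨a, rfl⟩ := Ideal.mem_span_singleton'.1 hz
        have h1 := hI (i + 1) hy
        have h2 : (DirectSum.decompose 𝒜 (y + a * θ) (i + 1) : A) = y + a * θ :=
          DirectSum.decompose_of_mem_same 𝒜 hx0
        rw [DirectSum.decompose_add, DirectSum.add_apply, Submodule.coe_add, mul_comm a θ,
          DirectSum.coe_decompose_mul_of_left_mem_of_le 𝒜 hθ (by omega)] at h2
        rw [mul_comm a θ, ← h2]
        refine Submodule.add_mem_sup ⟨SetLike.coe_mem _, h1⟩ ⟨_, SetLike.coe_mem _, rfl⟩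
      · refine sup_le (inf_le_inf_left _ (fun x hx =>
          (le_sup_left : I ≤ I ⊔ Ideal.span {θ}) hx)) (le_inf hf1 ?_)
        rintro _ ⟨x, hx, rfl⟩
        exact (le_sup_right : Ideal.span {θ} ≤ I ⊔ Ideal.span {θ})
          (Ideal.mul_mem_right x _ (Ideal.mem_span_singleton_self θ))
    have e2 : ((𝒜 (i + 1) ⊓ I.restrictScalars K) ⊓ (𝒜 i).map f : Submodule K A) =
        (𝒜 i ⊓ I.restrictScalars K).map f := by
      apply le_antisymm
      · rintro _ ⟨⟨_, h2⟩, ⟨x, hx, rfl⟩⟩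
        exact ⟨x, ⟨hx, hreg x h2⟩, rfl⟩
      · rintro _ ⟨x, ⟨hx, hxI⟩, rfl⟩
        exact ⟨⟨hf1 ⟨x, hx, rfl⟩, I.mul_mem_left θ hxI⟩, ⟨x, hx, rfl⟩⟩
    have e3 : (𝒜 i ⊓ I.restrictScalars K ⊓ LinearMap.ker f : Submodule K A) =
        𝒜 i ⊓ LinearMap.ker f := by
      apply le_antisymm
      · exact inf_le_inf_right _ inf_le_left
      · rintro x ⟨hx, hk⟩
        refine ⟨⟨hx, hreg x ?_⟩, hk⟩
        have : θ * x = 0 := hk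
        rw [this]; exact I.zero_mem
    have fin1 : Module.Finite K (𝒜 (i + 1) ⊓ I.restrictScalars K : Submodule K A) :=
      Submodule.finiteDimensional_of_le inf_le_left
    have fin2 : Module.Finite K (𝒜 i ⊓ I.restrictScalars K : Submodule K A) :=
      Submodule.finiteDimensional_of_le inf_le_left
    have d1 := Submodule.finrank_sup_add_finrank_inf_eq (𝒜 (i + 1) ⊓ I.restrictScalars K)
      ((𝒜 i).map f)
    have d2 := vg_finrank_map f (𝒜 i)
    have d3 := vg_finrank_map f (𝒜 i ⊓ I.restrictScalars K)
    rw [e2, ← e1] at d1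
    rw [e3] at d3
    unfold vgHilb
    omega

lemma vgHilb_series (hfin : ∀ i, Module.Finite K (𝒜 i)) (L : List A) (hL : ∀ x ∈ L, x ∈ 𝒜 1)
    (hreg : RingTheory.Sequence.IsWeaklyRegular A L) (n : ℕ) (hn : n ≤ L.length) :
    PowerSeries.mk (vgHilb 𝒜 (Ideal.ofList (L.take n))) =
      (PowerSeries.mk fun i => (Module.finrank K (𝒜 i) : ℤ)) * (1 - PowerSeries.X) ^ n := by
  induction n with
  | zero =>
    rw [List.take_zero, Ideal.ofList_nil, pow_zero, mul_one]
    congr 1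
    funext i
    unfold vgHilb
    have : (𝒜 i ⊓ (⊥ : Ideal A).restrictScalars K : Submodule K A) = ⊥ := by simp
    rw [this]; simp
  | succ n ih =>
    have hlt : n < L.length := by omega
    have hcat : Ideal.ofList (L.take (n + 1)) = Ideal.ofList (L.take n) ⊔ Ideal.span {L[n]} := by
      rw [List.take_succ_eq_append_getElem hlt, Ideal.ofList_append, Ideal.ofList_singleton]
    have hhom : (Ideal.ofList (L.take n)).IsHomogeneous 𝒜 :=
      Ideal.homogeneous_span 𝒜 _ fun x hx => ⟨1, hL x (List.mem_of_mem_take hx)⟩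
    have hr := hreg.regular_mod_prev n hlt
    have hr' : ∀ x, L[n] * x ∈ Ideal.ofList (L.take n) → x ∈ Ideal.ofList (L.take n) := by
      have htop : (Ideal.ofList (L.take n) • ⊤ : Submodule A A) = Ideal.ofList (L.take n) := by
        simp
      intro x hx
      have h0 := isSMulRegular_iff_right_eq_zero_of_smul.1 hr (Submodule.Quotient.mk x) (by
        rw [← Submodule.Quotient.mk_smul, Submodule.Quotient.mk_eq_zero, htop]
        exact hx)
      rwa [Submodule.Quotient.mk_eq_zero, htop] at h0
    rw [pow_succ, ← mul_assoc, ← ih (by omega), hcat]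
    ext i
    rw [PowerSeries.coeff_mk, vgHilb_step 𝒜 hfin _ hhom _ (hL _ (List.getElem_mem _)) hr', mul_sub,
      mul_one, map_sub, PowerSeries.coeff_mk]
    cases i with
    | zero => simp
    | succ i => simp [PowerSeries.coeff_succ_mul_X]

end VGAlg

/-- **Theorem 1.3(ii) (second part), Kubitzke–Murai.**
Let `K` be a field of characteristic `0` and `A` a Cohen-Macaulay standard graded `K`-algebra
of Krull dimension `d` with `h`-polynomial `h = h_A(t)` (so that `Hilb(A,t) = h/(1-t)^d`),
and let `hr = h_{A^⟨r⟩}(t) = h₀^⟨r⟩ + h₁^⟨r⟩ t + ⋯` be the `h`-polynomial of the `r`-th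
Veronese subalgebra `A^⟨r⟩ = ⊕_i A_{ir}`, of degree `s`.  If `r ≥ deg h_A(t)`, then the
`g`-polynomial `g_{A^⟨r⟩}(t) = h₀^⟨r⟩ + (h₁^⟨r⟩-h₀^⟨r⟩)t + ⋯ +
(h_{⌊s/2⌋}^⟨r⟩ - h_{⌊s/2⌋-1}^⟨r⟩)t^{⌊s/2⌋}` is the `f`-polynomial of a simplicial complex
`Δ`: `∅ ∈ Δ`, `Δ` is closed under subsets, and for every `i` the number of faces of `Δ` of
cardinality `i` equals the coefficient of `tⁱ` in `g_{A^⟨r⟩}(t)`. -/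
theorem veronese_g_polynomial_is_f_polynomial
    (K : Type*) [Field K] [CharZero K]
    (A : Type*) [CommRing A] [Algebra K A]
    (𝒜 : ℕ → Submodule K A) [GradedAlgebra 𝒜]
    (hstd : ∀ i, 𝒜 i = 𝒜 1 ^ i)
    (hfin : ∀ i, Module.Finite K (𝒜 i))
    (d : ℕ) (hdim : ringKrullDim A = d)
    (hCM : ∀ θ' : Fin d → A, (∀ j, θ' j ∈ 𝒜 1) →
      Module.Finite K (A ⧸ Ideal.span (Set.range θ')) →
      RingTheory.Sequence.IsRegular A (List.ofFn θ'))
    (h : Polynomial ℤ)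
    (hh : (h : PowerSeries ℤ) =
      (PowerSeries.mk fun i => (Module.finrank K (𝒜 i) : ℤ)) * (1 - PowerSeries.X) ^ d)
    (r : ℕ) (hr : 1 ≤ r) (hrbound : h.natDegree ≤ r)
    (hrpoly : Polynomial ℤ)
    (hhr : (hrpoly : PowerSeries ℤ) =
      (PowerSeries.mk fun i => (Module.finrank K (𝒜 (i * r)) : ℤ)) * (1 - PowerSeries.X) ^ d) :
    ∃ (n : ℕ) (Δ : Finset (Finset (Fin n))),
      ∅ ∈ Δ ∧
      (∀ F ∈ Δ, ∀ G ⊆ F, G ∈ Δ) ∧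
      (∀ i : ℕ, ((Δ.filter fun F => F.card = i).card : ℤ) =
        if i = 0 then hrpoly.coeff 0
        else if i ≤ hrpoly.natDegree / 2 then hrpoly.coeff i - hrpoly.coeff (i - 1)
        else 0) := by
  classical
  have hnt : Nontrivial A := by
    by_contra hcon
    rw [not_nontrivial_iff_subsingleton] at hcon
    rw [ringKrullDim_eq_bot_of_subsingleton] at hdim
    exact absurd hdim (by simp)
  have ha0 : (Module.finrank K (𝒜 0) : ℤ) = 1 := by
    rw [hstd 0, pow_zero, Submodule.one_eq_span, finrank_span_singleton one_ne_zero]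
    rfl
  -- the h-polynomial has nonnegative coefficients
  have hnonneg : ∀ j, 0 ≤ h.coeff j := by
    have hinf : Infinite K := inferInstance
    obtain ⟨θ, hθ1, hθ2⟩ := vg_lsop 𝒜 hstd hfin d ⊥ (by
      rw [ringKrullDim_eq_of_ringEquiv (RingEquiv.quotientBot A), hdim])
    rw [bot_sup_eq] at hθ2
    have hreg := hCM θ hθ1 hθ2
    have hser := vgHilb_series 𝒜 hfin (List.ofFn θ) (by
      intro x hx
      obtain ⟨j, rfl⟩ := (List.mem_ofFn' _ _).1 hx
      exact hθ1 j) hreg.toIsWeaklyRegular d (by simp)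
    intro j
    rw [← Polynomial.coeff_coe, hh, ← hser, PowerSeries.coeff_mk]
    exact vgHilb_nonneg 𝒜 hfin _ j
  have hcast : ∀ j, ((h.coeff j).toNat : ℤ) = h.coeff j := fun j => Int.toNat_of_nonneg (hnonneg j)
  have hh0 : h.coeff 0 = 1 := by
    rw [← Polynomial.coeff_coe, hh]; simp [ha0]
  obtain ⟨Δ, h0, hd, hc⟩ := vg_complex r d h.natDegree (hrpoly.natDegree / 2) hr hrbound
    (fun j => (h.coeff j).toNat) (by simp [hh0])
  obtain ⟨n, Δ', h0', hd', hc'⟩ := vg_transfer Δ h0 hd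
  refine ⟨n, Δ', h0', hd', fun i => ?_⟩
  have hfc : ((Δ'.filter fun F => F.card = i).card : ℤ) =
      ((Δ.filter fun F => F.card = i).card : ℤ) := by exact_mod_cast hc' i
  have key := vg_numeric d r hr h hrpoly (fun i => (Module.finrank K (𝒜 i) : ℤ)) hh hhr hrbound
    ha0 i
  rw [hfc, hc i]
  by_cases hi : i ≤ hrpoly.natDegree / 2
  · rw [if_pos hi, if_pos hi, key hi]
    exact Finset.sum_congr rfl fun j _ => by rw [hcast]
  · rw [if_neg hi, if_neg hi, if_neg (by omega)]
end

section
/- Let K be a field of characteristic 0, let A be a Cohen-Macaulay standard graded K-algebra of Krull dimension d, let r ≥ 1 be an integer, and set s = ⌊(r−1)d/r⌋. Write h_{A^⟨r⟩}(t) = Σ_{i≥0} h_i^⟨r⟩ t^i for the h-polynomial of the r-th Veronese subalgebra A^⟨r⟩. Then h_i^⟨r⟩ ≤ h_{s−i}^⟨r⟩ for all i ≤ s/2. -/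
namespace VerH

/-- Coefficients of `(1+t+⋯+t^(r-1))^d`, indexed by integers. -/
def cc (r : ℕ) : ℕ → ℤ → ℤ
  | 0, x => if x = 0 then 1 else 0
  | d + 1, x => ∑ k ∈ Finset.range r, cc r d (x - k)

lemma cc_nonneg (r d : ℕ) (x : ℤ) : 0 ≤ cc r d x := by
  induction d generalizing x with
  | zero => simp only [cc]; split_ifs <;> simp
  | succ d ih => simp only [cc]; exact Finset.sum_nonneg fun k _ => ih _

lemma cc_neg (r d : ℕ) (x : ℤ) (hx : x < 0) : cc r d x = 0 := by
  induction d generalizing x with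
  | zero => simp only [cc]; rw [if_neg (by omega)]
  | succ d ih => simp only [cc]; exact Finset.sum_eq_zero fun k _ => ih _ (by omega)

lemma cc_symm (N d : ℕ) (x : ℤ) : cc (N + 1) d (N * d - x) = cc (N + 1) d x := by
  induction d generalizing x with
  | zero => simp [cc]
  | succ d ih =>
    simp only [cc]
    rw [← Finset.sum_range_reflect]
    refine Finset.sum_congr rfl fun k hk => ?_
    rw [← ih]
    have : k ≤ N := by have := Finset.mem_range.1 hk; omega
    congr 1
    have e : ((N + 1 - 1 - k : ℕ) : ℤ) = N - k := by omega
    rw [e]; push_cast; ring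

lemma cc_step (N d : ℕ) (x : ℤ) :
    cc (N + 1) (d + 1) (x + 1) = cc (N + 1) (d + 1) x + cc (N + 1) d (x + 1)
      - cc (N + 1) d (x - N) := by
  simp only [cc]
  rw [Finset.sum_range_succ', Finset.sum_range_succ (fun k : ℕ => cc (N + 1) d (x - k))]
  have : ∀ k : ℕ, x + 1 - ((k + 1 : ℕ) : ℤ) = x - k := by intro k; push_cast; ring
  simp only [this]
  simp
  ring

lemma cc_unimodal (N d : ℕ) (x y : ℤ) (hxy : x ≤ y) (h : x + y ≤ N * d) :
    cc (N + 1) d x ≤ cc (N + 1) d y := by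
  induction d generalizing x y with
  | zero =>
    rcases lt_or_ge x 0 with hx | hx
    · rw [cc_neg _ _ _ hx]; exact cc_nonneg _ _ _
    · have : x = y := by simp at h; omega
      rw [this]
  | succ d ih =>
    have step : ∀ (n : ℕ) (x : ℤ), 2 * (x + n) ≤ N * (d + 1 : ℕ) →
        cc (N + 1) (d + 1) x ≤ cc (N + 1) (d + 1) (x + n) := by
      intro n
      induction n with
      | zero => intro x _; simp
      | succ n ihn =>
        intro x hx
        have h1 := ihn x (by push_cast at hx ⊢; linarith)
        have h2 := cc_step N d (x + n)
        have h3 := ih (x + n - N) (x + n + 1) (by omega) (by push_cast at hx ⊢; linarith)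
        push_cast at *
        rw [← add_assoc]
        linarith
    rcases le_or_gt (2 * y) (N * (d + 1 : ℕ)) with hy | hy
    · have := step (y - x).toNat x
      rw [Int.toNat_of_nonneg (by omega)] at this
      simpa using this (by linarith)
    · rw [← cc_symm N (d + 1) y]
      have := step (N * (d + 1 : ℕ) - y - x).toNat x
      rw [Int.toNat_of_nonneg (by omega)] at this
      simpa using this (by linarith)

open PowerSeries

lemma coeff_geom_pow (r d n : ℕ) :
    coeff n ((∑ k ∈ Finset.range r, (X : PowerSeries ℤ) ^ k) ^ d) = cc r d n := by
  induction d generalizing n with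
  | zero => simp [cc, coeff_one]
  | succ d ih =>
    rw [pow_succ, Finset.mul_sum, map_sum]
    simp only [cc]
    refine Finset.sum_congr rfl fun k _ => ?_
    rw [coeff_mul_X_pow']
    split_ifs with h
    · rw [ih]; congr 1; omega
    · rw [cc_neg]; omega

lemma dec_mul (r d : ℕ) (hr : 1 ≤ r) (f : PowerSeries ℤ) :
    (mk fun i => coeff (i * r) (f * (1 - X ^ r) ^ d)) =
      (mk fun i => coeff (i * r) f) * (1 - X) ^ d := by
  induction d with
  | zero => simp
  | succ d ih =>
    rw [pow_succ (1 - X), ← mul_assoc, ← ih, pow_succ, ← mul_assoc]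
    set g := f * (1 - X ^ r) ^ d
    ext i
    rw [mul_sub, mul_sub, mul_one, mul_one]
    simp only [coeff_mk, map_sub, coeff_mul_X_pow']
    cases i with
    | zero =>
      rw [if_neg (by omega)]; simp
    | succ i =>
      rw [coeff_succ_mul_X, coeff_mk, if_pos (by nlinarith)]
      congr 3
      rw [Nat.succ_mul]; omega

lemma main_comb (r d : ℕ) (hr : 1 ≤ r) (H : PowerSeries ℤ)
    (hH : ∀ n, 0 ≤ coeff n (H * (1 - X) ^ d)) (i : ℕ) (hi : 2 * i ≤ (r - 1) * d / r) :
    coeff i ((mk fun i => coeff (i * r) H) * (1 - X) ^ d) ≤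
    coeff ((r - 1) * d / r - i) ((mk fun i => coeff (i * r) H) * (1 - X) ^ d) := by
  obtain ⟨N, rfl⟩ : ∃ N, r = N + 1 := ⟨r - 1, by omega⟩
  rw [← dec_mul _ _ hr, coeff_mk, coeff_mk]
  have e : H * (1 - X ^ (N + 1)) ^ d =
      (H * (1 - X) ^ d) * (∑ k ∈ Finset.range (N + 1), (X : PowerSeries ℤ) ^ k) ^ d := by
    rw [mul_assoc, ← mul_pow, mul_comm (1 - X), geom_sum_mul_neg]
  rw [e]
  set h := H * (1 - X) ^ d
  simp only [Nat.add_sub_cancel] at *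
  set s := N * d / (N + 1) with hs
  have hs' : s * (N + 1) ≤ N * d := Nat.div_mul_le_self _ _
  rw [coeff_mul, coeff_mul,
    Finset.Nat.sum_antidiagonal_eq_sum_range_succ
      (fun a b => coeff a h * coeff b ((∑ k ∈ Finset.range (N + 1), (X : PowerSeries ℤ) ^ k) ^ d)),
    Finset.Nat.sum_antidiagonal_eq_sum_range_succ
      (fun a b => coeff a h * coeff b ((∑ k ∈ Finset.range (N + 1), (X : PowerSeries ℤ) ^ k) ^ d))]
  simp only [coeff_geom_pow]
  have hle : i * (N + 1) ≤ (s - i) * (N + 1) := Nat.mul_le_mul_right _ (by omega)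
  have hsum : i * (N + 1) + (s - i) * (N + 1) = s * (N + 1) := by
    rw [← add_mul]; congr 1; omega
  refine (Finset.sum_le_sum (fun j hj => ?_)).trans
    (Finset.sum_le_sum_of_subset_of_nonneg (Finset.range_mono (Nat.succ_le_succ hle)) ?_)
  · have := Finset.mem_range.1 hj
    refine mul_le_mul_of_nonneg_left (cc_unimodal _ _ _ _ (by omega) ?_) (hH _)
    have : (i * (N + 1) - j) + ((s - i) * (N + 1) - j) ≤ N * d := by omega
    exact_mod_cast this
  · intro j _ _
    exact mul_nonneg (hH _) (cc_nonneg _ _ _)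

end VerH

namespace VerH

lemma prime_maximal {K A : Type*} [Field K] [CommRing A] [Algebra K A] (V : Submodule K A)
    (hV : Algebra.adjoin K (V : Set A) = ⊤) (p : Ideal A) [hp : p.IsPrime]
    (h : ∀ v ∈ V, v ∈ p) : p.IsMaximal := by
  have key : ∀ a : A, ∃ k : K, a - algebraMap K A k ∈ p := by
    intro a
    have ha : a ∈ Algebra.adjoin K (V : Set A) := by rw [hV]; trivial
    induction ha using Algebra.adjoin_induction with
    | mem x hx => exact ⟨0, by simpa using h x hx⟩
    | algebraMap k => exact ⟨k, by simp⟩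
    | add x y _ _ hx hy =>
      obtain ⟨k, hk⟩ := hx
      obtain ⟨l, hl⟩ := hy
      refine ⟨k + l, ?_⟩
      have := p.add_mem hk hl
      rw [map_add]; convert this using 1; ring
    | mul x y _ _ hx hy =>
      obtain ⟨k, hk⟩ := hx
      obtain ⟨l, hl⟩ := hy
      refine ⟨k * l, ?_⟩
      have := p.add_mem (p.mul_mem_right y hk) (p.mul_mem_left (algebraMap K A k) hl)
      rw [map_mul]; convert this using 1; ring
  rw [Ideal.isMaximal_iff]
  refine ⟨fun h1 => hp.ne_top ((Ideal.eq_top_iff_one _).2 h1), fun J x hJ hx hxJ => ?_⟩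
  obtain ⟨k, hk⟩ := key x
  have hk0 : k ≠ 0 := by rintro rfl; simp at hk; exact hx hk
  have : algebraMap K A k ∈ J := by
    have := J.sub_mem hxJ (hJ hk)
    simpa using this
  have := J.mul_mem_left (algebraMap K A k⁻¹) this
  rwa [← map_mul, inv_mul_cancel₀ hk0, map_one] at this

lemma exists_avoid {K A : Type*} [Field K] [Infinite K] [CommRing A] [Algebra K A]
    (V : Submodule K A) (S : Set (Ideal A)) (hS : S.Finite)
    (h : ∀ p ∈ S, ∃ v ∈ V, v ∉ p) : ∃ v ∈ V, ∀ p ∈ S, v ∉ p := by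
  by_contra! hc
  have : Finite S := hS
  obtain ⟨⟨p, hp⟩, e⟩ := Subspace.exists_eq_top_of_iUnion_eq_univ
    (p := fun p : S => ((p : Ideal A).restrictScalars K).comap V.subtype) (by
      rw [Set.eq_univ_iff_forall]
      rintro ⟨v, hv⟩
      obtain ⟨p, hp, hvp⟩ := hc v hv
      exact Set.mem_iUnion.2 ⟨⟨p, hp⟩, hvp⟩)
  obtain ⟨v, hv, hvp⟩ := h p hp
  have : (⟨v, hv⟩ : V) ∈ (⊤ : Submodule K V) := trivial
  rw [← e] at this
  exact hvp this

lemma exists_lsop {K A : Type*} [Field K] [Infinite K] [CommRing A] [Algebra K A]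
    [Algebra.FiniteType K A] (V : Submodule K A)
    (hV : Algebra.adjoin K (V : Set A) = ⊤) (n : ℕ) : ∀ (I : Ideal A)
    (_ : ∀ s : LTSeries (PrimeSpectrum A), I ≤ s.head.asIdeal → s.length ≤ n),
    ∃ θ : Fin n → A, (∀ j, θ j ∈ V) ∧
      Module.Finite K (A ⧸ (I ⊔ Ideal.span (Set.range θ))) := by
  have : IsNoetherianRing A := Algebra.FiniteType.isNoetherianRing K A
  induction n with
  | zero =>
    intro I hI
    refine ⟨Fin.elim0, fun j => j.elim0, ?_⟩
    have e : I ⊔ Ideal.span (Set.range (Fin.elim0 : Fin 0 → A)) = I := by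
      rw [Set.range_eq_empty]; simp
    rw [e, Module.finite_iff_krullDimLE_zero,
      Ideal.krullDimLE_zero_quotient_iff_forall_minimalPrimes_isMaximal]
    intro p hp
    have hpp : p.IsPrime := hp.1.1
    obtain ⟨m, hm, hpm⟩ := p.exists_le_maximal hpp.ne_top
    rcases hpm.eq_or_lt with rfl | hlt
    · exact hm
    · let s0 : LTSeries (PrimeSpectrum A) := RelSeries.singleton _ ⟨m, hm.isPrime⟩
      have hlt' : ((⟨p, hpp⟩ : PrimeSpectrum A), s0.head) ∈ {(a, b) : _ × _ | a < b} := hlt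
      have := hI (s0.cons ⟨p, hpp⟩ hlt') (by rw [RelSeries.head_cons]; exact hp.1.2)
      rw [RelSeries.cons_length] at this
      omega
  | succ n ih =>
    intro I hI
    obtain ⟨v, hv, hvp⟩ := exists_avoid V {p | p ∈ I.minimalPrimes ∧ ∃ v ∈ V, v ∉ p}
      ((Ideal.finite_minimalPrimes_of_isNoetherianRing A I).subset fun p hp => hp.1)
      (fun p hp => hp.2)
    obtain ⟨θ, hθ, hfin⟩ := ih (I ⊔ Ideal.span {v}) (by
      intro s hs
      have hIs : I ≤ s.head.asIdeal := le_sup_left.trans hs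
      have hvs : v ∈ s.head.asIdeal :=
        hs (Ideal.mem_sup_right (Ideal.subset_span rfl))
      have := s.head.isPrime
      obtain ⟨q, hq, hqs⟩ := Ideal.exists_minimalPrimes_le hIs
      have hqp : q.IsPrime := hq.1.1
      by_cases hqV : ∀ w ∈ V, w ∈ q
      · have hqm := prime_maximal V hV q hqV
        have e : q = s.head.asIdeal := hqm.eq_of_le this.ne_top hqs
        by_contra hlen
        have h0 : 0 < s.length := by omega
        have hlt := s.strictMono (show (⟨0, by omega⟩ : Fin (s.length + 1)) < ⟨1, by omega⟩ by
          simp [Fin.lt_def])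
        have hlt' : q < (s ⟨1, by omega⟩).asIdeal := by rw [e]; exact hlt
        exact (s ⟨1, by omega⟩).isPrime.ne_top (hqm.1.2 _ hlt')
      · push Not at hqV
        have hvq := hvp q ⟨hq, hqV⟩
        have hlt : q < s.head.asIdeal := lt_of_le_of_ne hqs (by rintro rfl; exact hvq hvs)
        have := hI (s.cons ⟨q, hqp⟩ hlt) (by simpa using hq.1.2)
        simpa using this)
    refine ⟨Fin.cons v θ, fun j => ?_, ?_⟩
    · refine Fin.cases ?_ (fun j => ?_) j
      · simpa using hv
      · simpa using hθ j
    · rw [Fin.range_cons, Set.insert_eq, Ideal.span_union, ← sup_assoc]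
      exact hfin

end VerH

namespace VerH
open PowerSeries

variable {K A : Type*} [Field K] [CommRing A] [Algebra K A]

/-- The degree `n` part of `A ⧸ I`. -/
noncomputable def qpart (𝒜 : ℕ → Submodule K A) (I : Ideal A) (n : ℕ) : Submodule K (A ⧸ I) :=
  (𝒜 n).map (Ideal.Quotient.mkₐ K I).toLinearMap

lemma mem_of_sup (𝒜 : ℕ → Submodule K A) [GradedAlgebra 𝒜]
    (I : Ideal A) (hI : I.IsHomogeneous 𝒜) (x : A) (hx : x ∈ 𝒜 1) (n : ℕ) (a : A)
    (ha : a ∈ 𝒜 (n + 1)) (h : a ∈ I ⊔ Ideal.span {x}) : ∃ c ∈ 𝒜 n, a - x * c ∈ I := by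
  obtain ⟨i, hi, y, hy, rfl⟩ := Submodule.mem_sup.1 h
  obtain ⟨c, rfl⟩ := Ideal.mem_span_singleton'.1 hy
  refine ⟨(DirectSum.decompose 𝒜 c n : A), SetLike.coe_mem _, ?_⟩
  have h1 := DirectSum.decompose_of_mem_same 𝒜 ha
  rw [DirectSum.decompose_add, DirectSum.add_apply, Submodule.coe_add, mul_comm c x,
    add_comm n 1, DirectSum.coe_decompose_mul_add_of_left_mem 𝒜 hx] at h1
  rw [mul_comm c x, ← h1, add_sub_cancel_right]
  exact hI _ hi

lemma mem_of_sup_zero (𝒜 : ℕ → Submodule K A) [GradedAlgebra 𝒜]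
    (I : Ideal A) (hI : I.IsHomogeneous 𝒜) (x : A) (hx : x ∈ 𝒜 1) (a : A)
    (ha : a ∈ 𝒜 0) (h : a ∈ I ⊔ Ideal.span {x}) : a ∈ I := by
  obtain ⟨i, hi, y, hy, rfl⟩ := Submodule.mem_sup.1 h
  obtain ⟨c, rfl⟩ := Ideal.mem_span_singleton'.1 hy
  have h1 := DirectSum.decompose_of_mem_same 𝒜 ha
  rw [DirectSum.decompose_add, DirectSum.add_apply, Submodule.coe_add, mul_comm c x,
    DirectSum.coe_decompose_mul_of_left_mem_of_not_le 𝒜 hx (by omega), add_zero] at h1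
  rw [mul_comm c x, ← h1]
  exact hI _ hi

lemma rank_nullity (𝒜 : ℕ → Submodule K A) 
    (hfin : ∀ i, Module.Finite K (𝒜 i)) (I J : Ideal A) (hIJ : I ≤ J) (n : ℕ) :
    Module.finrank K (qpart 𝒜 J n) + Module.finrank K
      (qpart 𝒜 I n ⊓ LinearMap.ker (Ideal.Quotient.factorₐ K hIJ).toLinearMap :
        Submodule K (A ⧸ I)) = Module.finrank K (qpart 𝒜 I n) := by
  have := hfin n
  have : Module.Finite K (qpart 𝒜 I n) := by unfold qpart; infer_instance
  set f := (Ideal.Quotient.factorₐ K hIJ).toLinearMap with hf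
  rw [← LinearMap.finrank_range_add_finrank_ker (f.domRestrict (qpart 𝒜 I n))]
  congr 1
  · rw [LinearMap.range_domRestrict]
    unfold qpart
    rw [← Submodule.map_comp]
    rfl
  · rw [LinearMap.ker_domRestrict, ← Submodule.map_comap_subtype]
    exact Submodule.finrank_map_subtype_eq _ _

lemma hilb_zero (𝒜 : ℕ → Submodule K A) [GradedAlgebra 𝒜]
    (hfin : ∀ i, Module.Finite K (𝒜 i)) (I : Ideal A) (hI : I.IsHomogeneous 𝒜)
    (x : A) (hx : x ∈ 𝒜 1) :
    Module.finrank K (qpart 𝒜 (I ⊔ Ideal.span {x}) 0) = Module.finrank K (qpart 𝒜 I 0) := by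
  rw [← rank_nullity 𝒜 hfin I (I ⊔ Ideal.span {x}) le_sup_left 0]
  have : (qpart 𝒜 I 0 ⊓ LinearMap.ker (Ideal.Quotient.factorₐ K
      (le_sup_left : I ≤ I ⊔ Ideal.span {x})).toLinearMap : Submodule K (A ⧸ I)) = ⊥ := by
    rw [eq_bot_iff]
    rintro _ ⟨⟨a, ha, rfl⟩, hb⟩
    have hb' : (Ideal.Quotient.mk (I ⊔ Ideal.span {x})) a = 0 := hb
    exact Ideal.Quotient.eq_zero_iff_mem.2
      (mem_of_sup_zero 𝒜 I hI x hx a ha (Ideal.Quotient.eq_zero_iff_mem.1 hb'))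
  rw [this, finrank_bot, add_zero]

lemma hilb_succ (𝒜 : ℕ → Submodule K A) [GradedAlgebra 𝒜]
    (hfin : ∀ i, Module.Finite K (𝒜 i)) (I : Ideal A) (hI : I.IsHomogeneous 𝒜)
    (x : A) (hx : x ∈ 𝒜 1) (hreg : ∀ a, x * a ∈ I → a ∈ I) (n : ℕ) :
    Module.finrank K (qpart 𝒜 (I ⊔ Ideal.span {x}) (n + 1)) + Module.finrank K (qpart 𝒜 I n)
      = Module.finrank K (qpart 𝒜 I (n + 1)) := by
  rw [← rank_nullity 𝒜 hfin I (I ⊔ Ideal.span {x}) le_sup_left (n + 1)]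
  have : (qpart 𝒜 I (n + 1) ⊓ LinearMap.ker (Ideal.Quotient.factorₐ K
      (le_sup_left : I ≤ I ⊔ Ideal.span {x})).toLinearMap : Submodule K (A ⧸ I)) =
      (qpart 𝒜 I n).map (LinearMap.mulLeft K (Ideal.Quotient.mk I x)) := by
    apply le_antisymm
    · rintro _ ⟨⟨a, ha, rfl⟩, hb⟩
      have hb' : (Ideal.Quotient.mk (I ⊔ Ideal.span {x})) a = 0 := hb
      obtain ⟨c, hc, hac⟩ := mem_of_sup 𝒜 I hI x hx n a ha (Ideal.Quotient.eq_zero_iff_mem.1 hb')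
      refine ⟨Ideal.Quotient.mk I c, ⟨c, hc, rfl⟩, ?_⟩
      rw [LinearMap.mulLeft_apply, ← map_mul]
      exact ((Ideal.Quotient.eq).2 hac).symm
    · rintro _ ⟨_, ⟨c, hc, rfl⟩, rfl⟩
      refine ⟨⟨x * c, ?_, ?_⟩, ?_⟩
      · rw [add_comm n 1]; exact SetLike.mul_mem_graded hx hc
      · simp
      · have : (Ideal.Quotient.mk (I ⊔ Ideal.span {x})) (x * c) = 0 :=
          Ideal.Quotient.eq_zero_iff_mem.2 (Ideal.mem_sup_right
            (Ideal.mul_mem_right _ _ (Ideal.subset_span rfl)))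
        exact this
  rw [this]
  congr 1
  have hinj : Function.Injective (LinearMap.mulLeft K (Ideal.Quotient.mk I x)) := by
    rw [injective_iff_map_eq_zero]
    intro b hb
    obtain ⟨a, rfl⟩ := Ideal.Quotient.mk_surjective b
    rw [LinearMap.mulLeft_apply, ← map_mul, Ideal.Quotient.eq_zero_iff_mem] at hb
    exact Ideal.Quotient.eq_zero_iff_mem.2 (hreg a hb)
  exact (LinearEquiv.finrank_eq (Submodule.equivMapOfInjective _ hinj _))

lemma hilb_seq (𝒜 : ℕ → Submodule K A) [GradedAlgebra 𝒜]
    (hfin : ∀ i, Module.Finite K (𝒜 i)) (L : List A) (hL : ∀ x ∈ L, x ∈ 𝒜 1)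
    (hreg : RingTheory.Sequence.IsWeaklyRegular A L) (k : ℕ) (hk : k ≤ L.length) :
    (Ideal.ofList (L.take k)).IsHomogeneous 𝒜 ∧
    (PowerSeries.mk fun n => (Module.finrank K (qpart 𝒜 (Ideal.ofList (L.take k)) n) : ℤ)) =
      (PowerSeries.mk fun n => (Module.finrank K (𝒜 n) : ℤ)) * (1 - PowerSeries.X) ^ k := by
  induction k with
  | zero =>
    refine ⟨by simpa using Ideal.IsHomogeneous.bot 𝒜, ?_⟩
    rw [pow_zero, mul_one]
    ext n
    rw [coeff_mk, coeff_mk]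
    congr 1
    have hinj : Function.Injective
        (Ideal.Quotient.mkₐ K (Ideal.ofList (L.take 0))).toLinearMap := by
      rw [injective_iff_map_eq_zero]
      intro b hb
      have : b ∈ Ideal.ofList (L.take 0) := Ideal.Quotient.eq_zero_iff_mem.1 hb
      simpa using this
    exact (LinearEquiv.finrank_eq (Submodule.equivMapOfInjective _ hinj _)).symm
  | succ k ih =>
    obtain ⟨h1, h2⟩ := ih (by omega)
    have hk' : k < L.length := by omega
    have hx := hL _ (List.getElem_mem hk')
    have hr := hreg.regular_mod_prev k hk'
    have e : Ideal.ofList (L.take (k + 1)) = Ideal.ofList (L.take k) ⊔ Ideal.span {L[k]} := by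
      rw [List.take_add_one, Ideal.ofList_append]
      simp [hk']
    rw [isSMulRegular_quotient_iff_mem_of_smul_mem] at hr
    rw [e]
    set I := Ideal.ofList (L.take k)
    have hr' : ∀ a, L[k] * a ∈ I → a ∈ I := by
      intro a ha
      have := hr a
      simp only [smul_eq_mul, Ideal.mul_top] at this
      exact this ha
    refine ⟨h1.sup (Ideal.homogeneous_span 𝒜 _ ?_), ?_⟩
    · rintro y rfl
      exact ⟨1, hx⟩
    · rw [pow_succ, ← mul_assoc, ← h2, mul_sub, mul_one]
      ext n
      cases n with
      | zero => simp [hilb_zero 𝒜 hfin I h1 _ hx]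
      | succ n =>
        rw [map_sub, coeff_succ_mul_X, coeff_mk, coeff_mk, coeff_mk,
          ← hilb_succ 𝒜 hfin I h1 _ hx hr' n]
        push_cast; ring

end VerH
/-- **Theorem 1.3(iii), Kubitzke–Murai.**
Let `K` be a field of characteristic `0` and `A` a Cohen-Macaulay standard graded `K`-algebra
of Krull dimension `d`, let `r ≥ 1`, set `s = ⌊(r-1)d/r⌋`, and let
`h_{A^⟨r⟩}(t) = ∑_i h_i^⟨r⟩ tⁱ` be the `h`-polynomial of the `r`-th Veronese subalgebra
`A^⟨r⟩ = ⊕_i A_{ir}` (whose Hilbert series is `∑_i dim_K A_{ir} tⁱ = h_{A^⟨r⟩}(t)/(1-t)^d`).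
Then `h_i^⟨r⟩ ≤ h_{s-i}^⟨r⟩` for all `i ≤ s/2`. -/
theorem veronese_h_polynomial_coeff_le
    (K : Type*) [Field K] [CharZero K]
    (A : Type*) [CommRing A] [Algebra K A]
    (𝒜 : ℕ → Submodule K A) [GradedAlgebra 𝒜]
    (hstd : ∀ i, 𝒜 i = 𝒜 1 ^ i)
    (hfin : ∀ i, Module.Finite K (𝒜 i))
    (d : ℕ) (hdim : ringKrullDim A = d)
    (hCM : ∀ θ' : Fin d → A, (∀ j, θ' j ∈ 𝒜 1) →
      Module.Finite K (A ⧸ Ideal.span (Set.range θ')) →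
      RingTheory.Sequence.IsRegular A (List.ofFn θ'))
    (r : ℕ) (hr : 1 ≤ r)
    (hrpoly : Polynomial ℤ)
    (hhr : (hrpoly : PowerSeries ℤ) =
      (PowerSeries.mk fun i => (Module.finrank K (𝒜 (i * r)) : ℤ)) * (1 - PowerSeries.X) ^ d) :
    ∀ i : ℕ, 2 * i ≤ (r - 1) * d / r →
      hrpoly.coeff i ≤ hrpoly.coeff ((r - 1) * d / r - i) := by
  classical
  have hadj : Algebra.adjoin K (𝒜 1 : Set A) = ⊤ := by
    rw [eq_top_iff]
    intro a _
    rw [← DirectSum.sum_support_decompose 𝒜 a]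
    refine Subalgebra.sum_mem _ fun i _ => ?_
    have h1 : (DirectSum.decompose 𝒜 a i : A) ∈ 𝒜 1 ^ i := by
      rw [← hstd]; exact SetLike.coe_mem _
    have h2 : ∀ i : ℕ, 𝒜 1 ^ i ≤ Subalgebra.toSubmodule (Algebra.adjoin K (𝒜 1 : Set A)) := by
      intro i
      induction i with
      | zero =>
        rw [pow_zero, Submodule.one_le]
        exact Subalgebra.one_mem _
      | succ i ih =>
        rw [pow_succ, Submodule.mul_le]
        intro m hm n hn
        exact Subalgebra.mul_mem _ (ih hm) (Algebra.subset_adjoin hn)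
    exact h2 i h1
  have hft : Algebra.FiniteType K A := by
    obtain ⟨S, hS⟩ := (Module.Finite.iff_fg.1 (hfin 1))
    refine ⟨S, ?_⟩
    rw [← Algebra.adjoin_span, hS, hadj]
  have hinf : Infinite K := inferInstance
  obtain ⟨θ, hθ, hθfin⟩ := VerH.exists_lsop (𝒜 1) hadj d ⊥ (by
    intro s _
    have := Order.LTSeries.length_le_krullDim s
    rw [← ringKrullDim, hdim] at this
    exact_mod_cast this)
  rw [bot_sup_eq] at hθfin
  have hreg := hCM θ hθ hθfin
  have hq := (VerH.hilb_seq 𝒜 hfin (List.ofFn θ) (by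
    intro x hx
    obtain ⟨j, rfl⟩ := (List.mem_ofFn' θ x).1 hx
    exact hθ j) hreg.toIsWeaklyRegular d (by simp)).2
  intro i hi
  have key := VerH.main_comb r d hr (PowerSeries.mk fun n => (Module.finrank K (𝒜 n) : ℤ))
    (by intro n; rw [← hq, PowerSeries.coeff_mk]; positivity) i hi
  simp only [PowerSeries.coeff_mk] at key
  rw [← hhr, Polynomial.coeff_coe, Polynomial.coeff_coe] at key
  exact key
end

section
/- Let K be a field of characteristic 0 and let r ≥ 1 be an integer. For integers 0 ≤ i < j, the multiplication map ×(x_1 + ⋯ + x_d)^{j−i} : (K[x_1,…,x_d]/(x_1^r,…,x_d^r))_i → (K[x_1,…,x_d]/(x_1^r,…,x_d^r))_j, p ↦ (x_1 + ⋯ + x_d)^{j−i}·p, is injective if i + j ≤ (r−1)d and surjective if i + j ≥ (r−1)d. -/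
open MvPolynomial

namespace LefAux

section abs
variable {K : Type*} [Field K] [CharZero K] {P : Type*} [CommRing P] [Algebra K P]

theorem comm_pow (G : ℕ → Submodule K P) (ℓ : P) (F : P →ₗ[K] P) (N : ℕ)
    (hL : ∀ m, ∀ v ∈ G m, ℓ * v ∈ G (m + 1))
    (hc : ∀ m, ∀ v ∈ G m, F (ℓ * v) = ℓ * F v + ((N : K) - 2 * m) • v)
    (k m : ℕ) (v : P) (hv : v ∈ G m) :
    ℓ ^ k * v ∈ G (m + k) ∧
    F (ℓ ^ (k + 1) * v) = ℓ ^ (k + 1) * F v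
      + (((k : K) + 1) * ((N : K) - 2 * m - k)) • (ℓ ^ k * v) := by
  induction k with
  | zero => simpa using ⟨hv, hc m v hv⟩
  | succ k ih =>
    obtain ⟨h1, h2⟩ := ih
    have h3 : ℓ ^ (k + 1) * v ∈ G (m + (k + 1)) := by
      have := hL _ _ h1
      rwa [← mul_assoc, ← pow_succ'] at this
    refine ⟨h3, ?_⟩
    have h4 := hc _ _ h3
    rw [h2] at h4
    rw [pow_succ' ℓ (k + 1), mul_assoc, h4]
    simp only [Algebra.smul_def, map_mul, map_add, map_sub, Nat.cast_add, Nat.cast_one, map_one,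
      map_natCast, map_ofNat]
    ring

theorem inj (G : ℕ → Submodule K P) (J : Ideal P) (ℓ : P) (F : P →ₗ[K] P) (N : ℕ)
    (hL : ∀ m, ∀ v ∈ G m, ℓ * v ∈ G (m + 1))
    (hF0 : ∀ v ∈ G 0, F v = 0)
    (hF : ∀ m, ∀ v ∈ G (m + 1), F v ∈ G m)
    (hc : ∀ m, ∀ v ∈ G m, F (ℓ * v) = ℓ * F v + ((N : K) - 2 * m) • v)
    (hFJ : ∀ v ∈ J, F v ∈ J) (m : ℕ) :
    ∀ n, n + 2 * m ≤ N → ∀ v ∈ G m, ℓ ^ n * v ∈ J → v ∈ J := by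
  induction m with
  | zero =>
    intro n
    induction n with
    | zero => intro _ v _ h; simpa using h
    | succ n ih =>
      intro hn v hv h
      refine ih (by omega) v hv ?_
      have h1 := (comm_pow G ℓ F N hL hc n 0 v hv).2
      have h2 := hFJ _ h
      rw [h1, hF0 v hv, mul_zero, zero_add] at h2
      have hne : (((n : K) + 1) * ((N : K) - 2 * (0 : ℕ) - n)) ≠ 0 := by
        obtain ⟨t, rfl⟩ := Nat.exists_eq_add_of_le hn
        have e : (((n : K) + 1) * (((n + 1 + 2 * 0 + t : ℕ) : K) - 2 * (0 : ℕ) - n))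
          = (((n + 1) * (t + 1) : ℕ) : K) := by push_cast; ring
        rw [e]; exact Nat.cast_ne_zero.mpr (by positivity)
      have := Submodule.smul_of_tower_mem J (((n : K) + 1) * ((N : K) - 2 * (0 : ℕ) - n))⁻¹ h2
      rwa [smul_smul, inv_mul_cancel₀ hne, one_smul] at this
  | succ m ihm =>
    intro n
    induction n with
    | zero => intro _ v _ h; simpa using h
    | succ n ih =>
      intro hn v hv h
      refine ih (by omega) v hv ?_
      have h1 := (comm_pow G ℓ F N hL hc n (m + 1) v hv).2
      have h2 := hFJ _ h
      have hFv : F v ∈ J := by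
        refine ihm (n + 2) (by omega) _ (hF _ _ hv) ?_
        have e : ℓ ^ (n + 2) * F v = ℓ * F (ℓ ^ (n + 1) * v)
            - (((n : K) + 1) * ((N : K) - 2 * (m + 1 : ℕ) - n)) • (ℓ ^ (n + 1) * v) := by
          rw [h1, mul_add, mul_smul_comm]
          rw [pow_succ' ℓ n, pow_succ' ℓ (n + 1), pow_succ' ℓ n]
          simp only [mul_assoc]
          abel
        rw [e]
        exact J.sub_mem (J.mul_mem_left _ h2) (Submodule.smul_of_tower_mem J _ h)
      rw [h1] at h2
      replace h2 := (Submodule.add_mem_iff_right J (J.mul_mem_left _ hFv)).1 h2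
      have hne : (((n : K) + 1) * ((N : K) - 2 * (m + 1 : ℕ) - n)) ≠ 0 := by
        obtain ⟨t, rfl⟩ := Nat.exists_eq_add_of_le hn
        have e : (((n : K) + 1) * (((n + 1 + 2 * (m + 1) + t : ℕ) : K) - 2 * (m + 1 : ℕ) - n))
          = (((n + 1) * (t + 1) : ℕ) : K) := by push_cast; ring
        rw [e]; exact Nat.cast_ne_zero.mpr (by positivity)
      have := Submodule.smul_of_tower_mem J (((n : K) + 1) * ((N : K) - 2 * (m + 1 : ℕ) - n))⁻¹ h2
      rwa [smul_smul, inv_mul_cancel₀ hne, one_smul] at this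

theorem surj (G : ℕ → Submodule K P) (J : Ideal P) (ℓ : P) (F : P →ₗ[K] P) (N : ℕ)
    (hL : ∀ m, ∀ v ∈ G m, ℓ * v ∈ G (m + 1))
    (hF0 : ∀ v ∈ G 0, F v = 0)
    (hF : ∀ m, ∀ v ∈ G (m + 1), F v ∈ G m)
    (hc : ∀ m, ∀ v ∈ G m, F (ℓ * v) = ℓ * F v + ((N : K) - 2 * m) • v)
    (hFJ : ∀ v ∈ J, F v ∈ J) (hN : ∀ m, N < m → ∀ v ∈ G m, v ∈ J) (t : ℕ) :
    ∀ n i, N < i + n + t → N ≤ 2 * i + n → ∀ z ∈ G (i + n), ∃ w ∈ G i, z - ℓ ^ n * w ∈ J := by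
  induction t with
  | zero =>
    intro n i h _ z hz
    exact ⟨0, zero_mem _, by simpa using hN _ h z hz⟩
  | succ t iht =>
    intro n
    induction n with
    | zero => intro i _ _ z hz; exact ⟨z, hz, by simp⟩
    | succ n ih =>
      intro i h1 h2 z hz
      obtain ⟨w, hw, hzw⟩ := ih (i + 1) (by omega) (by omega) z
        (by rwa [show i + 1 + n = i + (n + 1) by omega])
      obtain ⟨hw1, hw2⟩ := comm_pow G ℓ F N hL hc (n + 1) (i + 1) w hw
      have hw3 := (comm_pow G ℓ F N hL hc n (i + 1) w hw).2
      obtain ⟨u, hu, hwu⟩ := iht (n + 2) i (by omega) (by omega) (ℓ ^ (n + 1) * w)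
        (by rwa [show i + (n + 2) = i + 1 + (n + 1) by omega])
      have hu2 := (comm_pow G ℓ F N hL hc (n + 1) i u hu).2
      have h3 := hFJ _ hwu
      rw [map_sub, hu2, hw3] at h3
      have hLF : ℓ * F u ∈ G i := by
        rcases i with _ | i
        · rw [hF0 u hu, mul_zero]; exact zero_mem _
        · exact hL _ _ (hF _ _ hu)
      set a : K := (((n : K) + 1) * ((N : K) - 2 * (i + 1 : ℕ) - n)) with ha
      set b : K := ((((n + 1 : ℕ) : K) + 1) * ((N : K) - 2 * (i : ℕ) - (n + 1 : ℕ))) with hb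
      have hne : a ≠ 0 := by
        obtain ⟨s, hs⟩ := Nat.exists_eq_add_of_le h2
        have hs' : (2 * i + (n + 1) : K) = N + s := by exact_mod_cast hs
        have e : a = -(((n + 1) * (s + 1) : ℕ) : K) := by
          rw [ha]; push_cast; linear_combination (-(n : K) - 1) * hs'
        rw [e]; exact neg_ne_zero.mpr (Nat.cast_ne_zero.mpr (by positivity))
      refine ⟨a⁻¹ • (ℓ * F u + b • u - F w), ?_, ?_⟩
      · exact Submodule.smul_mem _ _ (sub_mem (add_mem hLF (Submodule.smul_mem _ _ hu)) (hF _ _ hw))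
      · have h4 := J.add_mem hzw (Submodule.smul_of_tower_mem J a⁻¹ h3)
        convert h4 using 1
        have e : ℓ ^ n * w = a⁻¹ • (a • (ℓ ^ n * w)) := by
          rw [smul_smul, inv_mul_cancel₀ hne, one_smul]
        nth_rewrite 1 [e]
        simp only [Algebra.smul_def]
        ring

end abs

section poly
variable {K : Type*} [Field K] {d : ℕ}

/-- the lowering operator for one variable -/
noncomputable def Fk (K : Type*) [Field K] (d s : ℕ) (k : Fin d) :
    MvPolynomial (Fin d) K →ₗ[K] MvPolynomial (Fin d) K :=
  (s : K) • (pderiv k).toLinearMap -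
    (LinearMap.mulLeft K (X k)) ∘ₗ (pderiv k).toLinearMap ∘ₗ (pderiv k).toLinearMap

theorem Fk_apply (s : ℕ) (k : Fin d) (p : MvPolynomial (Fin d) K) :
    Fk K d s k p = (s : MvPolynomial (Fin d) K) * pderiv k p - X k * pderiv k (pderiv k p) := by
  simp [Fk, Algebra.smul_def]

/-- the lowering operator -/
noncomputable def FF (K : Type*) [Field K] (d s : ℕ) :
    MvPolynomial (Fin d) K →ₗ[K] MvPolynomial (Fin d) K := ∑ k, Fk K d s k

theorem FF_apply (s : ℕ) (p : MvPolynomial (Fin d) K) :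
    FF K d s p = ∑ k, Fk K d s k p := by
  simp [FF]

theorem pderiv_sum (k : Fin d) : pderiv k (∑ l, X l : MvPolynomial (Fin d) K) = 1 := by
  simp [map_sum, pderiv_X, Pi.single_apply]

theorem pderiv_deg0 (k : Fin d) (p : MvPolynomial (Fin d) K) (hp : p.IsHomogeneous 0) :
    pderiv k p = 0 := by
  rw [(totalDegree_eq_zero_iff_eq_C).1 (hp.totalDegree_le.antisymm (Nat.zero_le _))]
  simp

theorem hF0 (s : ℕ) (p : MvPolynomial (Fin d) K) (hp : p.IsHomogeneous 0) : FF K d s p = 0 := by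
  simp [FF_apply, Fk_apply, pderiv_deg0 _ p hp]

theorem hF (s m : ℕ) (p : MvPolynomial (Fin d) K) (hp : p.IsHomogeneous (m + 1)) :
    (FF K d s p).IsHomogeneous m := by
  rw [FF_apply]
  refine IsHomogeneous.sum _ _ _ fun k _ => ?_
  rw [Fk_apply]
  have h1 : (pderiv k p).IsHomogeneous m := by simpa using hp.pderiv (i := k)
  refine IsHomogeneous.sub ?_ ?_
  · rw [← map_natCast C]; exact h1.C_mul _
  · rcases m with _ | m
    · rw [pderiv_deg0 k _ h1, mul_zero]; exact isHomogeneous_zero _ _ _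
    · have h2 : (pderiv k (pderiv k p)).IsHomogeneous m := by simpa using h1.pderiv (i := k)
      rw [add_comm m 1]
      exact (isHomogeneous_X K k).mul h2

theorem hcomm (s m : ℕ) (p : MvPolynomial (Fin d) K) (hp : p.IsHomogeneous m) :
    FF K d s ((∑ l, X l) * p) = (∑ l, X l) * FF K d s p + (((s * d : ℕ) : K) - 2 * m) • p := by
  have hE : ∑ k, X k * pderiv k p = m • p := hp.sum_X_mul_pderiv
  have h : ∀ k, Fk K d s k ((∑ l, X l) * p) =
      (∑ l, X l) * Fk K d s k p + ((s : MvPolynomial (Fin d) K) * p - 2 * (X k * pderiv k p)) := by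
    intro k
    simp only [Fk_apply, Derivation.leibniz, pderiv_sum, smul_eq_mul, map_add, mul_one]
    ring
  rw [FF_apply, FF_apply, Finset.sum_congr rfl fun k _ => h k, Finset.sum_add_distrib,
    ← Finset.mul_sum, Finset.sum_sub_distrib, ← Finset.mul_sum, ← Finset.mul_sum, hE]
  have h2 : (C 2 : MvPolynomial (Fin d) K) = 2 := map_ofNat C 2
  simp [Algebra.smul_def, h2]
  ring

theorem hFJ (s : ℕ) (p : MvPolynomial (Fin d) K)
    (hp : p ∈ Ideal.span (Set.range fun k => (X k : MvPolynomial (Fin d) K) ^ (s + 1))) :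
    FF K d s p ∈ Ideal.span (Set.range fun k => (X k : MvPolynomial (Fin d) K) ^ (s + 1)) := by
  have key : ∀ l (q : MvPolynomial (Fin d) K), FF K d s (q * X l ^ (s + 1)) ∈
      Ideal.span (Set.range fun k => (X k : MvPolynomial (Fin d) K) ^ (s + 1)) := by
    intro l q
    rw [FF_apply]
    refine Ideal.sum_mem _ fun k _ => ?_
    have hl : X l ^ (s + 1) ∈
      Ideal.span (Set.range fun k => (X k : MvPolynomial (Fin d) K) ^ (s + 1)) :=
      Ideal.subset_span ⟨l, rfl⟩
    suffices h : ∃ c, Fk K d s k (q * X l ^ (s + 1)) = c * X l ^ (s + 1) by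
      obtain ⟨c, hc⟩ := h
      rw [hc]; exact Ideal.mul_mem_left _ _ hl
    by_cases hk : k = l
    · subst hk
      have hx : X k * pderiv k (X k ^ s : MvPolynomial (Fin d) K) = (s : MvPolynomial (Fin d) K) * X k ^ s := by
        rcases s with _ | s
        · simp
        · simp [Derivation.leibniz_pow, pderiv_X_self]; ring
      have h1 : pderiv k (X k ^ (s + 1) : MvPolynomial (Fin d) K) =
          ((s + 1 : ℕ) : MvPolynomial (Fin d) K) * X k ^ s := by
        simp [Derivation.leibniz_pow, pderiv_X_self]
      have h2 : pderiv k (((s + 1 : ℕ) : MvPolynomial (Fin d) K)) = 0 := by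
        rw [← map_natCast C]; simp
      refine ⟨(s : MvPolynomial (Fin d) K) * pderiv k q - X k * pderiv k (pderiv k q)
        - 2 * ((s + 1 : ℕ) : MvPolynomial (Fin d) K) * pderiv k q, ?_⟩
      simp only [Fk_apply, Derivation.leibniz, smul_eq_mul, map_add, h1, h2]
      push_cast
      linear_combination (-q * (s + 1)) * hx
    · have h1 : pderiv k (X l ^ (s + 1) : MvPolynomial (Fin d) K) = 0 := by
        simp [Derivation.leibniz_pow, pderiv_X_of_ne (Ne.symm hk)]
      refine ⟨Fk K d s k q, ?_⟩
      simp only [Fk_apply, Derivation.leibniz, smul_eq_mul, map_add, h1, mul_zero, zero_add]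
      ring
  obtain ⟨c, rfl⟩ := (Ideal.mem_span_range_iff_exists_fun).1 hp
  rw [map_sum]
  exact Ideal.sum_mem _ fun k _ => key k _

theorem hN (s m : ℕ) (hm : s * d < m) (p : MvPolynomial (Fin d) K) (hp : p.IsHomogeneous m) :
    p ∈ Ideal.span (Set.range fun k => (X k : MvPolynomial (Fin d) K) ^ (s + 1)) := by
  rw [p.as_sum]
  refine Ideal.sum_mem _ fun e he => ?_
  have hdeg : ∑ k, e k = m := by
    have := hp (mem_support_iff.1 he)
    rw [Finsupp.weight_apply] at this
    simpa [Finsupp.sum_fintype] using this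
  obtain ⟨k, hk⟩ : ∃ k, s < e k := by
    by_contra! hcon
    have : ∑ k, e k ≤ ∑ _k : Fin d, s := Finset.sum_le_sum fun k _ => hcon k
    simp at this
    rw [mul_comm] at this
    omega
  have e1 : monomial e (coeff e p) =
      monomial (e - Finsupp.single k (s + 1)) (coeff e p) * X k ^ (s + 1) := by
    rw [X_pow_eq_monomial, monomial_mul, mul_one, tsub_add_cancel_of_le]
    rw [Finsupp.single_le_iff]; exact hk
  rw [e1]
  exact Ideal.mul_mem_left _ _ (Ideal.subset_span ⟨k, rfl⟩)

end poly
end LefAux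

/-- **Lemma 2.1 (Stanley, Watanabe).**
Let `K` be a field of characteristic `0`, `r ≥ 1`, and `0 ≤ i < j` integers.  In the
monomial complete intersection `Q = K[x₁,…,x_d]/(x₁^r,…,x_d^r)`, multiplication by
`(x₁ + ⋯ + x_d)^{j-i}` maps the degree-`i` component of `Q` to the degree-`j` component,
injectively if `i + j ≤ (r-1)d` and surjectively if `i + j ≥ (r-1)d`.
Here the degree-`k` component of `Q` is the image of the space of homogeneous polynomials of
degree `k` under the quotient map. -/
theorem monomial_complete_intersection_lefschetz
    (K : Type*) [Field K] [CharZero K]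
    (d r : ℕ) (hr : 1 ≤ r) (i j : ℕ) (hij : i < j) :
    letI I : Ideal (MvPolynomial (Fin d) K) := Ideal.span (Set.range fun k => (X k : MvPolynomial (Fin d) K) ^ r)
    letI Qcomp : ℕ → Submodule K (MvPolynomial (Fin d) K ⧸ I) := fun k =>
      Submodule.map (Ideal.Quotient.mkₐ K I).toLinearMap
        (homogeneousSubmodule (Fin d) K k)
    letI c : MvPolynomial (Fin d) K ⧸ I :=
      Ideal.Quotient.mk I ((∑ k, X k) ^ (j - i))
    (i + j ≤ (r - 1) * d →
      ∀ x ∈ Qcomp i, ∀ y ∈ Qcomp i, c * x = c * y → x = y) ∧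
    ((r - 1) * d ≤ i + j →
      ∀ z ∈ Qcomp j, ∃ x ∈ Qcomp i, c * x = z) := by
  obtain ⟨s, rfl⟩ : ∃ s, r = s + 1 := ⟨r - 1, by omega⟩
  set I : Ideal (MvPolynomial (Fin d) K) :=
    Ideal.span (Set.range fun k => (X k : MvPolynomial (Fin d) K) ^ (s + 1)) with hI
  have hL : ∀ m, ∀ v ∈ homogeneousSubmodule (Fin d) K m,
      (∑ l, X l) * v ∈ homogeneousSubmodule (Fin d) K (m + 1) := by
    intro m v hv
    rw [mem_homogeneousSubmodule] at *
    rw [add_comm]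
    exact (IsHomogeneous.sum _ _ _ fun k _ => isHomogeneous_X K k).mul hv
  rw [Nat.add_sub_cancel]
  constructor
  · rintro h x ⟨p, hp, rfl⟩ y ⟨q, hq, rfl⟩ hxy
    have h1 : (∑ k, X k) ^ (j - i) * (p - q) ∈ I := by
      rw [mul_sub]
      exact Ideal.Quotient.eq.1 (by simpa using hxy)
    exact Ideal.Quotient.eq.2 (LefAux.inj (homogeneousSubmodule (Fin d) K) I (∑ l, X l)
      (LefAux.FF K d s) (s * d) hL (LefAux.hF0 s) (LefAux.hF s) (LefAux.hcomm s) (LefAux.hFJ s)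
      i (j - i) (by omega) (p - q) (sub_mem hp hq) h1)
  · rintro h z ⟨p, hp, rfl⟩
    obtain ⟨w, hw, hpw⟩ := LefAux.surj (homogeneousSubmodule (Fin d) K) I (∑ l, X l)
      (LefAux.FF K d s) (s * d) hL (LefAux.hF0 s) (LefAux.hF s) (LefAux.hcomm s) (LefAux.hFJ s)
      (LefAux.hN s) (s * d + 1) (j - i) i (by omega) (by omega) p
      (by rwa [show i + (j - i) = j by omega])
    refine ⟨_, ⟨w, hw, rfl⟩, ?_⟩
    exact (Ideal.Quotient.eq.2 hpw).symm
end

section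
/- Let A be a standard graded K-algebra of Krull dimension d whose h-polynomial h_A(t) has nonnegative coefficients. Then for every integer r ≥ 1, the degree of the h-polynomial of the r-th Veronese subalgebra satisfies deg h_{A^⟨r⟩}(t) = ⌊(d(r−1) + deg h_A(t))/r⌋. -/
/-- The power series obtained by keeping every `r`-th coefficient. -/
noncomputable def verSec (r : ℕ) (f : PowerSeries ℤ) : PowerSeries ℤ :=
  PowerSeries.mk fun n => PowerSeries.coeff (n * r) f

lemma verSec_mul_one (r : ℕ) (hr : 1 ≤ r) (f : PowerSeries ℤ) :
    verSec r (f * (1 - PowerSeries.X ^ r)) = verSec r f * (1 - PowerSeries.X) := by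
  ext n
  cases n with
  | zero =>
    simp only [verSec, mul_sub, mul_one, map_sub, PowerSeries.coeff_mk, zero_mul,
      PowerSeries.coeff_mul_X_pow', PowerSeries.coeff_zero_mul_X]
    rw [if_neg (by omega)]
  | succ n =>
    simp only [verSec, mul_sub, mul_one, map_sub, PowerSeries.coeff_mk,
      PowerSeries.coeff_mul_X_pow', PowerSeries.coeff_succ_mul_X]
    have e : (n + 1) * r = n * r + r := by ring
    rw [if_pos (by rw [e]; omega), e, Nat.add_sub_cancel]

lemma verSec_mul_pow (r : ℕ) (hr : 1 ≤ r) (f : PowerSeries ℤ) (d : ℕ) :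
    verSec r (f * (1 - PowerSeries.X ^ r) ^ d) = verSec r f * (1 - PowerSeries.X) ^ d := by
  induction d with
  | zero => simp
  | succ d ih => rw [pow_succ, ← mul_assoc, verSec_mul_one r hr, ih, pow_succ, mul_assoc]

/-- The polynomial `1 + t + ⋯ + t^(r-1)`. -/
noncomputable def geomPoly (r : ℕ) : Polynomial ℤ := ∑ i ∈ Finset.range r, Polynomial.X ^ i

lemma geomPoly_coeff (r k : ℕ) : (geomPoly r).coeff k = if k < r then 1 else 0 := by
  simp [geomPoly, Polynomial.coeff_X_pow]

lemma coeff_mul_nonneg' (p q : Polynomial ℤ) (hp : ∀ i, 0 ≤ p.coeff i)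
    (hq : ∀ i, 0 ≤ q.coeff i) (i : ℕ) : 0 ≤ (p * q).coeff i := by
  rw [Polynomial.coeff_mul]
  exact Finset.sum_nonneg fun x _ => mul_nonneg (hp _) (hq _)

lemma coeff_mul_pos' (p q : Polynomial ℤ) (hp : ∀ i, 0 ≤ p.coeff i)
    (hq : ∀ i, 0 ≤ q.coeff i) (i j : ℕ) (hi : 0 < p.coeff i) (hj : 0 < q.coeff j) :
    0 < (p * q).coeff (i + j) := by
  rw [Polynomial.coeff_mul]
  exact Finset.sum_pos' (fun x _ => mul_nonneg (hp _) (hq _))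
    ⟨(i, j), by simp, mul_pos hi hj⟩

lemma geomPoly_pow_nonneg (r d k : ℕ) : 0 ≤ ((geomPoly r) ^ d).coeff k := by
  induction d generalizing k with
  | zero => rw [pow_zero, Polynomial.coeff_one]; split_ifs <;> simp
  | succ d ih =>
    rw [pow_succ]
    refine coeff_mul_nonneg' _ _ ih (fun i => ?_) k
    rw [geomPoly_coeff]; split_ifs <;> simp

lemma geomPoly_pow_pos (r : ℕ) (hr : 1 ≤ r) (d k : ℕ) (hk : k ≤ d * (r - 1)) :
    0 < ((geomPoly r) ^ d).coeff k := by
  induction d generalizing k with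
  | zero =>
    have : k = 0 := by omega
    subst this; simp
  | succ d ih =>
    have e : (d + 1) * (r - 1) = d * (r - 1) + (r - 1) := by ring
    obtain ⟨a, b, rfl, ha, hb⟩ : ∃ a b, k = a + b ∧ a ≤ d * (r - 1) ∧ b ≤ r - 1 := by
      rcases le_total k (d * (r - 1)) with h | h
      · exact ⟨k, 0, by omega, h, by omega⟩
      · exact ⟨d * (r - 1), k - d * (r - 1), by omega, le_rfl, by omega⟩
    rw [pow_succ]
    refine coeff_mul_pos' _ _ (geomPoly_pow_nonneg r d) (fun i => ?_) a b (ih a ha) ?_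
    · rw [geomPoly_coeff]; split_ifs <;> simp
    · rw [geomPoly_coeff, if_pos (by omega)]; simp

lemma geomPoly_pow_natDegree_le (r d : ℕ) : ((geomPoly r) ^ d).natDegree ≤ d * (r - 1) := by
  refine Polynomial.natDegree_pow_le_of_le d ?_
  rw [Polynomial.natDegree_le_iff_coeff_eq_zero]
  intro N hN
  rw [geomPoly_coeff, if_neg (by omega)]

lemma geomPoly_mul (r : ℕ) :
    (1 - PowerSeries.X) * ((geomPoly r : Polynomial ℤ) : PowerSeries ℤ)
      = 1 - PowerSeries.X ^ r := by
  have h : (1 - Polynomial.X) * geomPoly r = 1 - Polynomial.X ^ r := by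
    rw [geomPoly]; exact mul_neg_geom_sum _ _
  have h2 := congrArg (fun p : Polynomial ℤ => (p : PowerSeries ℤ)) h
  simpa using h2

/-- **Equation (2.3), Kubitzke–Murai.**
Let `A` be a standard graded `K`-algebra of Krull dimension `d` whose `h`-polynomial
`h = h_A(t)` (defined by `Hilb(A,t) = h/(1-t)^d`) has nonnegative coefficients, and let
`hr = h_{A^⟨r⟩}(t)` be the `h`-polynomial of the `r`-th Veronese subalgebra
`A^⟨r⟩ = ⊕_i A_{ir}` (whose Hilbert series is `∑_i dim_K A_{ir} tⁱ` and whose Krull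
dimension is again `d`).  Then for every `r ≥ 1`,
`deg h_{A^⟨r⟩}(t) = ⌊(d(r-1) + deg h_A(t))/r⌋`. -/
theorem veronese_h_polynomial_degree
    (K : Type*) [Field K]
    (A : Type*) [CommRing A] [Nontrivial A] [Algebra K A]
    (𝒜 : ℕ → Submodule K A) [GradedAlgebra 𝒜]
    (hstd : ∀ i, 𝒜 i = 𝒜 1 ^ i)
    (hfin : ∀ i, Module.Finite K (𝒜 i))
    (d : ℕ) (hdim : ringKrullDim A = d)
    (h : Polynomial ℤ)
    (hh : (h : PowerSeries ℤ) =
      (PowerSeries.mk fun i => (Module.finrank K (𝒜 i) : ℤ)) * (1 - PowerSeries.X) ^ d)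
    (hpos : ∀ i, 0 ≤ h.coeff i)
    (r : ℕ) (hr : 1 ≤ r)
    (hrpoly : Polynomial ℤ)
    (hhr : (hrpoly : PowerSeries ℤ) =
      (PowerSeries.mk fun i => (Module.finrank K (𝒜 (i * r)) : ℤ)) * (1 - PowerSeries.X) ^ d) :
    hrpoly.natDegree = (d * (r - 1) + h.natDegree) / r := by
  classical
  -- coefficients of the Veronese polynomial
  have key : ∀ n, hrpoly.coeff n = (h * geomPoly r ^ d).coeff (n * r) := by
    intro n
    have h1 : (hrpoly : PowerSeries ℤ) =
        verSec r ((h * geomPoly r ^ d : Polynomial ℤ) : PowerSeries ℤ) := by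
      rw [hhr, Polynomial.coe_mul, Polynomial.coe_pow, hh, mul_assoc, ← mul_pow, geomPoly_mul,
        verSec_mul_pow r hr]
      congr 1
      ext i
      simp [verSec]
    have h2 := congrArg (PowerSeries.coeff n) h1
    rw [verSec, PowerSeries.coeff_mk, Polynomial.coeff_coe, Polynomial.coeff_coe] at h2
    exact h2
  have hne : h ≠ 0 := by
    rintro rfl
    have h0 := congrArg (PowerSeries.coeff 0) hh
    have hz : Module.finrank K (𝒜 0) = 0 := by
      have h3 : (0 : ℤ) = (Module.finrank K (𝒜 0) : ℤ) := by
        simpa [PowerSeries.coeff_zero_eq_constantCoeff, -Submodule.finrank_eq_zero] using h0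
      exact_mod_cast h3.symm
    have := hfin 0
    have hsub : Subsingleton (𝒜 0) := Module.finrank_zero_iff.mp hz
    have h1 : (1 : A) ∈ 𝒜 0 := SetLike.GradedOne.one_mem
    have := congrArg Subtype.val (Subsingleton.elim (⟨1, h1⟩ : 𝒜 0) 0)
    exact one_ne_zero this
  have hlead : 0 < h.coeff h.natDegree :=
    lt_of_le_of_ne (hpos _) (Ne.symm (by
      rw [Polynomial.coeff_natDegree]; exact Polynomial.leadingCoeff_ne_zero.mpr hne))
  set s := h.natDegree with hs
  set j := (d * (r - 1) + s) / r with hj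
  have hj1 : j * r ≤ d * (r - 1) + s := Nat.div_mul_le_self _ _
  have hj2 : d * (r - 1) + s < (j + 1) * r := by
    have := Nat.lt_mul_div_succ (d * (r - 1) + s) (show 0 < r by omega)
    rw [mul_comm (j + 1) r]; exact this
  apply le_antisymm
  · rw [Polynomial.natDegree_le_iff_coeff_eq_zero]
    intro N hN
    rw [key]
    apply Polynomial.coeff_eq_zero_of_natDegree_lt
    refine lt_of_le_of_lt Polynomial.natDegree_mul_le ?_
    have h1 := geomPoly_pow_natDegree_le r d
    have h2 : (j + 1) * r ≤ N * r := Nat.mul_le_mul_right r hN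
    omega
  · apply Polynomial.le_natDegree_of_ne_zero
    rcases Nat.eq_zero_or_pos d with hd | hd
    · have hc : ∀ i, h.coeff i = (Module.finrank K (𝒜 i) : ℤ) := by
        intro i
        have h0 := congrArg (PowerSeries.coeff i) hh
        simpa [hd] using h0
      rw [key, hd, pow_zero, mul_one, hc]
      intro hzero
      have hz : Module.finrank K (𝒜 (j * r)) = 0 := by exact_mod_cast hzero
      have := hfin (j * r)
      have hbot : 𝒜 (j * r) = ⊥ := Submodule.finrank_eq_zero.mp hz
      have hle : j * r ≤ s := by simpa [hd] using hj1
      have hs0 : 𝒜 s = ⊥ := by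
        rw [hstd s, ← Nat.add_sub_cancel' hle, pow_add, ← hstd (j * r), hbot,
          Submodule.bot_mul]
      rw [hc, hs0] at hlead
      simp at hlead
    · rw [key]
      have hge : r - 1 ≤ d * (r - 1) := Nat.le_mul_of_pos_left _ hd
      have e : (j + 1) * r = j * r + r := by ring
      have hsj : s ≤ j * r := by omega
      rw [← Nat.add_sub_cancel' hsj]
      exact (coeff_mul_pos' _ _ hpos (geomPoly_pow_nonneg r d) _ _ hlead
        (geomPoly_pow_pos r hr d _ (by omega))).ne'
end
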